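/- (Interior Carleman estimate for the Schrödinger operator; Lemma 2 of the paper for compactly supported functions.) Let the coefficients satisfy a_{ℓj} = a_{jℓ} ∈ C¹(Q̄) real with uniform ellipticity, b_ℓ ∈ L^∞(Q) and c ∈ L^∞(Q) complex-valued, and let P(t,x,D)z = i∂_t z − Σ_{ℓ,j=1}^n ∂_{x_ℓ}(a_{ℓj}(t,x)∂_{x_j} z) + Σ_{ℓ=1}^n b_ℓ(t,x)∂_{x_ℓ} z + c(t,x) z. Let ψ ∈ C²(Q̄) be real-valued with ∇_xψ ≠ 0 on Q̄, satisfying: 4 Σ_{m,m̃,k,ℓ} a_{mk}a_{m̃ℓ} ξ_m ξ_{m̃} ∂²_{x_kx_ℓ}ψ − 2 Σ_{m,k} a_{mk} ∂_{x_m}ψ a_{(k)}(t,x,ξ',ξ') + 4 Σ_{m,k} a_{mk} ξ_m a_{(k)}(t,x,ξ',∇ψ) > 0 for all (t,x) ∈ Q̄ and ξ' ∈ ℝⁿ∖{0} with a(t,x,∇ψ,ξ') = 0. Then there exists λ̂ > 0 such that for every λ ≥ λ̂ there exist τ₀ > 0 and C > 0 such that for every τ ≥ τ₀ and every z ∈ C_c^∞((0,T)×Ω;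 ℂ): ∫_Q (τφ|∇_x z|² + τ³φ³|z|²) e^{2τα} dx dt ≤ C ∫_Q |P(t,x,D)z|² e^{2τα} dx dt. -/

import Mathlib

open Real

/-- Partial derivative along the `k`-th coordinate of a function on `ℝⁿ`. -/
noncomputable def pd {n : ℕ} {E : Type*} [NormedAddCommGroup E] [NormedSpace ℝ E]
    (k : Fin n) (F : (Fin n → ℝ) → E) (x : Fin n → ℝ) : E :=
  fderiv ℝ F x (Pi.single k 1)

/-- The quadratic form `a(t,x,u,v) = Σ_{k,j} a_{kj}(t,x) u_k v_j`. -/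
noncomputable def aF {n : ℕ} (a : Fin n → Fin n → ℝ → (Fin n → ℝ) → ℝ)
    (t : ℝ) (x u v : Fin n → ℝ) : ℝ :=
  ∑ k, ∑ j, a k j t x * u k * v j

/-- The derived quadratic form `a_{(p)}(t,x,u,v) = Σ_{k,j} ∂_{x_p} a_{kj}(t,x) u_k v_j`. -/
noncomputable def aD {n : ℕ} (a : Fin n → Fin n → ℝ → (Fin n → ℝ) → ℝ)
    (p : Fin n) (t : ℝ) (x u v : Fin n → ℝ) : ℝ :=
  ∑ k, ∑ j, pd p (fun y => a k j t y) x * u k * v j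

/-- Spatial gradient. -/
noncomputable def gradx {n : ℕ} (ψ : ℝ → (Fin n → ℝ) → ℝ) (t : ℝ) (x : Fin n → ℝ) :
    Fin n → ℝ :=
  fun k => pd k (ψ t) x

/-- Spatial Hessian entry `∂²_{x_k x_ℓ} ψ`. -/
noncomputable def hessx {n : ℕ} (ψ : ℝ → (Fin n → ℝ) → ℝ) (t : ℝ) (x : Fin n → ℝ)
    (k l : Fin n) : ℝ :=
  pd l (fun y => pd k (ψ t) y) x

/-- The symbol `q_Ψ(t,x,ξ',τ)`. -/
noncomputable def qSym {n : ℕ} (a : Fin n → Fin n → ℝ → (Fin n → ℝ) → ℝ)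
    (Ψ : ℝ → (Fin n → ℝ) → ℝ) (t : ℝ) (x ξ : Fin n → ℝ) (τ : ℝ) : ℝ :=
  4 * ∑ m, ∑ m', ∑ k, ∑ l, a m k t x * a m' l t x
      * (ξ m * ξ m' + τ ^ 2 * gradx Ψ t x m * gradx Ψ t x m') * hessx Ψ t x k l
  - 2 * ∑ m, ∑ k, a m k t x * gradx Ψ t x m
      * (aD a k t x ξ ξ - τ ^ 2 * aD a k t x (gradx Ψ t x) (gradx Ψ t x))
  + 4 * ∑ m, ∑ k, a m k t x * ξ m * aD a k t x ξ (gradx Ψ t x)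

open MeasureTheory

/-- The Schrödinger operator
`P z = i∂_t z − Σ_{ℓ,j} ∂_{x_ℓ}(a_{ℓj}∂_{x_j} z) + Σ_ℓ b_ℓ ∂_{x_ℓ} z + c z`. -/
noncomputable def SchOp {n : ℕ} (a : Fin n → Fin n → ℝ → (Fin n → ℝ) → ℝ)
    (b : Fin n → ℝ → (Fin n → ℝ) → ℂ) (c : ℝ → (Fin n → ℝ) → ℂ)
    (z : ℝ × (Fin n → ℝ) → ℂ) (p : ℝ × (Fin n → ℝ)) : ℂ :=
  Complex.I * deriv (fun s => z (s, p.2)) p.1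
  - ∑ l, ∑ j, pd l (fun y => ((a l j p.1 y : ℝ) : ℂ) * pd j (fun y' => z (p.1, y')) y) p.2
  + ∑ l, b l p.1 p.2 * pd l (fun y => z (p.1, y)) p.2
  + c p.1 p.2 * z p

open Real MeasureTheory

/-- directional derivative -/
noncomputable def dd {E : Type*} [NormedAddCommGroup E] [NormedSpace ℝ E]
    (v : E) (f : E → ℝ) (p : E) : ℝ := fderiv ℝ f p v

/-- time direction -/
def e0 (n : ℕ) : ℝ × (Fin n → ℝ) := (1, 0)

/-- space directions -/
def ex {n : ℕ} (k : Fin n) : ℝ × (Fin n → ℝ) := (0, Pi.single k 1)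

section basics
variable {E : Type*} [NormedAddCommGroup E] [NormedSpace ℝ E]

lemma dd_C1 {f : E → ℝ} (hf : ContDiff ℝ 2 f) (v : E) : ContDiff ℝ 1 (dd v f) := by
  have : ContDiff ℝ 1 (fderiv ℝ f) := hf.fderiv_right (m := 1) (by norm_num)
  exact this.clm_apply contDiff_const

lemma dd_C0 {f : E → ℝ} (hf : ContDiff ℝ 1 f) (v : E) : Continuous (dd v f) := by
  have : ContDiff ℝ 0 (fderiv ℝ f) := hf.fderiv_right (m := 0) (by norm_num)
  exact this.continuous.clm_apply continuous_const

lemma dd_add {f g : E → ℝ} (hf : Differentiable ℝ f) (hg : Differentiable ℝ g) (v p : E) :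
    dd v (fun q => f q + g q) p = dd v f p + dd v g p := by
  unfold dd
  rw [fderiv_fun_add (hf p) (hg p)]; rfl

lemma dd_sub {f g : E → ℝ} (hf : Differentiable ℝ f) (hg : Differentiable ℝ g) (v p : E) :
    dd v (fun q => f q - g q) p = dd v f p - dd v g p := by
  unfold dd
  rw [fderiv_fun_sub (hf p) (hg p)]; rfl

lemma dd_neg {f : E → ℝ} (v p : E) :
    dd v (fun q => - f q) p = - dd v f p := by
  unfold dd
  rw [fderiv_fun_neg]; rfl

lemma dd_mul {f g : E → ℝ} (hf : Differentiable ℝ f) (hg : Differentiable ℝ g) (v p : E) :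
    dd v (fun q => f q * g q) p = dd v f p * g p + f p * dd v g p := by
  unfold dd
  rw [fderiv_fun_mul (hf p) (hg p)]
  simp; ring

lemma dd_const (c : ℝ) (v p : E) : dd v (fun _ => c) p = 0 := by
  unfold dd; simp

lemma dd_cmul {f : E → ℝ} (hf : Differentiable ℝ f) (c : ℝ) (v p : E) :
    dd v (fun q => c * f q) p = c * dd v f p := by
  unfold dd
  rw [fderiv_const_mul (hf p)]
  simp

lemma dd_sum {ι : Type*} (s : Finset ι) {f : ι → E → ℝ} (hf : ∀ i, Differentiable ℝ (f i)) (v p : E) :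
    dd v (fun q => ∑ i ∈ s, f i q) p = ∑ i ∈ s, dd v (f i) p := by
  unfold dd
  rw [fderiv_fun_sum (fun i _ => hf i p)]
  simp

lemma dd_exp {f : E → ℝ} (hf : Differentiable ℝ f) (v p : E) :
    dd v (fun q => Real.exp (f q)) p = Real.exp (f p) * dd v f p := by
  unfold dd
  rw [fderiv_exp (hf p)]
  simp

lemma dd_comm {f : E → ℝ} (hf : ContDiff ℝ 2 f) (v w p : E) :
    dd v (dd w f) p = dd w (dd v f) p := by
  have h := (hf.contDiffAt (x := p)).isSymmSndFDerivAt (by simp)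
  have hd : DifferentiableAt ℝ (fderiv ℝ f) p :=
    ((hf.fderiv_right (m := 1) (by norm_num)).differentiable (by norm_num)) p
  have key : ∀ v w : E, dd v (dd w f) p = fderiv ℝ (fderiv ℝ f) p v w := by
    intro v w
    unfold dd
    rw [fderiv_clm_apply hd (differentiableAt_const w)]
    simp
  rw [key, key]
  exact h v w

lemma dd_zero_of_notMem {f : E → ℝ} {p : E} (hp : p ∉ tsupport f) (v : E) : dd v f p = 0 := by
  unfold dd
  rw [show fderiv ℝ f p = 0 from ?_]
  · rfl
  · by_contra h
    exact hp (support_fderiv_subset ℝ h)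

lemma dd_hcs {f : E → ℝ} (hf : HasCompactSupport f) (v : E) : HasCompactSupport (dd v f) :=
  hf.fderiv_apply ℝ v

lemma dd_congr_nhds {f g : E → ℝ} {p : E} (h : f =ᶠ[nhds p] g) (v : E) : dd v f p = dd v g p := by
  unfold dd
  rw [h.fderiv_eq]

lemma integral_dd_zero [MeasurableSpace E] [BorelSpace E] [FiniteDimensional ℝ E]
    (μ : Measure E) [μ.IsAddHaarMeasure]
    {f : E → ℝ} (hf : ContDiff ℝ 1 f) (hc : HasCompactSupport f) (v : E) :
    ∫ p, dd v f p ∂μ = 0 := by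
  have h := integral_mul_fderiv_eq_neg_fderiv_mul_of_integrable (μ := μ) (𝕜 := ℝ)
    (f := fun _ : E => (1:ℝ)) (g := f) (v := v) (by simp)
    (by have := (dd_C0 hf v).integrable_of_hasCompactSupport (μ := μ) (dd_hcs hc v); unfold dd at this; simpa using this)
    (by simpa using hf.continuous.integrable_of_hasCompactSupport hc)
    (fun x _ => differentiableAt_const _) (fun x _ => hf.differentiable (by norm_num) x)
  simpa [dd] using h

lemma integrable_dd [MeasurableSpace E] [BorelSpace E] 
    (μ : Measure E) [IsFiniteMeasureOnCompacts μ]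
    {f : E → ℝ} (hf : ContDiff ℝ 1 f) (hc : HasCompactSupport f) (v : E) :
    Integrable (dd v f) μ :=
  (dd_C0 hf v).integrable_of_hasCompactSupport (dd_hcs hc v)

end basics

lemma integral_add_zero' {α : Type*} [MeasurableSpace α] (μ : Measure α) (f g d : α → ℝ)
    (hd : Integrable d μ) (h0 : ∫ p, d p ∂μ = 0) (h : ∀ p, f p = g p + d p) :
    ∫ p, f p ∂μ = ∫ p, g p ∂μ := by
  have hf : f = fun p => g p + d p := funext h
  rw [hf]
  by_cases hg : Integrable g μ
  · rw [integral_add hg hd, h0, add_zero]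
  · rw [integral_undef hg, integral_undef]
    intro hh
    apply hg
    have := hh.sub hd
    refine this.congr (Filter.Eventually.of_forall fun p => ?_)
    simp

instance volHaar (n : ℕ) : (volume : Measure (ℝ × (Fin n → ℝ))).IsAddHaarMeasure :=
  Measure.prod.instIsAddHaarMeasure _ _

/-- equality up to a function with vanishing integral -/
def NullEq {α : Type*} [MeasureSpace α] (f g : α → ℝ) : Prop :=
  ∃ d : α → ℝ, Integrable d ∧ ∫ p, d p = 0 ∧ ∀ p, f p = g p + d p

lemma NullEq.integral_eq {α : Type*} [MeasureSpace α] {f g : α → ℝ} (h : NullEq f g) :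
    ∫ p, f p = ∫ p, g p := by
  obtain ⟨d, h1, h2, h3⟩ := h
  exact integral_add_zero' _ f g d h1 h2 h3

lemma NullEq.add {α : Type*} [MeasureSpace α] {f g f' g' : α → ℝ} (h : NullEq f g)
    (h' : NullEq f' g') : NullEq (fun p => f p + f' p) (fun p => g p + g' p) := by
  obtain ⟨d, h1, h2, h3⟩ := h
  obtain ⟨d', h1', h2', h3'⟩ := h'
  refine ⟨fun p => d p + d' p, h1.add h1', ?_, fun p => ?_⟩
  · rw [integral_add h1 h1', h2, h2', add_zero]
  · simp only [h3, h3']; ring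

/-- integration of a divergence -/
lemma integral_div {n : ℕ} (f g : ℝ × (Fin n → ℝ) → ℝ) (F0 : ℝ × (Fin n → ℝ) → ℝ)
    (F : Fin n → ℝ × (Fin n → ℝ) → ℝ)
    (h0 : ContDiff ℝ 1 F0) (h0c : HasCompactSupport F0)
    (hF : ∀ l, ContDiff ℝ 1 (F l)) (hFc : ∀ l, HasCompactSupport (F l))
    (h : ∀ p, f p = g p + (dd (e0 n) F0 p + ∑ l, dd (ex l) (F l) p)) :
    NullEq f g := by
  have i1 := integrable_dd volume h0 h0c (e0 n)
  have i2 := fun l => integrable_dd volume (hF l) (hFc l) (ex l)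
  have i3 : Integrable (fun p => ∑ l, dd (ex l) (F l) p) volume := integrable_finsetSum _ fun l _ => i2 l
  refine ⟨_, i1.add i3, ?_, h⟩
  simp only [Pi.add_apply]
  rw [integral_add i1 i3, integral_finsetSum _ fun l _ => i2 l]
  rw [integral_dd_zero volume h0 h0c]
  simp [integral_dd_zero volume (hF _) (hFc _)]

lemma NullEq.integrable {α : Type*} [MeasureSpace α] {f g : α → ℝ} (h : NullEq f g)
    (hf : Integrable f) : Integrable g := by
  obtain ⟨d, h1, h2, h3⟩ := h
  have : g = fun p => f p - d p := by funext p; rw [h3]; ring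
  rw [this]
  exact hf.sub h1

open Real MeasureTheory

lemma alg1 {n : ℕ} (a : Fin n → Fin n → ℝ) (ha : ∀ i j, a i j = a j i)
    (ak : Fin n → Fin n → Fin n → ℝ) (U X G : Fin n → ℝ) (UU XX : Fin n → Fin n → ℝ)
    (hUU : ∀ i j, UU i j = UU j i) (u g S : ℝ) (dl : Fin n → ℝ) (hg : g = ∑ k, XX k k)
    (hS : S = ∑ l, dl l) :
    -S * (2 * ∑ k, X k * U k + g * u)
     = ((∑ l, ∑ j, ∑ k, 2 * (a l j * U j * XX l k * U k)) - (∑ k, X k * ∑ l, ∑ j, ak k l j * U l * U j)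
        + u * ∑ l, ∑ j, a l j * U j * G l)
      + (0 + ∑ l, ((-dl l) * (2 * ∑ k, X k * U k + g * u)
          + (-∑ j, a l j * U j) * (2 * ∑ k, (XX l k * U k + X k * UU l k) + (G l * u + g * U l))
          + (XX l l * (∑ i, ∑ j, a i j * U i * U j)
            + X l * ∑ i, ∑ j, ((ak l i j * U i + a i j * UU l i) * U j + a i j * U i * UU l j)))) := by
  have h1 : ∑ l, (-dl l) * (2 * ∑ k, X k * U k + g * u) = -S * (2 * ∑ k, X k * U k + g * u) := by
    rw [← Finset.sum_mul, Finset.sum_neg_distrib, hS]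
  have h2 : ∑ l, XX l l * (∑ i, ∑ j, a i j * U i * U j) = g * (∑ i, ∑ j, a i j * U i * U j) := by
    rw [← Finset.sum_mul, hg]
  set T := ∑ k, ∑ l, ∑ j, X k * (a l j * U j * UU l k) with hT
  have h3 : ∑ l, X l * ∑ i, ∑ j, ((ak l i j * U i + a i j * UU l i) * U j + a i j * U i * UU l j)
      = (∑ k, X k * ∑ l, ∑ j, ak k l j * U l * U j) + 2 * T := by
    have e1 : ∀ l, ∑ i, ∑ j, ((ak l i j * U i + a i j * UU l i) * U j + a i j * U i * UU l j)
        = (∑ i, ∑ j, ak l i j * U i * U j) + 2 * ∑ i, ∑ j, a i j * U j * UU i l := by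
      intro l
      have : ∑ i, ∑ j, a i j * U i * UU l j = ∑ i, ∑ j, a i j * U j * UU i l := by
        rw [Finset.sum_comm]
        refine Finset.sum_congr rfl fun i _ => Finset.sum_congr rfl fun j _ => ?_
        rw [ha j i, hUU l i]
      rw [two_mul]
      nth_rw 1 [← this]
      simp only [← Finset.sum_add_distrib]
      refine Finset.sum_congr rfl fun i _ => Finset.sum_congr rfl fun j _ => ?_
      rw [hUU i l]; ring
    rw [Finset.sum_congr rfl (fun l _ => by rw [e1 l])]
    simp only [mul_add, Finset.sum_add_distrib]
    congr 1
    rw [hT, Finset.mul_sum]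
    refine Finset.sum_congr rfl fun l _ => ?_
    simp only [Finset.mul_sum]
    refine Finset.sum_congr rfl fun i _ => Finset.sum_congr rfl fun j _ => ?_
    ring
  have h4 : ∑ l, (-∑ j, a l j * U j) * (2 * ∑ k, (XX l k * U k + X k * UU l k) + (G l * u + g * U l))
      = -(∑ l, ∑ j, ∑ k, 2 * (a l j * U j * XX l k * U k)) - 2 * T - u * (∑ l, ∑ j, a l j * U j * G l)
        - g * (∑ i, ∑ j, a i j * U i * U j) := by
    have eT : T = ∑ l, ∑ j, ∑ k, X k * (a l j * U j * UU l k) := by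
      rw [hT, Finset.sum_comm]
      refine Finset.sum_congr rfl fun i _ => ?_
      rw [Finset.sum_comm]
    rw [eT]
    simp only [Finset.mul_sum, ← Finset.sum_neg_distrib, ← Finset.sum_sub_distrib]
    refine Finset.sum_congr rfl fun l _ => ?_
    rw [Finset.sum_mul]
    refine Finset.sum_congr rfl fun j _ => ?_
    simp only [Finset.sum_add_distrib, mul_add, ← Finset.mul_sum]
    have e5 : ∑ k, 2 * (a l j * U j * XX l k * U k) = 2 * (a l j * U j) * ∑ k, XX l k * U k := by
      rw [Finset.mul_sum]; refine Finset.sum_congr rfl fun k _ => ?_; ring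
    have e6 : ∑ k, X k * (a l j * U j * UU l k) = (a l j * U j) * ∑ k, X k * UU l k := by
      rw [Finset.mul_sum]; refine Finset.sum_congr rfl fun k _ => ?_; ring
    have e7 : ∑ k, a l j * U j * XX l k * U k = (a l j * U j) * ∑ k, XX l k * U k := by
      rw [Finset.mul_sum]; refine Finset.sum_congr rfl fun k _ => ?_; ring
    have e8 : ∑ x, (-(2 * (a l j * U j * XX l x * U x)) - 2 * (X x * (a l j * U j * UU l x)))
        = -(2 * ((a l j * U j) * ∑ k, XX l k * U k)) - 2 * ((a l j * U j) * ∑ k, X k * UU l k) := by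
      rw [Finset.sum_sub_distrib, Finset.sum_neg_distrib, ← Finset.mul_sum, ← Finset.mul_sum, e7, e6]
    rw [e8]
    ring
  rw [Finset.sum_add_distrib, Finset.sum_add_distrib, Finset.sum_add_distrib, h1, h2, h3, h4]
  ring

section ident
variable {n : ℕ} (a : Fin n → Fin n → ℝ × (Fin n → ℝ) → ℝ)

/-- `Σ ∂_l (a_{lj} ∂_j u)` -/
noncomputable def divA (u : ℝ × (Fin n → ℝ) → ℝ) (p : ℝ × (Fin n → ℝ)) : ℝ :=
  ∑ l, ∑ j, dd (ex l) (fun q => a l j q * dd (ex j) u q) p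

lemma hcs_of {E : Type*} [TopologicalSpace E] [R1Space E] {u F : E → ℝ} (hu : HasCompactSupport u)
    (h : ∀ p, p ∉ tsupport u → F p = 0) : HasCompactSupport F :=
  HasCompactSupport.intro hu.isCompact h

lemma rellich (ha : ∀ i j, a i j = a j i) (haC : ∀ i j, ContDiff ℝ 1 (a i j))
    (X : Fin n → ℝ × (Fin n → ℝ) → ℝ) (hX : ∀ k, ContDiff ℝ 1 (X k))
    (g : ℝ × (Fin n → ℝ) → ℝ) (hg : ContDiff ℝ 1 g) (hgX : ∀ p, g p = ∑ k, dd (ex k) (X k) p)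
    (u : ℝ × (Fin n → ℝ) → ℝ) (hu : ContDiff ℝ 2 u) (huc : HasCompactSupport u) :
    NullEq (fun p => -divA a u p * (2 * ∑ k, X k p * dd (ex k) u p + g p * u p))
     (fun p => ((∑ l, ∑ j, ∑ k, 2 * (a l j p * dd (ex j) u p * dd (ex l) (X k) p * dd (ex k) u p))
        - (∑ k, X k p * ∑ l, ∑ j, dd (ex k) (a l j) p * dd (ex l) u p * dd (ex j) u p)
        + u p * ∑ l, ∑ j, a l j p * dd (ex j) u p * dd (ex l) g p)) := by
  have hUC : ∀ j, ContDiff ℝ 1 (dd (ex j) u) := fun j => dd_C1 hu _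
  have hu1 : ContDiff ℝ 1 u := hu.of_le (by norm_num)
  have hud : Differentiable ℝ u := hu1.differentiable (by norm_num)
  have hgd : Differentiable ℝ g := hg.differentiable (by norm_num)
  obtain ⟨U, hU⟩ : ∃ U : Fin n → ℝ × (Fin n → ℝ) → ℝ, ∀ j, dd (ex j) u = U j := ⟨_, fun _ => rfl⟩
  have hUU : ∀ i j p, dd (ex i) (U j) p = dd (ex j) (U i) p := by
    intro i j p; rw [← hU, ← hU]; exact dd_comm hu _ _ _
  have hUd0 : ∀ j, ∀ p, p ∉ tsupport u → U j p = 0 := fun j p hp => by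
    rw [← hU]; exact dd_zero_of_notMem hp _
  simp only [divA, hU] at hUC ⊢
  have hUD : ∀ j, Differentiable ℝ (U j) := fun j => (hUC j).differentiable (by norm_num)
  have hXD : ∀ j, Differentiable ℝ (X j) := fun j => (hX j).differentiable (by norm_num)
  have haD : ∀ i j, Differentiable ℝ (a i j) := fun i j => (haC i j).differentiable (by norm_num)
  refine integral_div _ _ (fun _ => 0)
    (fun l p => (-∑ j, a l j p * U j p) * (2 * ∑ k, X k p * U k p + g p * u p)
      + X l p * ∑ i, ∑ j, a i j p * U i p * U j p) contDiff_const ?_ ?_ ?_ ?_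
  · exact hcs_of huc (fun _ _ => rfl)
  · intro l; fun_prop
  · intro l
    apply hcs_of huc
    intro p hp
    simp [hUd0 _ p hp]
  · intro p
    have := alg1 (fun i j => a i j p) (fun i j => by rw [ha]) (fun k i j => dd (ex k) (a i j) p)
      (fun j => U j p) (fun j => X j p) (fun j => dd (ex j) g p) (fun i j => dd (ex i) (U j) p)
      (fun i j => dd (ex i) (X j) p) (fun i j => hUU i j p) (u p) (g p) _
      (fun l => ∑ j, dd (ex l) (fun q => a l j q * U j q) p) (hgX p) rfl
    rw [this]
    congr 1
    congr 1
    · rw [dd_const]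
    · refine Finset.sum_congr rfl fun l _ => ?_
      rw [dd_add (by fun_prop) (by fun_prop), dd_mul (by fun_prop) (by fun_prop),
        dd_mul (hXD l) (by fun_prop), dd_add (by fun_prop) (by fun_prop), dd_cmul (by fun_prop),
        dd_neg, dd_sum _ (fun j => by fun_prop), dd_sum _ (fun j => by fun_prop), dd_sum _ (fun j => by fun_prop)]
      rw [dd_mul hgd hud, ← hU l]
      congr 1
      · congr 3
        refine congrArg _ (Finset.sum_congr rfl fun k _ => ?_)
        rw [dd_mul (hXD k) (hUD k)]
      · congr 2
        refine Finset.sum_congr rfl fun i _ => ?_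
        rw [dd_sum _ (fun j => by fun_prop)]
        refine Finset.sum_congr rfl fun j _ => ?_
        rw [dd_mul (by fun_prop) (hUD j), dd_mul (haD i j) (hUD i)]

lemma ident2 (A : ℝ × (Fin n → ℝ) → ℝ) (hA : ContDiff ℝ 1 A)
    (X : Fin n → ℝ × (Fin n → ℝ) → ℝ) (hX : ∀ k, ContDiff ℝ 1 (X k))
    (g : ℝ × (Fin n → ℝ) → ℝ) (hgX : ∀ p, g p = ∑ k, dd (ex k) (X k) p)
    (u : ℝ × (Fin n → ℝ) → ℝ) (hu : ContDiff ℝ 2 u) (huc : HasCompactSupport u) :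
    NullEq (fun p => -(A p * u p) * (2 * ∑ k, X k p * dd (ex k) u p + g p * u p))
     (fun p => (∑ k, X k p * dd (ex k) A p) * (u p * u p)) := by
  have hu1 : ContDiff ℝ 1 u := hu.of_le (by norm_num)
  have hud : Differentiable ℝ u := hu1.differentiable (by norm_num)
  have hAd : Differentiable ℝ A := hA.differentiable (by norm_num)
  have hXD : ∀ j, Differentiable ℝ (X j) := fun j => (hX j).differentiable (by norm_num)
  refine integral_div _ _ (fun _ => 0)
    (fun l p => (-(A p * (u p * u p))) * X l p) contDiff_const ?_ ?_ ?_ ?_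
  · exact hcs_of huc (fun _ _ => rfl)
  · intro l; fun_prop
  · intro l
    apply hcs_of huc
    intro p hp
    simp [image_eq_zero_of_notMem_tsupport hp]
  · intro p
    rw [dd_const, zero_add, Finset.mul_sum, hgX, Finset.sum_mul, Finset.sum_mul, ← Finset.sum_add_distrib,
      ← Finset.sum_add_distrib, Finset.mul_sum]
    refine Finset.sum_congr rfl fun l _ => ?_
    rw [dd_mul (by fun_prop) (hXD l), dd_neg, dd_mul hAd (by fun_prop), dd_mul hud hud]
    ring

lemma ident3 (X : Fin n → ℝ × (Fin n → ℝ) → ℝ) (hX : ∀ k, ContDiff ℝ 1 (X k))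
    (g : ℝ × (Fin n → ℝ) → ℝ) (hgX : ∀ p, g p = ∑ k, dd (ex k) (X k) p)
    (u v : ℝ × (Fin n → ℝ) → ℝ) (hu : ContDiff ℝ 2 u) (huc : HasCompactSupport u)
    (hv : ContDiff ℝ 2 v) :
    NullEq (fun p => -(dd (e0 n) v p) * (2 * ∑ k, X k p * dd (ex k) u p + g p * u p)
        + dd (e0 n) u p * (2 * ∑ k, X k p * dd (ex k) v p + g p * v p))
     (fun p => -∑ k, dd (e0 n) (X k) p * (u p * dd (ex k) v p - v p * dd (ex k) u p)) := by
  have hUC : ∀ j, ContDiff ℝ 1 (dd j u) := fun j => dd_C1 hu _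
  have hVC : ∀ j, ContDiff ℝ 1 (dd j v) := fun j => dd_C1 hv _
  have hu1 : ContDiff ℝ 1 u := hu.of_le (by norm_num)
  have hud : Differentiable ℝ u := hu1.differentiable (by norm_num)
  have hv1 : ContDiff ℝ 1 v := hv.of_le (by norm_num)
  have hvd : Differentiable ℝ v := hv1.differentiable (by norm_num)
  have hXD : ∀ j, Differentiable ℝ (X j) := fun j => (hX j).differentiable (by norm_num)
  have hUU : ∀ i p, dd (ex i) (dd (e0 n) u) p = dd (e0 n) (dd (ex i) u) p := fun i p => dd_comm hu _ _ _
  have hVV : ∀ i p, dd (ex i) (dd (e0 n) v) p = dd (e0 n) (dd (ex i) v) p := fun i p => dd_comm hv _ _ _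
  obtain ⟨U, hU⟩ : ∃ U : ℝ × (Fin n → ℝ) → ℝ × (Fin n → ℝ) → ℝ, ∀ j, dd j u = U j := ⟨_, fun _ => rfl⟩
  obtain ⟨V, hV⟩ : ∃ U : ℝ × (Fin n → ℝ) → ℝ × (Fin n → ℝ) → ℝ, ∀ j, dd j v = U j := ⟨_, fun _ => rfl⟩
  have hUd0 : ∀ j, ∀ p, p ∉ tsupport u → U j p = 0 := fun j p hp => by
    rw [← hU]; exact dd_zero_of_notMem hp _
  simp only [hU, hV] at hUC hVC hUU hVV ⊢
  have hUD : ∀ j, Differentiable ℝ (U j) := fun j => (hUC j).differentiable (by norm_num)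
  have hVD : ∀ j, Differentiable ℝ (V j) := fun j => (hVC j).differentiable (by norm_num)
  refine integral_div _ _ (fun p => ∑ k, X k p * (u p * V (ex k) p - v p * U (ex k) p))
    (fun l p => X l p * (U (e0 n) p * v p - V (e0 n) p * u p)) ?_ ?_ ?_ ?_ ?_
  · fun_prop
  · apply hcs_of huc
    intro p hp
    simp [hUd0 _ p hp, image_eq_zero_of_notMem_tsupport hp]
  · intro l; fun_prop
  · intro l
    apply hcs_of huc
    intro p hp
    simp [hUd0 _ p hp, image_eq_zero_of_notMem_tsupport hp]
  · intro p
    rw [dd_sum _ (fun j => by fun_prop), hgX, ← Finset.sum_add_distrib, ← Finset.sum_neg_distrib,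
      ← Finset.sum_add_distrib]
    simp only [Finset.mul_sum, Finset.sum_mul, ← Finset.sum_add_distrib]
    refine Finset.sum_congr rfl fun l _ => ?_
    rw [dd_mul (hXD l) (by fun_prop), dd_mul (hXD l) (by fun_prop), dd_sub (by fun_prop) (by fun_prop),
      dd_sub (by fun_prop) (by fun_prop), dd_mul hud (hVD _), dd_mul hvd (hUD _), dd_mul (hUD _) hvd, 
      dd_mul (hVD _) hud, hUU, hVV, hU, hV, hU, hV]
    ring

lemma ident4 (ha : ∀ i j, a i j = a j i) (haC : ∀ i j, ContDiff ℝ 1 (a i j))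
    (A : ℝ × (Fin n → ℝ) → ℝ) (h : ℝ × (Fin n → ℝ) → ℝ) (hh : ContDiff ℝ 1 h)
    (u v : ℝ × (Fin n → ℝ) → ℝ) (hu : ContDiff ℝ 2 u) (huc : HasCompactSupport u)
    (hv : ContDiff ℝ 2 v) (hvc : HasCompactSupport v) :
    NullEq (fun p => (-(dd (e0 n) v p) - divA a u p - A p * u p) * (h p * v p)
        + (dd (e0 n) u p - divA a v p - A p * v p) * (-(h p * u p)))
     (fun p => dd (e0 n) h p * ((u p * u p + v p * v p) / 2)
        - ∑ l, ∑ j, a l j p * dd (ex l) h p * (u p * dd (ex j) v p - v p * dd (ex j) u p)) := by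
  have hUC : ∀ j, ContDiff ℝ 1 (dd j u) := fun j => dd_C1 hu _
  have hVC : ∀ j, ContDiff ℝ 1 (dd j v) := fun j => dd_C1 hv _
  have hu1 : ContDiff ℝ 1 u := hu.of_le (by norm_num)
  have hud : Differentiable ℝ u := hu1.differentiable (by norm_num)
  have hv1 : ContDiff ℝ 1 v := hv.of_le (by norm_num)
  have hvd : Differentiable ℝ v := hv1.differentiable (by norm_num)
  have hhd : Differentiable ℝ h := hh.differentiable (by norm_num)
  have haD : ∀ i j, Differentiable ℝ (a i j) := fun i j => (haC i j).differentiable (by norm_num)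
  obtain ⟨U, hU⟩ : ∃ U : ℝ × (Fin n → ℝ) → ℝ × (Fin n → ℝ) → ℝ, ∀ j, dd j u = U j := ⟨_, fun _ => rfl⟩
  obtain ⟨V, hV⟩ : ∃ U : ℝ × (Fin n → ℝ) → ℝ × (Fin n → ℝ) → ℝ, ∀ j, dd j v = U j := ⟨_, fun _ => rfl⟩
  have hUd0 : ∀ j, ∀ p, p ∉ tsupport u → U j p = 0 := fun j p hp => by
    rw [← hU]; exact dd_zero_of_notMem hp _
  have hVd0 : ∀ j, ∀ p, p ∉ tsupport v → V j p = 0 := fun j p hp => by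
    rw [← hV]; exact dd_zero_of_notMem hp _
  simp only [divA, hU, hV] at hUC hVC ⊢
  have hUD : ∀ j, Differentiable ℝ (U j) := fun j => (hUC j).differentiable (by norm_num)
  have hVD : ∀ j, Differentiable ℝ (V j) := fun j => (hVC j).differentiable (by norm_num)
  refine integral_div _ _ (fun p => (-(1/2) * h p) * (u p * u p + v p * v p))
    (fun l p => (h p * u p) * (∑ j, a l j p * V (ex j) p) - (h p * v p) * ∑ j, a l j p * U (ex j) p) ?_ ?_ ?_ ?_ ?_
  · fun_prop
  · have : HasCompactSupport (fun p => u p * u p + v p * v p) := (huc.mul_right).add (hvc.mul_right)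
    exact this.mul_left
  · intro l; fun_prop
  · intro l
    have h1 : HasCompactSupport (fun p => (h p * u p) * (∑ j, a l j p * V (ex j) p)) := by
      apply hcs_of huc
      intro p hp
      simp [image_eq_zero_of_notMem_tsupport hp]
    have h2 : HasCompactSupport (fun p => (h p * v p) * (∑ j, a l j p * U (ex j) p)) := by
      apply hcs_of hvc
      intro p hp
      simp [image_eq_zero_of_notMem_tsupport hp]
    exact h1.sub h2
  · intro p
    rw [dd_mul (by fun_prop) (by fun_prop), dd_cmul hhd, dd_add (by fun_prop) (by fun_prop), dd_mul hud hud,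
      dd_mul hvd hvd]
    have key : ∀ l, dd (ex l) (fun p => (h p * u p) * (∑ j, a l j p * V (ex j) p) - (h p * v p) * ∑ j, a l j p * U (ex j) p) p
       = h p * u p * (∑ j, dd (ex l) (fun q => a l j q * V (ex j) q) p) 
         - h p * v p * (∑ j, dd (ex l) (fun q => a l j q * U (ex j) q) p)
         + (∑ j, a l j p * dd (ex l) h p * (u p * V (ex j) p - v p * U (ex j) p)
         + h p * ((∑ j, a l j p * U (ex l) p * V (ex j) p) - ∑ j, a l j p * V (ex l) p * U (ex j) p)) := by
      intro l
      rw [dd_sub (by fun_prop) (by fun_prop), dd_mul (by fun_prop) (by fun_prop),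
        dd_mul hhd hud, dd_mul (by fun_prop) (by fun_prop), dd_mul hhd hvd, dd_sum _ (fun j => by fun_prop), dd_sum _ (fun j => by fun_prop), hU, hV]
      simp only [Finset.mul_sum, ← Finset.sum_sub_distrib, ← Finset.sum_add_distrib]
      refine Finset.sum_congr rfl fun j _ => ?_
      ring
    have sy : ∑ l, ((∑ j, a l j p * U (ex l) p * V (ex j) p) - ∑ j, a l j p * V (ex l) p * U (ex j) p) = 0 := by
      rw [Finset.sum_sub_distrib, sub_eq_zero, Finset.sum_comm]
      refine Finset.sum_congr rfl fun i _ => Finset.sum_congr rfl fun j _ => ?_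
      rw [ha]; ring
    rw [Finset.sum_congr rfl (fun l _ => key l)]
    rw [Finset.sum_add_distrib, Finset.sum_add_distrib, Finset.sum_sub_distrib, ← Finset.mul_sum, ← Finset.mul_sum,
      ← Finset.mul_sum, sy]
    simp only [hU, hV]
    ring

/-- the quadratic energy density -/
noncomputable def enDens (X : Fin n → ℝ × (Fin n → ℝ) → ℝ) (g A h : ℝ × (Fin n → ℝ) → ℝ)
    (u v : ℝ × (Fin n → ℝ) → ℝ) (p : ℝ × (Fin n → ℝ)) : ℝ :=
  (((∑ l, ∑ j, ∑ k, 2 * (a l j p * dd (ex j) u p * dd (ex l) (X k) p * dd (ex k) u p))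
        - (∑ k, X k p * ∑ l, ∑ j, dd (ex k) (a l j) p * dd (ex l) u p * dd (ex j) u p)
        + u p * ∑ l, ∑ j, a l j p * dd (ex j) u p * dd (ex l) g p)
  + ((∑ l, ∑ j, ∑ k, 2 * (a l j p * dd (ex j) v p * dd (ex l) (X k) p * dd (ex k) v p))
        - (∑ k, X k p * ∑ l, ∑ j, dd (ex k) (a l j) p * dd (ex l) v p * dd (ex j) v p)
        + v p * ∑ l, ∑ j, a l j p * dd (ex j) v p * dd (ex l) g p))
  + ((∑ k, X k p * dd (ex k) A p) * (u p * u p) + (∑ k, X k p * dd (ex k) A p) * (v p * v p))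
  + (-∑ k, dd (e0 n) (X k) p * (u p * dd (ex k) v p - v p * dd (ex k) u p))
  + (dd (e0 n) h p * ((u p * u p + v p * v p) / 2)
        - ∑ l, ∑ j, a l j p * dd (ex l) h p * (u p * dd (ex j) v p - v p * dd (ex j) u p))

lemma energy_identity (ha : ∀ i j, a i j = a j i) (haC : ∀ i j, ContDiff ℝ 1 (a i j))
    (X : Fin n → ℝ × (Fin n → ℝ) → ℝ) (hX : ∀ k, ContDiff ℝ 1 (X k))
    (g : ℝ × (Fin n → ℝ) → ℝ) (hg : ContDiff ℝ 1 g) (hgX : ∀ p, g p = ∑ k, dd (ex k) (X k) p)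
    (A : ℝ × (Fin n → ℝ) → ℝ) (hA : ContDiff ℝ 1 A) (h : ℝ × (Fin n → ℝ) → ℝ) (hh : ContDiff ℝ 1 h)
    (u v : ℝ × (Fin n → ℝ) → ℝ) (hu : ContDiff ℝ 2 u) (huc : HasCompactSupport u)
    (hv : ContDiff ℝ 2 v) (hvc : HasCompactSupport v) :
    NullEq (fun p => (-(dd (e0 n) v p) - divA a u p - A p * u p)
          * (2 * ∑ k, X k p * dd (ex k) u p + g p * u p + h p * v p)
        + (dd (e0 n) u p - divA a v p - A p * v p)
          * (2 * ∑ k, X k p * dd (ex k) v p + g p * v p - h p * u p))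
     (enDens a X g A h u v) := by
  have k1 := rellich a ha haC X hX g hg hgX u hu huc
  have k2 := rellich a ha haC X hX g hg hgX v hv hvc
  have k3 := ident2 A hA X hX g hgX u hu huc
  have k4 := ident2 A hA X hX g hgX v hv hvc
  have k5 := ident3 X hX g hgX u v hu huc hv
  have k6 := ident4 a ha haC A h hh u v hu huc hv hvc
  have := ((((k1.add k2).add (k3.add k4)).add k5).add k6)
  obtain ⟨d, h1, h2, h3⟩ := this
  refine ⟨d, h1, h2, fun p => ?_⟩
  have h4 := h3 p
  refine Eq.trans ?_ h4
  ring
end ident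

open Real MeasureTheory

section mol
variable {n : ℕ}

/-- the translation `p + ε (0,y)` as a linear map of `(ε,p)` -/
noncomputable def shL (y : Fin n → ℝ) : (ℝ × (ℝ × (Fin n → ℝ))) →L[ℝ] (ℝ × (Fin n → ℝ)) :=
  ContinuousLinearMap.snd ℝ ℝ (ℝ × (Fin n → ℝ)) +
    (ContinuousLinearMap.fst ℝ ℝ (ℝ × (Fin n → ℝ))).smulRight ((0:ℝ), y)

lemma shL_apply (y : Fin n → ℝ) (q : ℝ × (ℝ × (Fin n → ℝ))) :
    shL y q = q.2 + q.1 • ((0:ℝ), y) := by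
  simp [shL]

lemma shL_cont : Continuous (fun y : Fin n → ℝ => shL y) := by
  unfold shL
  refine continuous_const.add ?_
  have : Continuous (fun y : Fin n → ℝ => ContinuousLinearMap.smulRightL ℝ (ℝ × (ℝ × (Fin n → ℝ))) (ℝ × (Fin n → ℝ))
      (ContinuousLinearMap.fst ℝ ℝ (ℝ × (Fin n → ℝ))) ((0:ℝ), y)) := by
    fun_prop
  exact this

/-- mollification in the space variable at scale `ε` -/
noncomputable def Mol (ρ : (Fin n → ℝ) → ℝ) (f : ℝ × (Fin n → ℝ) → ℝ)
    (q : ℝ × (ℝ × (Fin n → ℝ))) : ℝ :=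
  ∫ y, ρ y * f (shL y q)

lemma param_cont {F : Type*} [NormedAddCommGroup F] [NormedSpace ℝ F]
    {ρ : (Fin n → ℝ) → ℝ} (hρ : Continuous ρ) (hc : HasCompactSupport ρ)
    {G : (ℝ × (ℝ × (Fin n → ℝ))) → (Fin n → ℝ) → F} (hG : Continuous (Function.uncurry G)) :
    Continuous (fun q => ∫ y, ρ y • G q y) := by
  have e : (fun q => ∫ y, ρ y • G q y) = fun q => ∫ y in tsupport ρ, ρ y • G q y := by
    funext q
    rw [setIntegral_eq_integral_of_forall_compl_eq_zero]
    intro y hy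
    rw [image_eq_zero_of_notMem_tsupport hy, zero_smul]
  rw [e]
  refine continuous_parametric_integral_of_continuous (μ := volume) (f := fun q y => ρ y • G q y) ?_ hc.isCompact
  exact (hρ.comp continuous_snd).smul hG

lemma shL_ucont : Continuous (fun z : (ℝ × (ℝ × (Fin n → ℝ))) × (Fin n → ℝ) => shL z.2 z.1) :=
  (shL_cont.comp continuous_snd).clm_apply continuous_fst

lemma Mol_cont {ρ : (Fin n → ℝ) → ℝ} (hρ : Continuous ρ) (hc : HasCompactSupport ρ)
    {f : ℝ × (Fin n → ℝ) → ℝ} (hf : Continuous f) : Continuous (Mol ρ f) :=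
  param_cont (G := fun q y => f (shL y q)) hρ hc (hf.comp shL_ucont)

lemma Mol_fd {ρ : (Fin n → ℝ) → ℝ} (hρ : Continuous ρ) (hc : HasCompactSupport ρ)
    {f : ℝ × (Fin n → ℝ) → ℝ} (hf : ContDiff ℝ 1 f) (q : ℝ × (ℝ × (Fin n → ℝ))) :
    HasFDerivAt (Mol ρ f) (∫ y, ρ y • (fderiv ℝ f (shL y q)).comp (shL y)) q := by
  have hfd : Continuous (fderiv ℝ f) := hf.continuous_fderiv (by norm_num)
  have hGc : Continuous (Function.uncurry fun (q : ℝ × (ℝ × (Fin n → ℝ))) (y : Fin n → ℝ) =>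
      (fderiv ℝ f (shL y q)).comp (shL y)) :=
    (hfd.comp shL_ucont).clm_comp (shL_cont.comp continuous_snd)
  obtain ⟨B, hB⟩ := ((isCompact_closedBall q 1).prod hc.isCompact).exists_bound_of_continuousOn
    (f := Function.uncurry fun (q : ℝ × (ℝ × (Fin n → ℝ))) (y : Fin n → ℝ) =>
      (fderiv ℝ f (shL y q)).comp (shL y)) hGc.continuousOn
  have hcq : ∀ q, Continuous (fun y => ρ y * f (shL y q)) := fun q =>
    hρ.mul (hf.continuous.comp (shL_ucont.comp (continuous_const.prodMk continuous_id)))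
  refine hasFDerivAt_integral_of_dominated_of_fderiv_le (F := fun q y => ρ y * f (shL y q)) (𝕜 := ℝ)
    (F' := fun q y => ρ y • (fderiv ℝ f (shL y q)).comp (shL y)) (bound := fun y => |ρ y| * B)
    (Metric.closedBall_mem_nhds q one_pos) ?_ ?_ ?_ ?_ ?_ ?_
  · exact Filter.Eventually.of_forall fun q => (hcq q).aestronglyMeasurable
  · exact (hcq q).integrable_of_hasCompactSupport hc.mul_right
  · exact (hρ.smul (hGc.comp (continuous_const.prodMk continuous_id))).aestronglyMeasurable
  · refine Filter.Eventually.of_forall fun y q' hq' => ?_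
    rw [norm_smul, Real.norm_eq_abs]
    by_cases hy : y ∈ tsupport ρ
    · exact mul_le_mul_of_nonneg_left (hB (q', y) ⟨hq', hy⟩) (abs_nonneg _)
    · simp [image_eq_zero_of_notMem_tsupport hy]
  · exact ((hρ.abs).mul continuous_const).integrable_of_hasCompactSupport
      (by simpa [Real.norm_eq_abs] using hc.norm.mul_right)
  · refine Filter.Eventually.of_forall fun y q' hq' => ?_
    have h1 : HasFDerivAt f (fderiv ℝ f (shL y q')) (shL y q') :=
      (hf.differentiable (by norm_num) _).hasFDerivAt
    exact (h1.comp q' (shL y).hasFDerivAt).const_mul (ρ y)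

lemma Mol_C1 {ρ : (Fin n → ℝ) → ℝ} (hρ : Continuous ρ) (hc : HasCompactSupport ρ)
    {f : ℝ × (Fin n → ℝ) → ℝ} (hf : ContDiff ℝ 1 f) : ContDiff ℝ 1 (Mol ρ f) := by
  rw [contDiff_one_iff_fderiv]
  refine ⟨fun q => (Mol_fd hρ hc hf q).differentiableAt, ?_⟩
  have hfd : Continuous (fderiv ℝ f) := hf.continuous_fderiv (by norm_num)
  have : fderiv ℝ (Mol ρ f) = fun q => ∫ y, ρ y • (fderiv ℝ f (shL y q)).comp (shL y) :=
    funext fun q => (Mol_fd hρ hc hf q).fderiv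
  rw [this]
  exact param_cont hρ hc ((hfd.comp shL_ucont).clm_comp (shL_cont.comp continuous_snd))

lemma Mol_dd {ρ : (Fin n → ℝ) → ℝ} (hρ : Continuous ρ) (hc : HasCompactSupport ρ)
    {f : ℝ × (Fin n → ℝ) → ℝ} (hf : ContDiff ℝ 1 f) (v : ℝ × (Fin n → ℝ)) (q : ℝ × (ℝ × (Fin n → ℝ))) :
    dd (0, v) (Mol ρ f) q = Mol ρ (dd v f) q := by
  have hfd : Continuous (fderiv ℝ f) := hf.continuous_fderiv (by norm_num)
  unfold dd
  rw [(Mol_fd hρ hc hf q).fderiv, ContinuousLinearMap.integral_apply]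
  · unfold Mol
    congr 1
    funext y
    simp [shL_apply]
  · refine Continuous.integrable_of_hasCompactSupport (Continuous.smul hρ ?_) hc.smul_right
    have : Continuous fun y : Fin n → ℝ => (q, y) := continuous_const.prodMk continuous_id
    exact ((hfd.comp shL_ucont).clm_comp (shL_cont.comp continuous_snd)).comp this

lemma Mol_zero {ρ : (Fin n → ℝ) → ℝ} (h1 : ∫ y, ρ y = 1) 
    (f : ℝ × (Fin n → ℝ) → ℝ) (p : ℝ × (Fin n → ℝ)) : Mol ρ f (0, p) = f p := by
  unfold Mol
  simp only [shL_apply]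
  simp [integral_mul_const, h1]

lemma Mol_ibp {ρ : (Fin n → ℝ) → ℝ} (hρ : ContDiff ℝ 1 ρ) (hc : HasCompactSupport ρ)
    {f : ℝ × (Fin n → ℝ) → ℝ} (hf : ContDiff ℝ 1 f) (k : Fin n) (q : ℝ × (ℝ × (Fin n → ℝ)))
    (hq : q.1 ≠ 0) :
    Mol ρ (dd (ex k) f) q = -(q.1)⁻¹ * Mol (dd (Pi.single k 1) ρ) f q := by
  have hg : ContDiff ℝ 1 (fun y => f (shL y q)) := by
    simp only [shL_apply]
    fun_prop
  have hgd : ∀ y, fderiv ℝ (fun y => f (shL y q)) y (Pi.single k 1) = q.1 * dd (ex k) f (shL y q) := by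
    intro y
    have h1 : HasFDerivAt f (fderiv ℝ f (shL y q)) (shL y q) :=
      (hf.differentiable (by norm_num) _).hasFDerivAt
    have h2 : HasFDerivAt (fun y : Fin n → ℝ => shL y q) (q.1 • ContinuousLinearMap.inr ℝ ℝ (Fin n → ℝ)) y := by
      simp only [shL_apply]
      exact (((ContinuousLinearMap.inr ℝ ℝ (Fin n → ℝ)).hasFDerivAt).const_smul q.1).const_add _
    have h3 : HasFDerivAt (fun y => f (shL y q)) _ y := h1.comp y h2
    rw [h3.fderiv]
    simp [dd, ex]
  have := integral_mul_fderiv_eq_neg_fderiv_mul_of_integrable (μ := volume) (𝕜 := ℝ) (f := ρ)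
    (g := fun y => f (shL y q)) (v := Pi.single k 1) 
    (((dd_C0 hρ _).mul hg.continuous).integrable_of_hasCompactSupport (dd_hcs hc _).mul_right)
    ((hρ.continuous.mul (dd_C0 hg _)).integrable_of_hasCompactSupport hc.mul_right)
    ((hρ.continuous.mul hg.continuous).integrable_of_hasCompactSupport hc.mul_right)
    (fun x _ => hρ.differentiable (by norm_num) x) (fun x _ => hg.differentiable (by norm_num) x)
  simp only [hgd] at this
  unfold Mol
  have e : ∫ y, ρ y * (q.1 * dd (ex k) f (shL y q)) = q.1 * ∫ y, ρ y * dd (ex k) f (shL y q) := by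
    rw [← integral_const_mul]; congr 1; funext y; ring
  rw [e] at this
  have e2 : ∫ y, fderiv ℝ ρ y (Pi.single k 1) * f (shL y q) = ∫ y, dd (Pi.single k 1) ρ y * f (shL y q) := rfl
  rw [e2] at this
  rw [neg_mul, ← mul_neg, ← this]
  field_simp
end mol

open Real MeasureTheory

lemma tube_pos {Y : Type*} [TopologicalSpace Y] {K : Set Y} (hK : IsCompact K) {G : ℝ × Y → ℝ}
    (hG : Continuous G) (hpos : ∀ y ∈ K, 0 < G (0, y)) :
    ∃ ε1 > (0:ℝ), ∃ κ > (0:ℝ), ∀ ε, 0 ≤ ε → ε ≤ ε1 → ∀ y ∈ K, κ ≤ G (ε, y) := by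
  rcases K.eq_empty_or_nonempty with rfl | hne
  · exact ⟨1, one_pos, 1, one_pos, fun _ _ _ y hy => absurd hy (Set.notMem_empty y)⟩
  obtain ⟨y0, hy0, hmin⟩ := hK.exists_isMinOn (f := fun y => G (0, y)) hne
    (hG.comp (continuous_const.prodMk continuous_id)).continuousOn
  set κ := G (0, y0) / 2 with hκ
  have hκ0 : 0 < κ := half_pos (hpos y0 hy0)
  have hop : IsOpen {z : ℝ × Y | κ < G z} := isOpen_lt continuous_const hG
  have hsub : ({0} : Set ℝ) ×ˢ K ⊆ {z : ℝ × Y | κ < G z} := by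
    rintro ⟨e, y⟩ ⟨he, hy⟩
    simp only [Set.mem_singleton_iff] at he
    subst he
    have h1 : G (0, y0) ≤ G (0, y) := hmin hy
    have h2 := hpos y0 hy0
    simp only [Set.mem_ofPred_eq]
    linarith
  obtain ⟨u, v, hu, hv, h0u, hKv, huv⟩ := generalized_tube_lemma isCompact_singleton hK hop hsub
  obtain ⟨d, hd, hball⟩ := Metric.isOpen_iff.1 hu 0 (h0u rfl)
  refine ⟨d / 2, half_pos hd, κ, hκ0, fun ε h0 h1 y hy => ?_⟩
  have : (ε, y) ∈ u ×ˢ v := by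
    refine ⟨hball ?_, hKv hy⟩
    rw [Metric.mem_ball, Real.dist_eq, sub_zero, abs_of_nonneg h0]
    linarith
  exact (huv this).le

lemma bdd_fam {Y : Type*} [TopologicalSpace Y] {K : Set Y} (hK : IsCompact K) {ι : Type*} [Fintype ι]
    (f : ι → Y → ℝ) (hf : ∀ i, Continuous (f i)) : ∃ C : ℝ, 1 ≤ C ∧ ∀ i, ∀ y ∈ K, |f i y| ≤ C := by
  choose B hB using fun i => hK.exists_bound_of_continuousOn (hf i).continuousOn
  refine ⟨1 + ∑ i, |B i|, ?_, fun i y hy => ?_⟩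
  · have : 0 ≤ ∑ i, |B i| := Finset.sum_nonneg fun i _ => abs_nonneg _
    linarith
  · have h1 := hB i y hy
    have h2 : |B i| ≤ ∑ i, |B i| := Finset.single_le_sum (f := fun i => |B i|) (fun i _ => abs_nonneg _) (Finset.mem_univ i)
    have h3 := le_abs_self (B i)
    rw [Real.norm_eq_abs] at h1
    linarith

section
variable {n : ℕ}

/-- the quadratic form of the commutator -/
noncomputable def qForm (A : Fin n → Fin n → ℝ) (AK : Fin n → Fin n → Fin n → ℝ)
    (W : Fin n → ℝ) (WW : Fin n → Fin n → ℝ) (ξ : Fin n → ℝ) : ℝ :=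
  (∑ l, ∑ j, ∑ k, 2 * (A l j * ξ j * WW l k * ξ k)) - (∑ k, W k * ∑ l, ∑ j, AK k l j * ξ l * ξ j)

lemma qForm_smul (A : Fin n → Fin n → ℝ) (AK : Fin n → Fin n → Fin n → ℝ)
    (W : Fin n → ℝ) (WW : Fin n → Fin n → ℝ) (ξ : Fin n → ℝ) (c : ℝ) :
    qForm A AK W WW (c • ξ) = c ^ 2 * qForm A AK W WW ξ := by
  unfold qForm
  simp only [Pi.smul_apply, smul_eq_mul, mul_sub, Finset.mul_sum]
  congr 1 <;> refine Finset.sum_congr rfl fun l _ => Finset.sum_congr rfl fun j _ => Finset.sum_congr rfl fun k _ => ?_ <;> ring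

lemma sum_sq_le_norm (ξ : Fin n → ℝ) : ∑ i, ξ i ^ 2 ≤ (n + 1) * ‖ξ‖ ^ 2 := by
  have : ∑ i, ξ i ^ 2 ≤ ∑ _i : Fin n, ‖ξ‖ ^ 2 := by
    refine Finset.sum_le_sum fun i _ => ?_
    have := norm_le_pi_norm ξ i
    rw [Real.norm_eq_abs] at this
    rw [← sq_abs]
    gcongr
  simp at this
  nlinarith [sq_nonneg ‖ξ‖]

/-- vector field `a ∇E` -/
noncomputable def Wf (a : Fin n → Fin n → ℝ × (Fin n → ℝ) → ℝ) (E : ℝ × (Fin n → ℝ) → ℝ) (k : Fin n)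
    (p : ℝ × (Fin n → ℝ)) : ℝ := ∑ j, a k j p * dd (ex j) E p

/-- `a(∇E,∇E)` -/
noncomputable def Df (a : Fin n → Fin n → ℝ × (Fin n → ℝ) → ℝ) (E : ℝ × (Fin n → ℝ) → ℝ)
    (p : ℝ × (Fin n → ℝ)) : ℝ := ∑ k, Wf a E k p * dd (ex k) E p

lemma Wf_C1 {a : Fin n → Fin n → ℝ × (Fin n → ℝ) → ℝ} (haC : ∀ i j, ContDiff ℝ 1 (a i j))
    {E : ℝ × (Fin n → ℝ) → ℝ} (hE : ContDiff ℝ 2 E) (k : Fin n) : ContDiff ℝ 1 (Wf a E k) := by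
  unfold Wf
  exact ContDiff.sum fun j _ => (haC k j).mul (dd_C1 hE _)

lemma Df_C1 {a : Fin n → Fin n → ℝ × (Fin n → ℝ) → ℝ} (haC : ∀ i j, ContDiff ℝ 1 (a i j))
    {E : ℝ × (Fin n → ℝ) → ℝ} (hE : ContDiff ℝ 2 E) : ContDiff ℝ 1 (Df a E) := by
  unfold Df
  exact ContDiff.sum fun j _ => (Wf_C1 haC hE j).mul (dd_C1 hE _)

/-- uniform bounds used in the Carleman estimate -/
structure Bnds (a : Fin n → Fin n → ℝ × (Fin n → ℝ) → ℝ) (E : ℝ × (Fin n → ℝ) → ℝ) (E0 : ℝ)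
    (ρ : (Fin n → ℝ) → ℝ) (K : Set (ℝ × (Fin n → ℝ))) (C ε1 κ : ℝ) : Prop where
  hC : 1 ≤ C
  hε1 : 0 < ε1
  hε1' : ε1 ≤ 1
  hκ : 0 < κ
  ba : ∀ p ∈ K, ∀ l j, |a l j p| ≤ C
  bE0 : ∀ p ∈ K, |E p - E0| ≤ C
  bEt : ∀ p ∈ K, |dd (e0 n) E p| ≤ C
  bEtt : ∀ p ∈ K, |dd (e0 n) (dd (e0 n) E) p| ≤ C
  bEx : ∀ p ∈ K, ∀ l, |dd (ex l) E p| ≤ C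
  bExt : ∀ p ∈ K, ∀ l, |dd (ex l) (dd (e0 n) E) p| ≤ C
  bW : ∀ p ∈ K, ∀ ε, 0 ≤ ε → ε ≤ ε1 → ∀ k, |Mol ρ (Wf a E k) (ε, p)| ≤ C
  bWe : ∀ p ∈ K, ∀ ε, 0 ≤ ε → ε ≤ ε1 → ∀ k, |dd (1, 0) (Mol ρ (Wf a E k)) (ε, p)| ≤ C
  bWt : ∀ p ∈ K, ∀ ε, 0 ≤ ε → ε ≤ ε1 → ∀ k, |dd (0, e0 n) (Mol ρ (Wf a E k)) (ε, p)| ≤ C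
  bWx : ∀ p ∈ K, ∀ ε, 0 ≤ ε → ε ≤ ε1 → ∀ k l,
    |Mol (dd (Pi.single k 1) ρ) (dd (ex l) (Wf a E k)) (ε, p)| ≤ C
  bWd : ∀ p ∈ K, ∀ ε, 0 ≤ ε → ε ≤ ε1 → ∀ k, |Mol ρ (dd (ex k) (Wf a E k)) (ε, p)| ≤ C
  bWd' : ∀ p ∈ K, ∀ k, |dd (ex k) (Wf a E k) p| ≤ C
  bWc : ∀ p ∈ K, ∀ ε, 0 ≤ ε → ε ≤ ε1 → ∀ k, |Mol ρ (Wf a E k) (ε, p) - Wf a E k p| ≤ C * ε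
  pos1 : ∀ p ∈ K, ∀ ε, 0 ≤ ε → ε ≤ ε1 → ∀ ξ : Fin n → ℝ, κ * ∑ i, ξ i ^ 2 ≤
    qForm (fun i j => a i j p) (fun k i j => dd (ex k) (a i j) p) (fun k => Mol ρ (Wf a E k) (ε, p))
      (fun l k => Mol ρ (dd (ex l) (Wf a E k)) (ε, p)) ξ
  pos2 : ∀ p ∈ K, ∀ ε, 0 ≤ ε → ε ≤ ε1 → κ ≤ ∑ k, Mol ρ (Wf a E k) (ε, p) * dd (ex k) (Df a E) p

lemma exists_Bnds (a : Fin n → Fin n → ℝ × (Fin n → ℝ) → ℝ) (haC : ∀ i j, ContDiff ℝ 1 (a i j))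
    (E : ℝ × (Fin n → ℝ) → ℝ) (hE : ContDiff ℝ 2 E) (E0 : ℝ)
    (ρ : (Fin n → ℝ) → ℝ) (hρ : ContDiff ℝ 1 ρ) (hρc : HasCompactSupport ρ) (hρ1 : ∫ y, ρ y = 1)
    (K : Set (ℝ × (Fin n → ℝ))) (hK : IsCompact K)
    (h1 : ∀ p ∈ K, ∀ ξ : Fin n → ℝ, ξ ≠ 0 → 0 < qForm (fun i j => a i j p)
      (fun k i j => dd (ex k) (a i j) p) (fun k => Wf a E k p) (fun l k => dd (ex l) (Wf a E k) p) ξ)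
    (h2 : ∀ p ∈ K, 0 < ∑ k, Wf a E k p * dd (ex k) (Df a E) p) :
    ∃ C ε1 κ, Bnds a E E0 ρ K C ε1 κ := by
  have hW := fun k => Wf_C1 haC hE k
  have hD := Df_C1 haC hE
  have hρ0 := hρ.continuous
  have ca : ∀ i j, Continuous (a i j) := fun i j => (haC i j).continuous
  have cda : ∀ v i j, Continuous (dd v (a i j)) := fun v i j => dd_C0 (haC i j) v
  have cM : ∀ k, Continuous (Mol ρ (Wf a E k)) := fun k => Mol_cont hρ0 hρc (hW k).continuous
  have cMd : ∀ l k, Continuous (Mol ρ (dd (ex l) (Wf a E k))) := fun l k => Mol_cont hρ0 hρc (dd_C0 (hW k) _)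
  have M1 := fun k => Mol_C1 hρ0 hρc (hW k)
  -- positivity
  obtain ⟨e1, he1, κ1, hκ1, H1⟩ := tube_pos (hK.prod (isCompact_sphere (0 : Fin n → ℝ) 1))
    (G := fun z => qForm (fun i j => a i j z.2.1) (fun k i j => dd (ex k) (a i j) z.2.1)
      (fun k => Mol ρ (Wf a E k) (z.1, z.2.1))
      (fun l k => Mol ρ (dd (ex l) (Wf a E k)) (z.1, z.2.1)) z.2.2)
    (by
      unfold qForm
      have c1 : ∀ i j, Continuous (fun z : ℝ × (ℝ × (Fin n → ℝ)) × (Fin n → ℝ) => a i j z.2.1) :=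
        fun i j => (ca i j).comp (by fun_prop)
      have c2 : ∀ k i j, Continuous (fun z : ℝ × (ℝ × (Fin n → ℝ)) × (Fin n → ℝ) => dd (ex k) (a i j) z.2.1) :=
        fun k i j => (cda _ i j).comp (by fun_prop)
      have c3 : ∀ k, Continuous (fun z : ℝ × (ℝ × (Fin n → ℝ)) × (Fin n → ℝ) => Mol ρ (Wf a E k) (z.1, z.2.1)) :=
        fun k => (cM k).comp (by fun_prop)
      have c4 : ∀ l k, Continuous (fun z : ℝ × (ℝ × (Fin n → ℝ)) × (Fin n → ℝ) => Mol ρ (dd (ex l) (Wf a E k)) (z.1, z.2.1)) :=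
        fun l k => (cMd l k).comp (by fun_prop)
      have c5 : ∀ i, Continuous (fun z : ℝ × (ℝ × (Fin n → ℝ)) × (Fin n → ℝ) => z.2.2 i) := fun i => by fun_prop
      refine Continuous.sub ?_ ?_
      · exact continuous_finsetSum _ fun l _ => continuous_finsetSum _ fun j _ => continuous_finsetSum _ fun k _ =>
          continuous_const.mul ((((c1 l j).mul (c5 j)).mul (c4 l k)).mul (c5 k))
      · exact continuous_finsetSum _ fun k _ => (c3 k).mul (continuous_finsetSum _ fun l _ => continuous_finsetSum _ fun j _ => 
          (((c2 k l j).mul (c5 l)).mul (c5 j))))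
    (by
      rintro ⟨p, ξ⟩ ⟨hp, hξ⟩
      simp only [Mol_zero hρ1]
      apply h1 p hp
      rintro rfl
      simp at hξ)
  obtain ⟨e2, he2, κ2, hκ2, H2⟩ := tube_pos hK
    (G := fun z => ∑ k, Mol ρ (Wf a E k) z * dd (ex k) (Df a E) z.2)
    (continuous_finsetSum _ fun k _ => (cM k).mul ((dd_C0 hD _).comp continuous_snd))
    (by intro p hp; simp only [Mol_zero hρ1]; exact h2 p hp)
  -- bounds
  have hIK : IsCompact (Set.Icc (0:ℝ) 1 ×ˢ K) := isCompact_Icc.prod hK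
  have hE1 : ContDiff ℝ 1 E := hE.of_le (by norm_num)
  obtain ⟨C1, hC1, B1⟩ := bdd_fam hK (fun i : Fin n × Fin n => a i.1 i.2) (fun i => ca _ _)
  obtain ⟨C2, hC2, B2⟩ := bdd_fam hK (fun i : Unit => fun p => E p - E0) (fun i => hE.continuous.sub continuous_const)
  obtain ⟨C3, hC3, B3⟩ := bdd_fam hK (fun i : Unit => dd (e0 n) E) (fun i => dd_C0 hE1 _)
  obtain ⟨C4, hC4, B4⟩ := bdd_fam hK (fun i : Unit => dd (e0 n) (dd (e0 n) E)) (fun i => dd_C0 (dd_C1 hE _) _)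
  obtain ⟨C5, hC5, B5⟩ := bdd_fam hK (fun i : Fin n => dd (ex i) E) (fun i => dd_C0 hE1 _)
  obtain ⟨C6, hC6, B6⟩ := bdd_fam hK (fun i : Fin n => dd (ex i) (dd (e0 n) E)) (fun i => dd_C0 (dd_C1 hE _) _)
  obtain ⟨C7, hC7, B7⟩ := bdd_fam hIK (fun i : Fin n => Mol ρ (Wf a E i)) cM
  obtain ⟨C8, hC8, B8⟩ := bdd_fam hIK (fun i : Fin n => dd (1, 0) (Mol ρ (Wf a E i))) (fun i => dd_C0 (M1 i) _)
  obtain ⟨C9, hC9, B9⟩ := bdd_fam hIK (fun i : Fin n => dd (0, e0 n) (Mol ρ (Wf a E i))) (fun i => dd_C0 (M1 i) _)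
  obtain ⟨C10, hC10, B10⟩ := bdd_fam hIK
    (fun i : Fin n × Fin n => Mol (dd (Pi.single i.1 1) ρ) (dd (ex i.2) (Wf a E i.1)))
    (fun i => Mol_cont (dd_C0 hρ _) (dd_hcs hρc _) (dd_C0 (hW _) _))
  obtain ⟨C11, hC11, B11⟩ := bdd_fam hIK (fun i : Fin n => Mol ρ (dd (ex i) (Wf a E i))) (fun i => cMd i i)
  obtain ⟨C12, hC12, B12⟩ := bdd_fam hK (fun i : Fin n => dd (ex i) (Wf a E i)) (fun i => dd_C0 (hW i) _)
  set C := C1 + C2 + C3 + C4 + C5 + C6 + C7 + C8 + C9 + C10 + C11 + C12 with hC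
  have hmin1 : min 1 (min e1 e2) ≤ 1 := min_le_left _ _
  have hmine1 : min 1 (min e1 e2) ≤ e1 := (min_le_right _ _).trans (min_le_left _ _)
  have hmine2 : min 1 (min e1 e2) ≤ e2 := (min_le_right _ _).trans (min_le_right _ _)
  have hmem : ∀ p ∈ K, ∀ ε, 0 ≤ ε → ε ≤ min 1 (min e1 e2) → (ε, p) ∈ Set.Icc (0:ℝ) 1 ×ˢ K :=
    fun p hp ε h0 h => ⟨⟨h0, h.trans hmin1⟩, hp⟩
  refine ⟨C, min 1 (min e1 e2), min (κ1 / (n + 1)) κ2, ⟨by linarith, by positivity, hmin1, by positivity, ?_, ?_, ?_, ?_, ?_, ?_, ?_, ?_, ?_, ?_, ?_, ?_, ?_, ?_, ?_⟩⟩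
  · intro p hp l j; have := B1 (l, j) p hp; linarith
  · intro p hp; have := B2 () p hp; linarith
  · intro p hp; have := B3 () p hp; linarith
  · intro p hp; have := B4 () p hp; linarith
  · intro p hp l; have := B5 l p hp; linarith
  · intro p hp l; have := B6 l p hp; linarith
  · intro p hp ε h0 hε k; have := B7 k _ (hmem p hp ε h0 hε); linarith
  · intro p hp ε h0 hε k; have := B8 k _ (hmem p hp ε h0 hε); linarith
  · intro p hp ε h0 hε k; have := B9 k _ (hmem p hp ε h0 hε); linarith
  · intro p hp ε h0 hε k l; have := B10 (k, l) _ (hmem p hp ε h0 hε); linarith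
  · intro p hp ε h0 hε k; have := B11 k _ (hmem p hp ε h0 hε); linarith
  · intro p hp k; have := B12 k _ hp; linarith
  · intro p hp ε h0 hε k
    have key : ‖Mol ρ (Wf a E k) (ε, p) - Mol ρ (Wf a E k) (0, p)‖ ≤ C8 * ‖ε - 0‖ := by
      refine (convex_Icc (0:ℝ) 1).norm_image_sub_le_of_norm_hasDerivWithin_le
        (f := fun e => Mol ρ (Wf a E k) (e, p)) (f' := fun e => dd (1, 0) (Mol ρ (Wf a E k)) (e, p)) ?_ ?_
        ⟨le_rfl, zero_le_one⟩ ⟨h0, hε.trans hmin1⟩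
      · intro e he
        apply HasDerivAt.hasDerivWithinAt
        have d1 := ((M1 k).differentiable (by norm_num) (e, p)).hasFDerivAt
        have d2 : HasDerivAt (fun e : ℝ => (e, p)) ((1:ℝ), (0 : ℝ × (Fin n → ℝ))) e :=
          (hasDerivAt_id e).prodMk (hasDerivAt_const e p)
        exact d1.comp_hasDerivAt e d2
      · intro e he
        exact B8 k (e, p) ⟨he, hp⟩
    rw [Mol_zero hρ1, sub_zero, Real.norm_eq_abs, Real.norm_eq_abs, abs_of_nonneg h0] at key
    refine key.trans (mul_le_mul_of_nonneg_right (by linarith) h0)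
  · intro p hp ε h0 hε ξ
    by_cases hξ : ξ = 0
    · subst hξ; simp [qForm]
    have hn : 0 < ‖ξ‖ := norm_pos_iff.2 hξ
    have := H1 ε h0 (hε.trans hmine1) (p, ‖ξ‖⁻¹ • ξ) ⟨hp, by simp [norm_smul, hn.ne']⟩
    simp only [qForm_smul] at this
    have h3 : κ1 * ‖ξ‖ ^ 2 ≤ qForm (fun i j => a i j p) (fun k i j => dd (ex k) (a i j) p) (fun k => Mol ρ (Wf a E k) (ε, p))
      (fun l k => Mol ρ (dd (ex l) (Wf a E k)) (ε, p)) ξ := by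
      rw [inv_pow, inv_mul_eq_div, le_div_iff₀ (by positivity)] at this
      exact this
    refine le_trans ?_ h3
    have h4 := sum_sq_le_norm ξ
    have h5 : 0 ≤ ∑ i, ξ i ^ 2 := Finset.sum_nonneg fun i _ => sq_nonneg _
    calc min (κ1 / (n + 1)) κ2 * ∑ i, ξ i ^ 2 ≤ κ1 / (n + 1) * ((n + 1) * ‖ξ‖ ^ 2) := by
          apply mul_le_mul (min_le_left _ _) h4 h5 (by positivity)
      _ = κ1 * ‖ξ‖ ^ 2 := by field_simp
  · intro p hp ε h0 hε
    exact (min_le_right _ _).trans (H2 ε h0 (hε.trans hmine2) p hp)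
end

open Real MeasureTheory

section
variable {n : ℕ}

lemma abs_sum_le_card (f : Fin n → ℝ) (N : ℝ) (h : ∀ i, |f i| ≤ N) : |∑ i, f i| ≤ n * N := by
  refine (Finset.abs_sum_le_sum_abs _ _).trans ?_
  refine (Finset.sum_le_card_nsmul _ _ N fun i _ => h i).trans ?_
  simp

/-- the energy -/
noncomputable def Nrg (s : ℝ) (U V : Fin n → ℝ) (u v : ℝ) : ℝ :=
  s * (∑ j, U j ^ 2 + ∑ j, V j ^ 2) + s ^ 3 * (u ^ 2 + v ^ 2)

lemma Nrg_nonneg {s : ℝ} (hs : 0 ≤ s) (U V : Fin n → ℝ) (u v : ℝ) : 0 ≤ Nrg s U V u v := by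
  unfold Nrg
  have h1 : 0 ≤ ∑ j, U j ^ 2 := Finset.sum_nonneg fun i _ => sq_nonneg _
  have h2 : 0 ≤ ∑ j, V j ^ 2 := Finset.sum_nonneg fun i _ => sq_nonneg _
  positivity

lemma Nrg_comm {s : ℝ} (U V : Fin n → ℝ) (u v : ℝ) : Nrg s U V u v = Nrg s V U v u := by
  unfold Nrg; ring

lemma Nrg_U {s : ℝ} (hs : 0 ≤ s) (U V : Fin n → ℝ) (u v : ℝ) (j : Fin n) :
    s * U j ^ 2 + s * V j ^ 2 + s ^ 3 * u ^ 2 + s ^ 3 * v ^ 2 ≤ Nrg s U V u v := by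
  have h1 : U j ^ 2 ≤ ∑ j, U j ^ 2 := Finset.single_le_sum (f := fun j => U j ^ 2) (fun i _ => sq_nonneg _) (Finset.mem_univ j)
  have h2 : V j ^ 2 ≤ ∑ j, V j ^ 2 := Finset.single_le_sum (f := fun j => V j ^ 2) (fun i _ => sq_nonneg _) (Finset.mem_univ j)
  unfold Nrg
  have h3 := mul_le_mul_of_nonneg_left h1 hs
  have h4 := mul_le_mul_of_nonneg_left h2 hs
  linarith

lemma s_mul_le {s : ℝ} (hs : 0 ≤ s) (w y : ℝ) : s ^ 2 * |w * y| ≤ (s * y ^ 2 + s ^ 3 * w ^ 2) / 2 := by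
  rw [abs_mul]
  have : 0 ≤ s * (|y| - s * |w|) ^ 2 := by positivity
  rw [← sq_abs y, ← sq_abs w]
  nlinarith [this]

lemma enDens_low (a : Fin n → Fin n → ℝ × (Fin n → ℝ) → ℝ) (X : Fin n → ℝ × (Fin n → ℝ) → ℝ)
    (g A h u v : ℝ × (Fin n → ℝ) → ℝ) (p : ℝ × (Fin n → ℝ)) (s C θ κ : ℝ) (hs : 0 ≤ s)
    (hC0 : 0 ≤ C) (hθ : 0 ≤ θ) (hC : ∀ l j, |a l j p| ≤ C) (hG : ∀ l, |dd (ex l) g p| ≤ θ * s ^ 2)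
    (hXt : ∀ l, |dd (e0 n) (X l) p| ≤ θ * s ^ 2)
    (hH : ∀ l, |dd (ex l) h p| ≤ θ * s ^ 2) (hht : |dd (e0 n) h p| ≤ θ * s ^ 3)
    (hQ : ∀ ξ : Fin n → ℝ, κ * s * ∑ i, ξ i ^ 2 ≤ qForm (fun i j => a i j p) (fun k i j => dd (ex k) (a i j) p)
      (fun k => X k p) (fun l k => dd (ex l) (X k) p) ξ)
    (hA : κ * s ^ 3 ≤ ∑ k, X k p * dd (ex k) A p) :
    (κ - (3 * n ^ 2 * C + n + 1) * θ) * Nrg s (fun j => dd (ex j) u p) (fun j => dd (ex j) v p) (u p) (v p)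
      ≤ enDens a X g A h u v p := by
  set U : Fin n → ℝ := fun j => dd (ex j) u p with hU
  set V : Fin n → ℝ := fun j => dd (ex j) v p with hV
  set N := Nrg s U V (u p) (v p) with hN
  have hN0 : 0 ≤ N := Nrg_nonneg hs _ _ _ _
  have hNU := fun j => Nrg_U hs U V (u p) (v p) j
  rw [← hN] at hNU
  have s3 : 0 ≤ s ^ 3 := by positivity
  have g1 : ∀ (w : ℝ) (Y : Fin n → ℝ), (∀ j, s ^ 2 * |w * Y j| ≤ N) →
      |w * ∑ l, ∑ j, a l j p * Y j * dd (ex l) g p| ≤ n ^ 2 * C * θ * N := by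
    intro w Y hY
    simp only [Finset.mul_sum]
    have : |∑ l, ∑ j, w * (a l j p * Y j * dd (ex l) g p)| ≤ n * (n * (C * θ * N)) := by
      refine abs_sum_le_card _ _ fun l => abs_sum_le_card _ _ fun j => ?_
      calc |w * (a l j p * Y j * dd (ex l) g p)| = |a l j p| * (|dd (ex l) g p| * |w * Y j|) := by
            simp only [abs_mul]; ring
        _ ≤ C * (θ * s ^ 2 * |w * Y j|) := by
            apply mul_le_mul (hC l j) _ (by positivity) hC0
            exact mul_le_mul_of_nonneg_right (hG l) (abs_nonneg _)
        _ = C * θ * (s ^ 2 * |w * Y j|) := by ring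
        _ ≤ _ := mul_le_mul_of_nonneg_left (hY j) (by positivity)
    linarith
  have b1 := g1 (u p) U (fun j => (s_mul_le hs (u p) (U j)).trans (by
    have := hNU j; have := mul_nonneg hs (sq_nonneg (U j)); have := mul_nonneg hs (sq_nonneg (V j))
    have := mul_nonneg s3 (sq_nonneg (u p)); have := mul_nonneg s3 (sq_nonneg (v p)); linarith))
  have b2 := g1 (v p) V (fun j => (s_mul_le hs (v p) (V j)).trans (by
    have := hNU j; have := mul_nonneg hs (sq_nonneg (U j)); have := mul_nonneg hs (sq_nonneg (V j))
    have := mul_nonneg s3 (sq_nonneg (u p)); have := mul_nonneg s3 (sq_nonneg (v p)); linarith))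
  have cr : ∀ j, s ^ 2 * |u p * V j - v p * U j| ≤ N := by
    intro j
    have h1 := s_mul_le hs (u p) (V j)
    have h2 := s_mul_le hs (v p) (U j)
    have h3 : s ^ 2 * |u p * V j - v p * U j| ≤ s ^ 2 * (|u p * V j| + |v p * U j|) :=
      mul_le_mul_of_nonneg_left (abs_sub _ _) (by positivity)
    have := hNU j; have := mul_nonneg hs (sq_nonneg (U j)); have := mul_nonneg hs (sq_nonneg (V j))
    have := mul_nonneg s3 (sq_nonneg (u p)); have := mul_nonneg s3 (sq_nonneg (v p)); linarith
  have b3 : |∑ k, dd (e0 n) (X k) p * (u p * V k - v p * U k)| ≤ n * (θ * N) := by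
    refine abs_sum_le_card _ _ fun k => ?_
    rw [abs_mul]
    calc _ ≤ θ * s ^ 2 * |u p * V k - v p * U k| := mul_le_mul_of_nonneg_right (hXt k) (abs_nonneg _)
      _ = θ * (s ^ 2 * |u p * V k - v p * U k|) := by ring
      _ ≤ _ := mul_le_mul_of_nonneg_left (cr k) hθ
  have b4 : |∑ l, ∑ j, a l j p * dd (ex l) h p * (u p * V j - v p * U j)| ≤ n * (n * (C * θ * N)) := by
    refine abs_sum_le_card _ _ fun l => abs_sum_le_card _ _ fun j => ?_
    rw [abs_mul, abs_mul]
    calc |a l j p| * |dd (ex l) h p| * |u p * V j - v p * U j|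
        ≤ C * (θ * s ^ 2) * |u p * V j - v p * U j| :=
          mul_le_mul_of_nonneg_right (mul_le_mul (hC l j) (hH l) (abs_nonneg _) hC0) (abs_nonneg _)
      _ = C * θ * (s ^ 2 * |u p * V j - v p * U j|) := by ring
      _ ≤ _ := mul_le_mul_of_nonneg_left (cr j) (by positivity)
  have hNs : s ^ 3 * (u p ^ 2 + v p ^ 2) ≤ N := by
    have h1 : 0 ≤ ∑ j, U j ^ 2 := Finset.sum_nonneg fun i _ => sq_nonneg _
    have h2 : 0 ≤ ∑ j, V j ^ 2 := Finset.sum_nonneg fun i _ => sq_nonneg _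
    rw [hN]; unfold Nrg
    have := mul_nonneg hs (add_nonneg h1 h2)
    linarith
  have b5 : |dd (e0 n) h p * ((u p * u p + v p * v p) / 2)| ≤ θ * N := by
    rw [abs_mul, abs_of_nonneg (a := (u p * u p + v p * v p) / 2) (by nlinarith [sq_nonneg (u p), sq_nonneg (v p)])]
    calc _ ≤ θ * s ^ 3 * ((u p * u p + v p * v p) / 2) := mul_le_mul_of_nonneg_right hht (by nlinarith [sq_nonneg (u p), sq_nonneg (v p)])
      _ = θ * (s ^ 3 * (u p ^ 2 + v p ^ 2) / 2) := by ring
      _ ≤ _ := by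
        apply mul_le_mul_of_nonneg_left _ hθ
        have : 0 ≤ s ^ 3 * (u p ^ 2 + v p ^ 2) := by positivity
        linarith
  have q1 := hQ U
  have q2 := hQ V
  have a1 := mul_le_mul_of_nonneg_right hA (mul_self_nonneg (u p))
  have a2 := mul_le_mul_of_nonneg_right hA (mul_self_nonneg (v p))
  have hNe : κ * N = κ * s * ∑ i, U i ^ 2 + κ * s * ∑ i, V i ^ 2 + κ * s ^ 3 * (u p * u p) + κ * s ^ 3 * (v p * v p) := by
    rw [hN]; unfold Nrg; ring
  unfold qForm at q1 q2
  have e1 : enDens a X g A h u v p = 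
    (((∑ l, ∑ j, ∑ k, 2 * (a l j p * U j * dd (ex l) (X k) p * U k))
        - (∑ k, X k p * ∑ l, ∑ j, dd (ex k) (a l j) p * U l * U j)
        + u p * ∑ l, ∑ j, a l j p * U j * dd (ex l) g p)
  + ((∑ l, ∑ j, ∑ k, 2 * (a l j p * V j * dd (ex l) (X k) p * V k))
        - (∑ k, X k p * ∑ l, ∑ j, dd (ex k) (a l j) p * V l * V j)
        + v p * ∑ l, ∑ j, a l j p * V j * dd (ex l) g p))
  + ((∑ k, X k p * dd (ex k) A p) * (u p * u p) + (∑ k, X k p * dd (ex k) A p) * (v p * v p))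
  + (-∑ k, dd (e0 n) (X k) p * (u p * V k - v p * U k))
  + (dd (e0 n) h p * ((u p * u p + v p * v p) / 2)
        - ∑ l, ∑ j, a l j p * dd (ex l) h p * (u p * V j - v p * U j)) := rfl
  rw [e1]
  have b1' := (abs_le.1 b1).1
  have b2' := (abs_le.1 b2).1
  have b3' := (abs_le.1 b3).2
  have b4' := (abs_le.1 b4).2
  have b5' := (abs_le.1 b5).1
  have : (κ - (3 * n ^ 2 * C + n + 1) * θ) * N = κ * N - n ^ 2 * C * θ * N - n ^ 2 * C * θ * N
    - n * (n * (C * θ * N)) - n * (θ * N) - θ * N := by ring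
  rw [this, hNe]
  linarith

/-- the abstract energy inequality -/
lemma energy_ineq (a : Fin n → Fin n → ℝ × (Fin n → ℝ) → ℝ)
    (ha : ∀ i j, a i j = a j i) (haC : ∀ i j, ContDiff ℝ 1 (a i j))
    (X : Fin n → ℝ × (Fin n → ℝ) → ℝ) (hX : ∀ k, ContDiff ℝ 1 (X k))
    (g : ℝ × (Fin n → ℝ) → ℝ) (hg : ContDiff ℝ 1 g) (hgX : ∀ p, g p = ∑ k, dd (ex k) (X k) p)
    (A : ℝ × (Fin n → ℝ) → ℝ) (hA : ContDiff ℝ 1 A) (h : ℝ × (Fin n → ℝ) → ℝ) (hh : ContDiff ℝ 1 h)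
    (u v : ℝ × (Fin n → ℝ) → ℝ) (hu : ContDiff ℝ 2 u) (huc : HasCompactSupport u)
    (hv : ContDiff ℝ 2 v) (hvc : HasCompactSupport v)
    (N R : ℝ × (Fin n → ℝ) → ℝ) (hN : Integrable N) (hR : Integrable R) (c0 : ℝ)
    (h1 : ∀ p, c0 * N p ≤ enDens a X g A h u v p)
    (h2 : ∀ p, 2 * ((-(dd (e0 n) v p) - divA a u p - A p * u p)
          * (2 * ∑ k, X k p * dd (ex k) u p + g p * u p + h p * v p)
        + (dd (e0 n) u p - divA a v p - A p * v p)
          * (2 * ∑ k, X k p * dd (ex k) v p + g p * v p - h p * u p)) ≤ R p + c0 * N p) :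
    c0 * ∫ p, N p ≤ ∫ p, R p := by
  have key := energy_identity a ha haC X hX g hg hgX A hA h hh u v hu huc hv hvc
  set F := (fun p => (-(dd (e0 n) v p) - divA a u p - A p * u p)
          * (2 * ∑ k, X k p * dd (ex k) u p + g p * u p + h p * v p)
        + (dd (e0 n) u p - divA a v p - A p * v p)
          * (2 * ∑ k, X k p * dd (ex k) v p + g p * v p - h p * u p)) with hF
  have cu : ∀ w, Continuous (dd w u) := fun w => dd_C0 (hu.of_le (by norm_num)) w
  have cv : ∀ w, Continuous (dd w v) := fun w => dd_C0 (hv.of_le (by norm_num)) w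
  have cdu : Continuous (divA a u) := continuous_finsetSum _ fun l _ => continuous_finsetSum _ fun j _ =>
    dd_C0 ((haC l j).mul (dd_C1 hu _)) _
  have cdv : Continuous (divA a v) := continuous_finsetSum _ fun l _ => continuous_finsetSum _ fun j _ =>
    dd_C0 ((haC l j).mul (dd_C1 hv _)) _
  have cF : Continuous F := by
    have hu0 := hu.continuous
    have hv0 := hv.continuous
    have hA0 := hA.continuous
    have hg0 := hg.continuous
    have hh0 := hh.continuous
    have c1 : Continuous fun p => ∑ k, X k p * dd (ex k) u p :=
      continuous_finsetSum _ fun k _ => (hX k).continuous.mul (cu _)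
    have c2 : Continuous fun p => ∑ k, X k p * dd (ex k) v p :=
      continuous_finsetSum _ fun k _ => (hX k).continuous.mul (cv _)
    have c3 := cu (e0 n)
    have c4 := cv (e0 n)
    rw [hF]
    fun_prop
  have sF : HasCompactSupport F := by
    apply HasCompactSupport.intro (huc.isCompact.union hvc.isCompact)
    intro p hp
    have hp1 : p ∉ tsupport u := fun hh => hp (Or.inl hh)
    have hp2 : p ∉ tsupport v := fun hh => hp (Or.inr hh)
    simp only [hF, dd_zero_of_notMem hp1, dd_zero_of_notMem hp2, image_eq_zero_of_notMem_tsupport hp1,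
      image_eq_zero_of_notMem_tsupport hp2]
    simp
  have iF : Integrable F := cF.integrable_of_hasCompactSupport sF
  have iE := key.integrable iF
  have eq := key.integral_eq
  have m1 : ∫ p, c0 * N p ≤ ∫ p, enDens a X g A h u v p := integral_mono (hN.const_mul _) iE h1
  have m2 : ∫ p, 2 * F p ≤ ∫ p, R p + c0 * N p := integral_mono (iF.const_mul _) (hR.add (hN.const_mul _)) h2
  rw [integral_const_mul] at m1 m2
  rw [integral_add hR (hN.const_mul _), integral_const_mul] at m2
  linarith
end

open Real MeasureTheory

section
variable {n : ℕ}

lemma conj_dd {E : Type*} [NormedAddCommGroup E] [NormedSpace ℝ E] {η u : E → ℝ}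
    (hη : Differentiable ℝ η) (hu : Differentiable ℝ u) (v q : E) :
    dd v (fun p => exp (-η p) * u p) q = exp (-η q) * (dd v u q - dd v η q * u q) := by
  have h1 : Differentiable ℝ (fun p => exp (-η p)) := hη.neg.exp
  have h2 : Differentiable ℝ (fun p => -η p) := hη.neg
  rw [dd_mul h1 hu, dd_exp h2, dd_neg]
  ring

lemma conj_div (a : Fin n → Fin n → ℝ × (Fin n → ℝ) → ℝ)
    (ha : ∀ i j, a i j = a j i) (haC : ∀ i j, ContDiff ℝ 1 (a i j))
    (η u z : ℝ × (Fin n → ℝ) → ℝ) (hη : ContDiff ℝ 2 η) (hu : ContDiff ℝ 2 u)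
    (hz : z = fun p => exp (-η p) * u p) (p : ℝ × (Fin n → ℝ)) :
    exp (η p) * divA a z p = divA a u p - 2 * ∑ k, Wf a η k p * dd (ex k) u p
      - (∑ k, dd (ex k) (Wf a η k) p) * u p + Df a η p * u p := by
  have hηd : Differentiable ℝ η := hη.differentiable (by norm_num)
  have hud : Differentiable ℝ u := hu.differentiable (by norm_num)
  have had : ∀ i j, Differentiable ℝ (a i j) := fun i j => (haC i j).differentiable (by norm_num)
  have hη1 : ∀ v, Differentiable ℝ (dd v η) := fun v => (dd_C1 hη v).differentiable (by norm_num)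
  have hu1 : ∀ v, Differentiable ℝ (dd v u) := fun v => (dd_C1 hu v).differentiable (by norm_num)
  have key : ∀ l j, dd (ex l) (fun q => a l j q * dd (ex j) z q) p = exp (-η p) *
      ((dd (ex l) (fun q => a l j q * dd (ex j) u q) p
        - (dd (ex l) (fun q => a l j q * dd (ex j) η q) p * u p + a l j p * dd (ex j) η p * dd (ex l) u p))
        - dd (ex l) η p * (a l j p * dd (ex j) u p - a l j p * dd (ex j) η p * u p)) := by
    intro l j
    have e1 : (fun q => a l j q * dd (ex j) z q) = fun q => exp (-η q) *
        (a l j q * dd (ex j) u q - (a l j q * dd (ex j) η q) * u q) := by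
      funext q
      rw [hz, conj_dd hηd hud]
      ring
    have d1 : Differentiable ℝ (fun q => a l j q * dd (ex j) u q) := (had l j).mul (hu1 _)
    have d2 : Differentiable ℝ (fun q => a l j q * dd (ex j) η q) := (had l j).mul (hη1 _)
    have d3 : Differentiable ℝ (fun q => a l j q * dd (ex j) η q * u q) := d2.mul hud
    have d4 : Differentiable ℝ (fun q => a l j q * dd (ex j) u q - a l j q * dd (ex j) η q * u q) := d1.sub d3
    rw [e1, conj_dd hηd d4, dd_sub d1 d3, dd_mul d2 hud]
  have hW : ∀ k, dd (ex k) (Wf a η k) p = ∑ j, dd (ex k) (fun q => a k j q * dd (ex j) η q) p := by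
    intro k
    unfold Wf
    exact dd_sum _ (fun j => (had k j).mul (hη1 _)) _ _
  have s1 : ∑ l, ∑ j, dd (ex l) η p * (a l j p * dd (ex j) u p) = ∑ l, ∑ j, a l j p * dd (ex j) η p * dd (ex l) u p := by
    rw [Finset.sum_comm]
    refine Finset.sum_congr rfl fun l _ => Finset.sum_congr rfl fun j _ => ?_
    rw [ha j l]; ring
  have e2 : ∑ k, Wf a η k p * dd (ex k) u p = ∑ l, ∑ j, a l j p * dd (ex j) η p * dd (ex l) u p := by
    unfold Wf
    simp only [Finset.sum_mul]
  have e3 : Df a η p * u p = ∑ l, ∑ j, dd (ex l) η p * (a l j p * dd (ex j) η p * u p) := by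
    unfold Df Wf
    simp only [Finset.sum_mul]
    refine Finset.sum_congr rfl fun l _ => Finset.sum_congr rfl fun j _ => ?_
    ring
  have e4 : (∑ k, dd (ex k) (Wf a η k) p) * u p = ∑ l, ∑ j, dd (ex l) (fun q => a l j q * dd (ex j) η q) p * u p := by
    simp only [hW, Finset.sum_mul]
  have : divA a z p = exp (-η p) * (divA a u p - 2 * ∑ k, Wf a η k p * dd (ex k) u p
      - (∑ k, dd (ex k) (Wf a η k) p) * u p + Df a η p * u p) := by
    rw [e2, e3, e4]
    unfold divA
    simp only [key, ← Finset.mul_sum, mul_sub, Finset.sum_sub_distrib, Finset.sum_add_distrib, mul_add]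
    simp only [← Finset.mul_sum] at s1
    rw [s1]
    simp only [← mul_sub, ← mul_add]
    ring
  rw [this, ← mul_assoc, ← exp_add]
  simp

end

open Real MeasureTheory

section
variable {n : ℕ}

lemma dd_time {c : ℝ → ℝ} (hc : Differentiable ℝ c) (v p : ℝ × (Fin n → ℝ)) :
    dd v (fun q => c q.1) p = v.1 * deriv c p.1 := by
  unfold dd
  have h1 := (hc p.1).hasDerivAt.comp_hasFDerivAt p (hasFDerivAt_fst (𝕜 := ℝ) (E := ℝ) (F := Fin n → ℝ) (p := p))
  have h2 : fderiv ℝ (fun q : ℝ × (Fin n → ℝ) => c q.1) p = _ := h1.fderiv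
  rw [h2]
  simp [mul_comm]

lemma dd_tmul {c : ℝ → ℝ} (hc : Differentiable ℝ c) {f : ℝ × (Fin n → ℝ) → ℝ} (hf : Differentiable ℝ f)
    (v p : ℝ × (Fin n → ℝ)) :
    dd v (fun q => c q.1 * f q) p = v.1 * deriv c p.1 * f p + c p.1 * dd v f p := by
  have : Differentiable ℝ (fun q : ℝ × (Fin n → ℝ) => c q.1) := hc.comp differentiable_fst
  rw [dd_mul this hf, dd_time hc]

lemma dd_ex_tmul {c : ℝ → ℝ} (hc : Differentiable ℝ c) {f : ℝ × (Fin n → ℝ) → ℝ} (hf : Differentiable ℝ f)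
    (k : Fin n) (p : ℝ × (Fin n → ℝ)) :
    dd (ex k) (fun q => c q.1 * f q) p = c p.1 * dd (ex k) f p := by
  rw [dd_tmul hc hf]; simp [ex]

lemma dd_e0_tmul {c : ℝ → ℝ} (hc : Differentiable ℝ c) {f : ℝ × (Fin n → ℝ) → ℝ} (hf : Differentiable ℝ f)
    (p : ℝ × (Fin n → ℝ)) :
    dd (e0 n) (fun q => c q.1 * f q) p = deriv c p.1 * f p + c p.1 * dd (e0 n) f p := by
  rw [dd_tmul hc hf]; simp [e0]

lemma dd_graph {e : ℝ → ℝ} (he : Differentiable ℝ e) {F : ℝ × (ℝ × (Fin n → ℝ)) → ℝ} (hF : Differentiable ℝ F)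
    (v p : ℝ × (Fin n → ℝ)) :
    dd v (fun q => F (e q.1, q)) p = dd (0, v) F (e p.1, p) + v.1 * deriv e p.1 * dd (1, 0) F (e p.1, p) := by
  unfold dd
  have h0 := (he p.1).hasDerivAt.comp_hasFDerivAt p (hasFDerivAt_fst (𝕜 := ℝ) (E := ℝ) (F := Fin n → ℝ) (p := p))
  have h1 : HasFDerivAt (fun q : ℝ × (Fin n → ℝ) => (e q.1, q)) _ p := h0.prodMk (hasFDerivAt_id p)
  have h2 := HasFDerivAt.comp (f := fun q : ℝ × (Fin n → ℝ) => (e q.1, q)) (g := F) p (hF (e p.1, p)).hasFDerivAt h1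
  have h3 : fderiv ℝ (fun q : ℝ × (Fin n → ℝ) => F (e q.1, q)) p = _ := h2.fderiv
  rw [h3]
  have : ((v.1 * deriv e p.1, v) : ℝ × (ℝ × (Fin n → ℝ))) = (0, v) + (v.1 * deriv e p.1) • (1, 0) := by
    ext <;> simp
  have h4 : (fderiv ℝ F (e p.1, p)) (v.1 * deriv e p.1, v) = 
    (fderiv ℝ F (e p.1, p)) (0, v) + v.1 * deriv e p.1 * (fderiv ℝ F (e p.1, p)) (1, 0) := by
    rw [this, map_add, map_smul, smul_eq_mul]
  rw [← h4]
  simp [mul_comm]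

/-- the phase -/
noncomputable def etaF (τ : ℝ) (m : ℝ → ℝ) (E : ℝ × (Fin n → ℝ) → ℝ) (E0 : ℝ) (p : ℝ × (Fin n → ℝ)) : ℝ :=
  (τ * (m p.1)⁻¹) * (E p - E0)

noncomputable def XF (τ κ' : ℝ) (m : ℝ → ℝ) (ρ : (Fin n → ℝ) → ℝ) (W : Fin n → ℝ × (Fin n → ℝ) → ℝ) (k : Fin n)
    (p : ℝ × (Fin n → ℝ)) : ℝ := (τ * (m p.1)⁻¹) * Mol ρ (W k) (κ' * m p.1, p)

noncomputable def gF (τ κ' : ℝ) (m : ℝ → ℝ) (ρ : (Fin n → ℝ) → ℝ) (W : Fin n → ℝ × (Fin n → ℝ) → ℝ)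
    (p : ℝ × (Fin n → ℝ)) : ℝ := ∑ k, (τ * (m p.1)⁻¹) * Mol ρ (dd (ex k) (W k)) (κ' * m p.1, p)

section cons
variable {τ κ' : ℝ} {m : ℝ → ℝ} {ρ : (Fin n → ℝ) → ℝ}
  {W : Fin n → ℝ × (Fin n → ℝ) → ℝ} {E : ℝ × (Fin n → ℝ) → ℝ}

lemma r_smooth (hm : ContDiff ℝ 3 m) (hm0 : ∀ t, 0 < m t) (τ : ℝ) : ContDiff ℝ 3 (fun t => τ * (m t)⁻¹) :=
  contDiff_const.mul (hm.inv fun t => (hm0 t).ne')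

lemma arg_smooth (hm : ContDiff ℝ 3 m) (κ' : ℝ) : ContDiff ℝ 3 (fun p : ℝ × (Fin n → ℝ) => (κ' * m p.1, p)) :=
  (contDiff_const.mul (hm.comp contDiff_fst)).prodMk contDiff_id

lemma eta_C2 (hm : ContDiff ℝ 3 m) (hm0 : ∀ t, 0 < m t) (hE : ContDiff ℝ 2 E) (E0 : ℝ) : ContDiff ℝ 2 (etaF τ m E E0) := by
  unfold etaF
  have := ((r_smooth hm hm0 τ).of_le (m := 2) (by norm_num)).comp (contDiff_fst (E := ℝ) (F := Fin n → ℝ))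
  exact this.mul (hE.sub contDiff_const)

lemma XF_C1 (hm : ContDiff ℝ 3 m) (hm0 : ∀ t, 0 < m t) (hρ : ContDiff ℝ 1 ρ) (hρc : HasCompactSupport ρ) (hW : ∀ k, ContDiff ℝ 1 (W k)) (k : Fin n) : ContDiff ℝ 1 (XF τ κ' m ρ W k) := by
  unfold XF
  have h1 := ((r_smooth hm hm0 τ).of_le (m := 1) (by norm_num)).comp (contDiff_fst (E := ℝ) (F := Fin n → ℝ))
  have h2 := (Mol_C1 hρ.continuous hρc (hW k)).comp ((arg_smooth (n := n) hm κ').of_le (m := 1) (by norm_num))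
  exact h1.mul h2

lemma XF_dx (hm : ContDiff ℝ 3 m) (hm0 : ∀ t, 0 < m t) (hρ : ContDiff ℝ 1 ρ) (hρc : HasCompactSupport ρ) (hW : ∀ k, ContDiff ℝ 1 (W k)) (k l : Fin n) (p : ℝ × (Fin n → ℝ)) :
    dd (ex l) (XF τ κ' m ρ W k) p = (τ * (m p.1)⁻¹) * Mol ρ (dd (ex l) (W k)) (κ' * m p.1, p) := by
  have hr : Differentiable ℝ (fun t => τ * (m t)⁻¹) := (r_smooth hm hm0 τ).differentiable (by norm_num)
  have he : Differentiable ℝ (fun t => κ' * m t) := (hm.differentiable (by norm_num)).const_mul _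
  have hM : Differentiable ℝ (Mol ρ (W k)) := (Mol_C1 hρ.continuous hρc (hW k)).differentiable (by norm_num)
  have hf : Differentiable ℝ (fun p : ℝ × (Fin n → ℝ) => Mol ρ (W k) (κ' * m p.1, p)) :=
    hM.comp ((arg_smooth (n := n) hm κ').differentiable (by norm_num))
  unfold XF
  rw [dd_ex_tmul hr hf, dd_graph he hM, Mol_dd hρ.continuous hρc (hW k)]
  simp [ex]

lemma XF_dt (hm : ContDiff ℝ 3 m) (hm0 : ∀ t, 0 < m t) (hρ : ContDiff ℝ 1 ρ) (hρc : HasCompactSupport ρ) (hW : ∀ k, ContDiff ℝ 1 (W k)) (k : Fin n) (p : ℝ × (Fin n → ℝ)) :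
    dd (e0 n) (XF τ κ' m ρ W k) p = deriv (fun t => τ * (m t)⁻¹) p.1 * Mol ρ (W k) (κ' * m p.1, p)
      + (τ * (m p.1)⁻¹) * (dd (0, e0 n) (Mol ρ (W k)) (κ' * m p.1, p)
        + deriv (fun t => κ' * m t) p.1 * dd (1, 0) (Mol ρ (W k)) (κ' * m p.1, p)) := by
  have hr : Differentiable ℝ (fun t => τ * (m t)⁻¹) := (r_smooth hm hm0 τ).differentiable (by norm_num)
  have he : Differentiable ℝ (fun t => κ' * m t) := (hm.differentiable (by norm_num)).const_mul _
  have hM : Differentiable ℝ (Mol ρ (W k)) := (Mol_C1 hρ.continuous hρc (hW k)).differentiable (by norm_num)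
  have hf : Differentiable ℝ (fun p : ℝ × (Fin n → ℝ) => Mol ρ (W k) (κ' * m p.1, p)) :=
    hM.comp ((arg_smooth (n := n) hm κ').differentiable (by norm_num))
  unfold XF
  rw [dd_e0_tmul hr hf, dd_graph he hM]
  simp [e0]

lemma gF_div (hm : ContDiff ℝ 3 m) (hm0 : ∀ t, 0 < m t) (hρ : ContDiff ℝ 1 ρ) (hρc : HasCompactSupport ρ) (hW : ∀ k, ContDiff ℝ 1 (W k)) (p : ℝ × (Fin n → ℝ)) :
    gF τ κ' m ρ W p = ∑ k, dd (ex k) (XF τ κ' m ρ W k) p := by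
  unfold gF
  simp only [XF_dx hm hm0 hρ hρc hW]

lemma gF_eq (hm0 : ∀ t, 0 < m t) (hρ : ContDiff ℝ 1 ρ) (hρc : HasCompactSupport ρ) (hW : ∀ k, ContDiff ℝ 1 (W k)) (hκ : 0 < κ') : gF τ κ' m ρ W = fun p : ℝ × (Fin n → ℝ) => ∑ k, (-(τ * (m p.1)⁻¹) * (κ' * m p.1)⁻¹) *
    Mol (dd (Pi.single k 1) ρ) (W k) (κ' * m p.1, p) := by
  funext p
  unfold gF
  refine Finset.sum_congr rfl fun k _ => ?_
  rw [Mol_ibp hρ hρc (hW k) k _ (mul_pos hκ (hm0 _)).ne']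
  ring

lemma c_smooth (hm : ContDiff ℝ 3 m) (hm0 : ∀ t, 0 < m t) (hκ : 0 < κ') : ContDiff ℝ 3 (fun t => -(τ * (m t)⁻¹) * (κ' * m t)⁻¹) :=
  (r_smooth hm hm0 τ).neg.mul ((contDiff_const.mul hm).inv fun t => (mul_pos hκ (hm0 t)).ne')

lemma gF_C1 (hm : ContDiff ℝ 3 m) (hm0 : ∀ t, 0 < m t) (hρ : ContDiff ℝ 1 ρ) (hρc : HasCompactSupport ρ) (hW : ∀ k, ContDiff ℝ 1 (W k)) (hκ : 0 < κ') : ContDiff ℝ 1 (gF τ κ' m ρ W) := by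
  rw [gF_eq hm0 hρ hρc hW hκ]
  refine ContDiff.sum fun k _ => ?_
  have h1 := ((c_smooth (τ := τ) hm hm0 hκ).of_le (m := 1) (by norm_num)).comp (contDiff_fst (E := ℝ) (F := Fin n → ℝ))
  have h2 := (Mol_C1 (dd_C0 hρ (Pi.single k 1)) (dd_hcs hρc (Pi.single k 1)) (hW k)).comp
    ((arg_smooth (n := n) hm κ').of_le (m := 1) (by norm_num))
  exact h1.mul h2

lemma gF_dx (hm : ContDiff ℝ 3 m) (hm0 : ∀ t, 0 < m t) (hρ : ContDiff ℝ 1 ρ) (hρc : HasCompactSupport ρ) (hW : ∀ k, ContDiff ℝ 1 (W k)) (hκ : 0 < κ') (l : Fin n) (p : ℝ × (Fin n → ℝ)) :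
    dd (ex l) (gF τ κ' m ρ W) p = ∑ k, (-(τ * (m p.1)⁻¹) * (κ' * m p.1)⁻¹) *
      Mol (dd (Pi.single k 1) ρ) (dd (ex l) (W k)) (κ' * m p.1, p) := by
  rw [gF_eq hm0 hρ hρc hW hκ]
  have hr : Differentiable ℝ (fun t => -(τ * (m t)⁻¹) * (κ' * m t)⁻¹) := (c_smooth hm hm0 hκ).differentiable (by norm_num)
  have he : Differentiable ℝ (fun t => κ' * m t) := (hm.differentiable (by norm_num)).const_mul _
  have hM : ∀ k : Fin n, Differentiable ℝ (Mol (dd (Pi.single k 1) ρ) (W k)) := fun k =>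
    (Mol_C1 (dd_C0 hρ (Pi.single k 1)) (dd_hcs hρc (Pi.single k 1)) (hW k)).differentiable (by norm_num)
  have hf : ∀ k : Fin n, Differentiable ℝ (fun p : ℝ × (Fin n → ℝ) => Mol (dd (Pi.single k 1) ρ) (W k) (κ' * m p.1, p)) :=
    fun k => (hM k).comp ((arg_smooth (n := n) hm κ').differentiable (by norm_num))
  have hr' : Differentiable ℝ (fun p : ℝ × (Fin n → ℝ) => -(τ * (m p.1)⁻¹) * (κ' * m p.1)⁻¹) :=
    hr.comp differentiable_fst
  have hs : ∀ k : Fin n, Differentiable ℝ (fun p : ℝ × (Fin n → ℝ) => -(τ * (m p.1)⁻¹) * (κ' * m p.1)⁻¹ *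
      Mol (dd (Pi.single k 1) ρ) (W k) (κ' * m p.1, p)) := fun k => hr'.mul (hf k)
  rw [dd_sum _ hs]
  refine Finset.sum_congr rfl fun k _ => ?_
  rw [dd_ex_tmul hr (hf k), dd_graph he (hM k), Mol_dd (dd_C0 hρ (Pi.single k 1)) (dd_hcs hρc (Pi.single k 1)) (hW k)]
  simp [ex]

lemma eta_dx (hm : ContDiff ℝ 3 m) (hm0 : ∀ t, 0 < m t) (hE : ContDiff ℝ 2 E) (E0 : ℝ) (l : Fin n) (p : ℝ × (Fin n → ℝ)) :
    dd (ex l) (etaF τ m E E0) p = (τ * (m p.1)⁻¹) * dd (ex l) E p := by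
  have hr : Differentiable ℝ (fun t => τ * (m t)⁻¹) := (r_smooth hm hm0 τ).differentiable (by norm_num)
  have hEd : Differentiable ℝ E := hE.differentiable (by norm_num)
  have hf : Differentiable ℝ (fun p => E p - E0) := hEd.sub_const _
  unfold etaF
  rw [dd_ex_tmul hr hf, dd_sub hEd (differentiable_const _), dd_const, sub_zero]

lemma eta_dt (hm : ContDiff ℝ 3 m) (hm0 : ∀ t, 0 < m t) (hE : ContDiff ℝ 2 E) (E0 : ℝ) : dd (e0 n) (etaF τ m E E0) = fun p => deriv (fun t => τ * (m t)⁻¹) p.1 * (E p - E0)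
    + (τ * (m p.1)⁻¹) * dd (e0 n) E p := by
  have hr : Differentiable ℝ (fun t => τ * (m t)⁻¹) := (r_smooth hm hm0 τ).differentiable (by norm_num)
  have hEd : Differentiable ℝ E := hE.differentiable (by norm_num)
  have hf : Differentiable ℝ (fun p => E p - E0) := hEd.sub_const _
  funext p
  unfold etaF
  rw [dd_e0_tmul hr hf, dd_sub hEd (differentiable_const _), dd_const, sub_zero]

lemma dr_diff (hm : ContDiff ℝ 3 m) (hm0 : ∀ t, 0 < m t) : Differentiable ℝ (deriv (fun t => τ * (m t)⁻¹)) := by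
  have h : ContDiff ℝ 2 (deriv (fun t => τ * (m t)⁻¹)) := by
    have := r_smooth hm hm0 τ
    have h3 : ContDiff ℝ (2 + 1) (fun t => τ * (m t)⁻¹) := by
      exact this.of_le (by norm_num)
    exact (contDiff_succ_iff_deriv.1 h3).2.2
  exact h.differentiable (by norm_num)

lemma eta_dxt (hm : ContDiff ℝ 3 m) (hm0 : ∀ t, 0 < m t) (hE : ContDiff ℝ 2 E) (E0 : ℝ) (l : Fin n) (p : ℝ × (Fin n → ℝ)) :
    dd (ex l) (dd (e0 n) (etaF τ m E E0)) p = deriv (fun t => τ * (m t)⁻¹) p.1 * dd (ex l) E p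
      + (τ * (m p.1)⁻¹) * dd (ex l) (dd (e0 n) E) p := by
  have hr : Differentiable ℝ (fun t => τ * (m t)⁻¹) := (r_smooth hm hm0 τ).differentiable (by norm_num)
  have hr2 := dr_diff (τ := τ) hm hm0
  have hEd : Differentiable ℝ E := hE.differentiable (by norm_num)
  have hf : Differentiable ℝ (fun p => E p - E0) := hEd.sub_const _
  have hf2 : Differentiable ℝ (dd (e0 n) E) := (dd_C1 hE _).differentiable (by norm_num)
  have d1 : Differentiable ℝ (fun p : ℝ × (Fin n → ℝ) => deriv (fun t => τ * (m t)⁻¹) p.1 * (E p - E0)) :=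
    (hr2.comp differentiable_fst).mul hf
  have d2 : Differentiable ℝ (fun p : ℝ × (Fin n → ℝ) => (τ * (m p.1)⁻¹) * dd (e0 n) E p) :=
    (hr.comp differentiable_fst).mul hf2
  rw [eta_dt hm hm0 hE, dd_add d1 d2, dd_ex_tmul hr2 hf, dd_ex_tmul hr hf2, dd_sub hEd (differentiable_const _), dd_const, sub_zero]

lemma eta_dtt (hm : ContDiff ℝ 3 m) (hm0 : ∀ t, 0 < m t) (hE : ContDiff ℝ 2 E) (E0 : ℝ) (p : ℝ × (Fin n → ℝ)) :
    dd (e0 n) (dd (e0 n) (etaF τ m E E0)) p = deriv (deriv (fun t => τ * (m t)⁻¹)) p.1 * (E p - E0)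
      + 2 * (deriv (fun t => τ * (m t)⁻¹) p.1 * dd (e0 n) E p)
      + (τ * (m p.1)⁻¹) * dd (e0 n) (dd (e0 n) E) p := by
  have hr : Differentiable ℝ (fun t => τ * (m t)⁻¹) := (r_smooth hm hm0 τ).differentiable (by norm_num)
  have hr2 := dr_diff (τ := τ) hm hm0
  have hEd : Differentiable ℝ E := hE.differentiable (by norm_num)
  have hf : Differentiable ℝ (fun p => E p - E0) := hEd.sub_const _
  have hf2 : Differentiable ℝ (dd (e0 n) E) := (dd_C1 hE _).differentiable (by norm_num)
  have d1 : Differentiable ℝ (fun p : ℝ × (Fin n → ℝ) => deriv (fun t => τ * (m t)⁻¹) p.1 * (E p - E0)) :=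
    (hr2.comp differentiable_fst).mul hf
  have d2 : Differentiable ℝ (fun p : ℝ × (Fin n → ℝ) => (τ * (m p.1)⁻¹) * dd (e0 n) E p) :=
    (hr.comp differentiable_fst).mul hf2
  rw [eta_dt hm hm0 hE, dd_add d1 d2, dd_e0_tmul hr2 hf, dd_e0_tmul hr hf2, dd_sub hEd (differentiable_const _), dd_const, sub_zero]
  ring

variable {a : Fin n → Fin n → ℝ × (Fin n → ℝ) → ℝ}

lemma Wf_eta (hm : ContDiff ℝ 3 m) (hm0 : ∀ t, 0 < m t) (hE : ContDiff ℝ 2 E) (E0 : ℝ) (k : Fin n) : Wf a (etaF τ m E E0) k = fun p => (τ * (m p.1)⁻¹) * Wf a E k p := by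
  funext p
  unfold Wf
  simp only [eta_dx hm hm0 hE, Finset.mul_sum]
  refine Finset.sum_congr rfl fun j _ => ?_
  ring

lemma Df_eta (hm : ContDiff ℝ 3 m) (hm0 : ∀ t, 0 < m t) (hE : ContDiff ℝ 2 E) (E0 : ℝ) : Df a (etaF τ m E E0) = fun p => (τ * (m p.1)⁻¹) ^ 2 * Df a E p := by
  funext p
  unfold Df
  simp only [Wf_eta hm hm0 hE, eta_dx hm hm0 hE, Finset.mul_sum]
  refine Finset.sum_congr rfl fun j _ => ?_
  ring

lemma Df_eta_dx (hm : ContDiff ℝ 3 m) (hm0 : ∀ t, 0 < m t) (hE : ContDiff ℝ 2 E) (E0 : ℝ) (haC : ∀ i j, ContDiff ℝ 1 (a i j)) (k : Fin n) (p : ℝ × (Fin n → ℝ)) :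
    dd (ex k) (Df a (etaF τ m E E0)) p = (τ * (m p.1)⁻¹) ^ 2 * dd (ex k) (Df a E) p := by
  rw [Df_eta hm hm0 hE]
  have hr : Differentiable ℝ (fun t => (τ * (m t)⁻¹) ^ 2) := ((r_smooth hm hm0 τ).pow 2).differentiable (by norm_num)
  exact dd_ex_tmul hr ((Df_C1 haC hE).differentiable (by norm_num)) k p

lemma Wf_eta_dx (hm : ContDiff ℝ 3 m) (hm0 : ∀ t, 0 < m t) (hE : ContDiff ℝ 2 E) (E0 : ℝ) (haC : ∀ i j, ContDiff ℝ 1 (a i j)) (k : Fin n) (p : ℝ × (Fin n → ℝ)) :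
    dd (ex k) (Wf a (etaF τ m E E0) k) p = (τ * (m p.1)⁻¹) * dd (ex k) (Wf a E k) p := by
  rw [Wf_eta hm hm0 hE]
  have hr : Differentiable ℝ (fun t => τ * (m t)⁻¹) := (r_smooth hm hm0 τ).differentiable (by norm_num)
  exact dd_ex_tmul hr ((Wf_C1 haC hE k).differentiable (by norm_num)) k p

end cons

lemma exists_m (δ : ℝ) (hδ : 0 < δ) : ∃ m : ℝ → ℝ, ContDiff ℝ 3 m ∧ (∀ t, 0 < m t) ∧ ∀ t, δ < t → m t = t := by
  refine ⟨fun t => Real.smoothTransition (t / δ) * t + (1 - Real.smoothTransition (t / δ)), ?_, ?_, ?_⟩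
  · have : ContDiff ℝ 3 (fun t : ℝ => Real.smoothTransition (t / δ)) :=
      Real.smoothTransition.contDiff.comp (contDiff_id.div_const _)
    exact (this.mul contDiff_id).add (contDiff_const.sub this)
  · intro t
    rcases le_or_gt t 0 with h | h
    · have : Real.smoothTransition (t / δ) = 0 :=
        Real.smoothTransition.zero_of_nonpos (div_nonpos_of_nonpos_of_nonneg h hδ.le)
      simp [this]
    · have h1 := Real.smoothTransition.nonneg (t / δ)
      have h2 := Real.smoothTransition.le_one (t / δ)
      rcases h1.eq_or_lt with h3 | h3
      · simp [← h3]
      · have := mul_pos h3 h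
        show 0 < Real.smoothTransition (t / δ) * t + (1 - Real.smoothTransition (t / δ))
        linarith
  · intro t ht
    have : Real.smoothTransition (t / δ) = 1 := Real.smoothTransition.one_of_one_le (by
      rw [le_div_iff₀ hδ]; linarith)
    simp [this]

lemma deriv_r {m : ℝ → ℝ} {δ : ℝ} (hδ : 0 < δ) (h : ∀ t, δ < t → m t = t) (τ t : ℝ) (ht : δ < t) :
    deriv (fun t => τ * (m t)⁻¹) t = -(τ / t ^ 2) := by
  have : (fun t => τ * (m t)⁻¹) =ᶠ[nhds t] fun t => τ * t⁻¹ := by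
    filter_upwards [lt_mem_nhds ht] with x hx
    rw [h x hx]
  rw [this.deriv_eq]
  have h0 : t ≠ 0 := (hδ.trans ht).ne'
  rw [deriv_const_mul _ (differentiableAt_inv h0), deriv_inv]
  field_simp

lemma deriv_rr {m : ℝ → ℝ} {δ : ℝ} (hδ : 0 < δ) (h : ∀ t, δ < t → m t = t) (τ t : ℝ) (ht : δ < t) :
    deriv (deriv (fun t => τ * (m t)⁻¹)) t = 2 * (τ / t ^ 3) := by
  have : deriv (fun t => τ * (m t)⁻¹) =ᶠ[nhds t] fun t => -(τ / t ^ 2) := by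
    filter_upwards [lt_mem_nhds ht] with x hx
    rw [deriv_r hδ h τ x hx]
  rw [this.deriv_eq]
  have h0 : t ≠ 0 := (hδ.trans ht).ne'
  have h1 : HasDerivAt (fun t : ℝ => -(τ / t ^ 2)) (-((0 * t ^ 2 - τ * ((2:ℕ) * t ^ (2-1) * 1)) / (t ^ 2) ^ 2)) t :=
    ((hasDerivAt_const t τ).div ((hasDerivAt_id t).pow 2) (pow_ne_zero 2 h0)).neg
  rw [h1.deriv]
  field_simp
  ring

lemma deriv_m {m : ℝ → ℝ} {δ : ℝ} (h : ∀ t, δ < t → m t = t) (κ t : ℝ) (ht : δ < t) :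
    deriv (fun t => κ * m t) t = κ := by
  have : (fun t => κ * m t) =ᶠ[nhds t] fun t => κ * t := by
    filter_upwards [lt_mem_nhds ht] with x hx
    rw [h x hx]
  rw [this.deriv_eq]
  simp
end

open Real MeasureTheory

section
variable {n : ℕ}

lemma arith1 {C τ t T θ x y z : ℝ} (hC : 0 ≤ C) (hτ : 1 ≤ τ) (ht : 0 < t) (htT : t ≤ T)
    (hθ : C * (2 + 2 * T + T ^ 2) ≤ θ * τ) (hx : |x| ≤ C) (hy : |y| ≤ C) (hz : |z| ≤ C) (k : ℝ) (hk0 : 0 ≤ k) (hk : k ≤ 1) :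
    |-(τ / t ^ 2) * x + τ * t⁻¹ * (y + k * z)| ≤ θ * (τ * t⁻¹) ^ 2 := by
  have h1 : |-(τ / t ^ 2) * x + τ * t⁻¹ * (y + k * z)| ≤ (τ / t ^ 2) * C + τ * t⁻¹ * (C + C) := by
    refine (abs_add_le _ _).trans (add_le_add ?_ ?_)
    · rw [abs_mul, abs_neg, abs_of_nonneg (a := τ / t ^ 2) (by positivity)]
      exact mul_le_mul_of_nonneg_left hx (by positivity)
    · rw [abs_mul, abs_of_nonneg (a := τ * t⁻¹) (by positivity)]
      refine mul_le_mul_of_nonneg_left ((abs_add_le _ _).trans (add_le_add hy ?_)) (by positivity)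
      rw [abs_mul, abs_of_nonneg hk0]
      have := mul_le_mul hk hz (abs_nonneg _) zero_le_one
      linarith
  refine h1.trans ?_
  have e1 : (τ / t ^ 2) * C + τ * t⁻¹ * (C + C) = (τ / t ^ 2) * (C * (1 + 2 * t)) := by field_simp; ring
  have e2 : θ * (τ * t⁻¹) ^ 2 = (τ / t ^ 2) * (θ * τ) := by field_simp
  rw [e1, e2]
  refine mul_le_mul_of_nonneg_left (le_trans ?_ hθ) (by positivity)
  refine mul_le_mul_of_nonneg_left ?_ hC
  nlinarith

lemma arith2 {C τ t T θ x y z : ℝ} (hC : 0 ≤ C) (hτ : 1 ≤ τ) (ht : 0 < t) (htT : t ≤ T)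
    (hθ : C * (2 + 2 * T + T ^ 2) ≤ θ * τ) (hx : |x| ≤ C) (hy : |y| ≤ C) (hz : |z| ≤ C) :
    |2 * (τ / t ^ 3) * x + 2 * (-(τ / t ^ 2) * y) + τ * t⁻¹ * z| ≤ θ * (τ * t⁻¹) ^ 3 := by
  have h1 : |2 * (τ / t ^ 3) * x + 2 * (-(τ / t ^ 2) * y) + τ * t⁻¹ * z| ≤
      2 * (τ / t ^ 3) * C + 2 * (τ / t ^ 2) * C + τ * t⁻¹ * C := by
    refine (abs_add_le _ _).trans (add_le_add ((abs_add_le _ _).trans (add_le_add ?_ ?_)) ?_)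
    · rw [abs_mul, abs_of_nonneg (a := 2 * (τ / t ^ 3)) (by positivity)]
      exact mul_le_mul_of_nonneg_left hx (by positivity)
    · rw [← mul_assoc, abs_mul, mul_neg, abs_neg, abs_of_nonneg (a := 2 * (τ / t ^ 2)) (by positivity)]
      exact mul_le_mul_of_nonneg_left hy (by positivity)
    · rw [abs_mul, abs_of_nonneg (a := τ * t⁻¹) (by positivity)]
      exact mul_le_mul_of_nonneg_left hz (by positivity)
  refine h1.trans ?_
  have e1 : 2 * (τ / t ^ 3) * C + 2 * (τ / t ^ 2) * C + τ * t⁻¹ * C = (τ / t ^ 3) * (C * (2 + 2 * t + t ^ 2)) := by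
    field_simp
  have e2 : θ * (τ * t⁻¹) ^ 3 = (τ / t ^ 3) * (θ * τ * τ) := by field_simp
  rw [e1, e2]
  refine mul_le_mul_of_nonneg_left ?_ (by positivity)
  have h3 : C * (2 + 2 * t + t ^ 2) ≤ C * (2 + 2 * T + T ^ 2) := by gcongr
  have h4 : 0 ≤ C * (2 + 2 * t + t ^ 2) := by positivity
  have h5 : θ * τ * 1 ≤ θ * τ * τ := mul_le_mul_of_nonneg_left hτ (by linarith)
  linarith

lemma qForm_scale (A : Fin n → Fin n → ℝ) (AK : Fin n → Fin n → Fin n → ℝ)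
    (W : Fin n → ℝ) (WW : Fin n → Fin n → ℝ) (ξ : Fin n → ℝ) (c : ℝ) :
    qForm A AK (fun k => c * W k) (fun l k => c * WW l k) ξ = c * qForm A AK W WW ξ := by
  unfold qForm
  simp only [mul_sub, Finset.mul_sum]
  congr 1 <;> refine Finset.sum_congr rfl fun l _ => Finset.sum_congr rfl fun j _ => Finset.sum_congr rfl fun k _ => ?_ <;> ring

variable {a : Fin n → Fin n → ℝ × (Fin n → ℝ) → ℝ} {E : ℝ × (Fin n → ℝ) → ℝ} {E0 : ℝ}
    {ρ : (Fin n → ℝ) → ℝ} {K : Set (ℝ × (Fin n → ℝ))} {C ε1 κ : ℝ}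

lemma low_at (B : Bnds a E E0 ρ K C ε1 κ) (haC : ∀ i j, ContDiff ℝ 1 (a i j)) (hE : ContDiff ℝ 2 E)
    (hρ : ContDiff ℝ 1 ρ) (hρc : HasCompactSupport ρ) {m : ℝ → ℝ} (hm : ContDiff ℝ 3 m) (hm0 : ∀ t, 0 < m t)
    {δ : ℝ} (hδ : 0 < δ) (hmδ : ∀ t, δ < t → m t = t) {T τ Kc θ : ℝ} (hτ : 1 ≤ τ) (hKc : 0 < Kc)
    (hKτ : Kc ≤ τ) (hKT : Kc * T ≤ ε1 * τ) (hθ0 : 0 ≤ θ) (hθ1 : n * C ≤ θ * Kc) (hθ2 : C * (2 + 2 * T + T ^ 2) ≤ θ * τ)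
    (u v : ℝ × (Fin n → ℝ) → ℝ) (p : ℝ × (Fin n → ℝ)) (hp : p ∈ K) (hpδ : δ < p.1) (hpT : p.1 ≤ T) :
    (κ - (3 * n ^ 2 * C + n + 1) * θ) *
      Nrg (τ * (m p.1)⁻¹) (fun j => dd (ex j) u p) (fun j => dd (ex j) v p) (u p) (v p)
      ≤ enDens a (XF τ (Kc / τ) m ρ (Wf a E)) (gF τ (Kc / τ) m ρ (Wf a E)) (Df a (etaF τ m E E0))
          (dd (e0 n) (etaF τ m E E0)) u v p := by
  have hW := Wf_C1 haC hE
  have hC0 : 0 ≤ C := zero_le_one.trans B.hC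
  have ht : 0 < p.1 := hδ.trans hpδ
  have hτ0 : 0 < τ := by linarith
  have hκ' : 0 < Kc / τ := by positivity
  have hmt := hmδ p.1 hpδ
  have hε0 : 0 ≤ Kc / τ * p.1 := by positivity
  have hε1 : Kc / τ * p.1 ≤ ε1 := by
    rw [div_mul_eq_mul_div, div_le_iff₀ hτ0]
    exact (mul_le_mul_of_nonneg_left hpT hKc.le).trans hKT
  have hs : 0 ≤ τ * p.1⁻¹ := by positivity
  have hk1 : Kc / τ ≤ 1 := by rw [div_le_one hτ0]; exact hKτ
  rw [hmt]
  apply enDens_low a _ _ _ _ u v p _ C θ κ hs hC0 hθ0 (B.ba p hp)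
  · intro l
    rw [gF_dx hm hm0 hρ hρc hW hκ', hmt]
    have : |∑ k, -(τ * p.1⁻¹) * (Kc / τ * p.1)⁻¹ * Mol (dd (Pi.single k 1) ρ) (dd (ex l) (Wf a E k)) (Kc / τ * p.1, p)|
        ≤ n * (τ * p.1⁻¹ * (Kc / τ * p.1)⁻¹ * C) := by
      refine abs_sum_le_card _ _ fun k => ?_
      rw [abs_mul, neg_mul, abs_neg, abs_of_nonneg (a := τ * p.1⁻¹ * (Kc / τ * p.1)⁻¹) (by positivity)]
      exact mul_le_mul_of_nonneg_left (B.bWx p hp _ hε0 hε1 k l) (by positivity)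
    refine this.trans ?_
    have e1 : n * (τ * p.1⁻¹ * (Kc / τ * p.1)⁻¹ * C) = (τ * p.1⁻¹) ^ 2 * ((n * C) / Kc) := by
      field_simp
    rw [e1, mul_comm]
    refine mul_le_mul_of_nonneg_right ?_ (by positivity)
    rw [div_le_iff₀ hKc]; exact hθ1
  · intro l
    rw [XF_dt hm hm0 hρ hρc hW, hmt, deriv_r hδ hmδ τ _ hpδ, deriv_m hmδ _ _ hpδ]
    exact arith1 hC0 hτ ht hpT hθ2 (B.bW p hp _ hε0 hε1 l) (B.bWt p hp _ hε0 hε1 l) (B.bWe p hp _ hε0 hε1 l) _ hκ'.le hk1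
  · intro l
    rw [eta_dxt hm hm0 hE, hmt, deriv_r hδ hmδ τ _ hpδ]
    have := arith1 hC0 hτ ht hpT hθ2 (B.bEx p hp l) (B.bExt p hp l) (B.bExt p hp l) 0 le_rfl zero_le_one
    simpa using this
  · rw [eta_dtt hm hm0 hE, hmt, deriv_r hδ hmδ τ _ hpδ, deriv_rr hδ hmδ τ _ hpδ]
    exact arith2 hC0 hτ ht hpT hθ2 (B.bE0 p hp) (B.bEt p hp) (B.bEtt p hp)
  · intro ξ
    simp only [XF_dx hm hm0 hρ hρc hW]
    unfold XF
    rw [hmt, qForm_scale]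
    have := B.pos1 p hp _ hε0 hε1 ξ
    have := mul_le_mul_of_nonneg_left this hs
    linarith
  · simp only [Df_eta_dx hm hm0 hE _ haC]
    unfold XF
    rw [hmt]
    have h1 := B.pos2 p hp _ hε0 hε1
    have h2 := mul_le_mul_of_nonneg_left h1 (show 0 ≤ (τ * p.1⁻¹) ^ 3 by positivity)
    rw [Finset.mul_sum] at h2
    rw [mul_comm]
    refine h2.trans (le_of_eq (Finset.sum_congr rfl fun k _ => ?_))
    ring

/-- error bound -/
lemma err_at {s c1 c2 : ℝ} (hs : 0 < s) (Y X : Fin n → ℝ) (d g : ℝ) (hX : ∀ k, |Y k - X k| ≤ c1)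
    (hd : |d - g| ≤ c2 * s) (U : Fin n → ℝ) (u : ℝ) :
    s * (2 * ∑ k, (Y k - X k) * U k + (d - g) * u) ^ 2 ≤ (8 * n * c1 ^ 2 + 2 * c2 ^ 2) * (s * ∑ j, U j ^ 2 + s ^ 3 * u ^ 2) := by
  have h1 : (∑ k, (Y k - X k) * U k) ^ 2 ≤ n * c1 ^ 2 * ∑ j, U j ^ 2 := by
    refine (Finset.sum_mul_sq_le_sq_mul_sq _ _ _).trans ?_
    refine mul_le_mul_of_nonneg_right ?_ (Finset.sum_nonneg fun i _ => sq_nonneg _)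
    refine (Finset.sum_le_card_nsmul _ _ (c1 ^ 2) fun k _ => ?_).trans (by simp)
    rw [← sq_abs]
    exact pow_le_pow_left₀ (abs_nonneg _) (hX k) 2
  have h2 : ((d - g) * u) ^ 2 ≤ c2 ^ 2 * s ^ 2 * u ^ 2 := by
    rw [mul_pow, ← mul_pow c2 s]
    refine mul_le_mul_of_nonneg_right ?_ (sq_nonneg _)
    rw [← sq_abs]
    exact pow_le_pow_left₀ (abs_nonneg _) hd 2
  set P := ∑ k, (Y k - X k) * U k
  set R := (d - g) * u
  set S := ∑ j, U j ^ 2 with hS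
  have hS0 : 0 ≤ S := Finset.sum_nonneg fun i _ => sq_nonneg _
  have h3 : (2 * P + R) ^ 2 ≤ 8 * P ^ 2 + 2 * R ^ 2 := by nlinarith [sq_nonneg (2 * P - R)]
  have h4 : (2 * P + R) ^ 2 ≤ 8 * n * c1 ^ 2 * S + 2 * c2 ^ 2 * s ^ 2 * u ^ 2 := by linarith
  have h5 := mul_le_mul_of_nonneg_left h4 hs.le
  have h6 : 0 ≤ 8 * n * c1 ^ 2 * (s ^ 3 * u ^ 2) + 2 * c2 ^ 2 * (s * S) := by positivity
  calc _ ≤ _ := h5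
    _ ≤ _ := by nlinarith

end

open Real MeasureTheory

section
variable {n : ℕ}

lemma cross_alg {R1 R2 I1 I2 F1 F2 e1 e2 D : ℝ} (h1 : F1 = R1 + R2 + e1) (h2 : F2 = I1 + I2 + e2)
    (he : 2 * (e1 ^ 2 + e2 ^ 2) ≤ D) : 2 * (R1 * R2 + I1 * I2) ≤ 2 * (F1 ^ 2 + F2 ^ 2) + D := by
  have a1 : R1 + R2 = F1 - e1 := by linarith
  have a2 : I1 + I2 = F2 - e2 := by linarith
  have b1 : 2 * (R1 * R2) ≤ (R1 + R2) ^ 2 := by nlinarith [sq_nonneg R1, sq_nonneg R2]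
  have b2 : 2 * (I1 * I2) ≤ (I1 + I2) ^ 2 := by nlinarith [sq_nonneg I1, sq_nonneg I2]
  rw [a1] at b1
  rw [a2] at b2
  nlinarith [sq_nonneg (F1 + e1), sq_nonneg (F2 + e2)]

lemma back_alg {s C e : ℝ} (hs : 0 ≤ s) (z u : ℝ) (Z U D : Fin n → ℝ)
    (h0 : u = e * z) (h1 : ∀ j, e * Z j = U j - s * D j * u) (hD : ∀ j, |D j| ≤ C) :
    (s * ∑ j, Z j ^ 2 + s ^ 3 * z ^ 2) * e ^ 2 ≤ (3 + 2 * n * C ^ 2) * (s * ∑ j, U j ^ 2 + s ^ 3 * u ^ 2) := by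
  have e1 : (s * ∑ j, Z j ^ 2 + s ^ 3 * z ^ 2) * e ^ 2 = s * ∑ j, (e * Z j) ^ 2 + s ^ 3 * u ^ 2 := by
    rw [h0]
    simp only [mul_pow, ← Finset.mul_sum]
    ring
  have e2 : ∑ j, (e * Z j) ^ 2 ≤ 2 * ∑ j, U j ^ 2 + n * (2 * (s ^ 2 * C ^ 2 * u ^ 2)) := by
    have : ∑ j, (e * Z j) ^ 2 ≤ ∑ j, (2 * U j ^ 2 + 2 * (s ^ 2 * C ^ 2 * u ^ 2)) := by
      refine Finset.sum_le_sum fun j _ => ?_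
      rw [h1]
      have k1 : (U j - s * D j * u) ^ 2 ≤ 2 * U j ^ 2 + 2 * (s * D j * u) ^ 2 := by
        nlinarith [sq_nonneg (U j + s * D j * u)]
      have k2 : D j ^ 2 ≤ C ^ 2 := by
        rw [← sq_abs]; exact pow_le_pow_left₀ (abs_nonneg _) (hD j) 2
      have k3 : (s * D j * u) ^ 2 ≤ s ^ 2 * C ^ 2 * u ^ 2 := by
        rw [mul_pow, mul_pow]; gcongr
      linarith
    rw [Finset.sum_add_distrib, ← Finset.mul_sum] at this
    simpa using this
  rw [e1]
  have h3 := mul_le_mul_of_nonneg_left e2 hs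
  have hS0 : 0 ≤ ∑ j, U j ^ 2 := Finset.sum_nonneg fun i _ => sq_nonneg _
  have h4 : 0 ≤ (1 + 2 * n * C ^ 2) * (s * ∑ j, U j ^ 2) := by positivity
  have h5 : 0 ≤ s ^ 3 * u ^ 2 := by positivity
  nlinarith

variable {a : Fin n → Fin n → ℝ × (Fin n → ℝ) → ℝ} {E : ℝ × (Fin n → ℝ) → ℝ} {E0 : ℝ}
    {ρ : (Fin n → ℝ) → ℝ} {K : Set (ℝ × (Fin n → ℝ))} {C ε1 κ : ℝ}

lemma core_fixed (B : Bnds a E E0 ρ K C ε1 κ) (ha : ∀ i j, a i j = a j i)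
    (haC : ∀ i j, ContDiff ℝ 1 (a i j)) (hE : ContDiff ℝ 2 E)
    (hρ : ContDiff ℝ 1 ρ) (hρc : HasCompactSupport ρ) {m : ℝ → ℝ} (hm : ContDiff ℝ 3 m) (hm0 : ∀ t, 0 < m t)
    {δ : ℝ} (hδ : 0 < δ) (hmδ : ∀ t, δ < t → m t = t) {T τ Kc θ : ℝ} (hτ : 1 ≤ τ) (hKc : 0 < Kc)
    (hKτ : Kc ≤ τ) (hKT : Kc * T ≤ ε1 * τ) (hθ0 : 0 ≤ θ) (hθ1 : n * C ≤ θ * Kc) (hθ2 : C * (2 + 2 * T + T ^ 2) ≤ θ * τ)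
    (hθκ : (3 * n ^ 2 * C + n + 1) * θ ≤ κ / 2)
    (hτ4 : 2 * (8 * n * (C * Kc) ^ 2 + 2 * (n * (2 * C)) ^ 2) * T ≤ κ / 2 * τ)
    (hK : ∀ p ∈ K, p.1 ≤ T)
    (z1 z2 : ℝ × (Fin n → ℝ) → ℝ) (hz1 : ContDiff ℝ 2 z1) (hz2 : ContDiff ℝ 2 z2)
    (hc1 : HasCompactSupport z1) (hc2 : HasCompactSupport z2)
    (hs1 : ∀ p ∈ tsupport z1, p ∈ K ∧ δ < p.1) (hs2 : ∀ p ∈ tsupport z2, p ∈ K ∧ δ < p.1) :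
    ∫ p : ℝ × (Fin n → ℝ), ((τ / p.1) * (∑ j, dd (ex j) z1 p ^ 2 + ∑ j, dd (ex j) z2 p ^ 2)
        + (τ / p.1) ^ 3 * (z1 p ^ 2 + z2 p ^ 2)) * exp (2 * τ * ((E p - E0) / p.1))
     ≤ ((3 + 2 * n * C ^ 2) * (4 / κ)) * ∫ p : ℝ × (Fin n → ℝ), ((-(dd (e0 n) z2 p) - divA a z1 p) ^ 2
        + (dd (e0 n) z1 p - divA a z2 p) ^ 2) * exp (2 * τ * ((E p - E0) / p.1)) := by
  have hC0 : 0 ≤ C := zero_le_one.trans B.hC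
  have hκ := B.hκ
  have hτ0 : 0 < τ := by linarith
  have hκ' : 0 < Kc / τ := by positivity
  set η := etaF τ m E E0 with hη
  have hη2 : ContDiff ℝ 2 η := eta_C2 hm hm0 hE E0
  have hηd : Differentiable ℝ η := hη2.differentiable (by norm_num)
  set u := fun p => exp (η p) * z1 p with hu
  set v := fun p => exp (η p) * z2 p with hv
  have hu2 : ContDiff ℝ 2 u := hη2.exp.mul hz1
  have hv2 : ContDiff ℝ 2 v := hη2.exp.mul hz2
  have hz1u : z1 = fun p => exp (-η p) * u p := by
    funext p; simp only [hu]; rw [← mul_assoc, ← exp_add]; simp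
  have hz2v : z2 = fun p => exp (-η p) * v p := by
    funext p; simp only [hv]; rw [← mul_assoc, ← exp_add]; simp
  have huc : HasCompactSupport u := hc1.mul_left
  have hvc : HasCompactSupport v := hc2.mul_left
  have tsu : tsupport u ⊆ tsupport z1 := tsupport_mul_subset_right
  have tsv : tsupport v ⊆ tsupport z2 := tsupport_mul_subset_right
  have hW := Wf_C1 haC hE
  set X := XF τ (Kc / τ) m ρ (Wf a E) with hX
  set g := gF τ (Kc / τ) m ρ (Wf a E) with hg
  set A := Df a η with hA
  set h := dd (e0 n) η with hh
  set N : ℝ × (Fin n → ℝ) → ℝ := fun p => Nrg (τ * (m p.1)⁻¹) (fun j => dd (ex j) u p) (fun j => dd (ex j) v p) (u p) (v p) with hN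
  set R : ℝ × (Fin n → ℝ) → ℝ := fun p => 2 * ((exp (η p) * (-(dd (e0 n) z2 p) - divA a z1 p)) ^ 2
      + (exp (η p) * (dd (e0 n) z1 p - divA a z2 p)) ^ 2) with hR
  have cS : IsCompact (tsupport z1 ∪ tsupport z2) := hc1.isCompact.union hc2.isCompact
  have hS : ∀ p ∈ tsupport z1 ∪ tsupport z2, p ∈ K ∧ δ < p.1 := by
    rintro p (hp | hp)
    · exact hs1 p hp
    · exact hs2 p hp
  -- vanishing outside
  have zz1 : ∀ p, p ∉ tsupport z1 ∪ tsupport z2 → z1 p = 0 ∧ z2 p = 0 ∧ u p = 0 ∧ v p = 0 ∧ (∀ w, dd w z1 p = 0)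
      ∧ (∀ w, dd w z2 p = 0) ∧ (∀ w, dd w u p = 0) ∧ (∀ w, dd w v p = 0) := by
    intro p hp
    have hp1 : p ∉ tsupport z1 := fun hh => hp (Or.inl hh)
    have hp2 : p ∉ tsupport z2 := fun hh => hp (Or.inr hh)
    exact ⟨image_eq_zero_of_notMem_tsupport hp1, image_eq_zero_of_notMem_tsupport hp2,
      image_eq_zero_of_notMem_tsupport fun hh => hp1 (tsu hh), image_eq_zero_of_notMem_tsupport fun hh => hp2 (tsv hh),
      fun w => dd_zero_of_notMem hp1 w, fun w => dd_zero_of_notMem hp2 w,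
      fun w => dd_zero_of_notMem (fun hh => hp1 (tsu hh)) w, fun w => dd_zero_of_notMem (fun hh => hp2 (tsv hh)) w⟩
  have divz : ∀ (w : ℝ × (Fin n → ℝ) → ℝ) p, p ∉ tsupport w → divA a w p = 0 := by
    intro w p hp
    unfold divA
    refine Finset.sum_eq_zero fun l _ => Finset.sum_eq_zero fun j _ => dd_zero_of_notMem (fun hh => hp ?_) _
    have h1 : tsupport (fun q => a l j q * dd (ex j) w q) ⊆ tsupport (dd (ex j) w) := tsupport_mul_subset_right
    have h2 : tsupport (dd (ex j) w) ⊆ tsupport w := by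
      apply closure_minimal _ (isClosed_tsupport _)
      intro q hq
      by_contra hq'
      exact hq (dd_zero_of_notMem hq' _)
    exact h2 (h1 hh)
  have dz1 : ∀ p, p ∉ tsupport z1 ∪ tsupport z2 → divA a z1 p = 0 := fun p hp => divz z1 p fun hh => hp (Or.inl hh)
  have dz2 : ∀ p, p ∉ tsupport z1 ∪ tsupport z2 → divA a z2 p = 0 := fun p hp => divz z2 p fun hh => hp (Or.inr hh)
  -- integrability
  have cdd : ∀ (w : ℝ × (Fin n → ℝ) → ℝ) (y), ContDiff ℝ 2 w → Continuous (dd y w) := fun w y hw => dd_C0 (hw.of_le (by norm_num)) y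
  have cdiv : ∀ (w : ℝ × (Fin n → ℝ) → ℝ), ContDiff ℝ 2 w → Continuous (divA a w) := fun w hw =>
    continuous_finsetSum _ fun l _ => continuous_finsetSum _ fun j _ => dd_C0 ((haC l j).mul (dd_C1 hw _)) _
  have cN : Continuous N := by
    have c1 : Continuous fun p : ℝ × (Fin n → ℝ) => τ * (m p.1)⁻¹ := (r_smooth hm hm0 τ).continuous.comp continuous_fst
    have c2 : Continuous fun p => ∑ j, dd (ex j) u p ^ 2 := continuous_finsetSum _ fun j _ => (cdd _ _ hu2).pow 2
    have c3 : Continuous fun p => ∑ j, dd (ex j) v p ^ 2 := continuous_finsetSum _ fun j _ => (cdd _ _ hv2).pow 2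
    simp only [hN, Nrg]
    exact (c1.mul (c2.add c3)).add ((c1.pow 3).mul ((hu2.continuous.pow 2).add (hv2.continuous.pow 2)))
  have cR : Continuous R := by
    have c0 : Continuous fun p => exp (η p) := hη2.exp.continuous
    exact continuous_const.mul (((c0.mul ((cdd _ _ hz2).neg.sub (cdiv _ hz1))).pow 2).add ((c0.mul ((cdd _ _ hz1).sub (cdiv _ hz2))).pow 2))
  have iN : Integrable N := by
    refine cN.integrable_of_hasCompactSupport (HasCompactSupport.intro cS fun p hp => ?_)
    obtain ⟨k1, k2, k3, k4, k5, k6, k7, k8⟩ := zz1 p hp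
    simp only [hN, Nrg, k3, k4, k7, k8]; simp
  have iR : Integrable R := by
    refine cR.integrable_of_hasCompactSupport (HasCompactSupport.intro cS fun p hp => ?_)
    obtain ⟨k1, k2, k3, k4, k5, k6, k7, k8⟩ := zz1 p hp
    simp only [hR, dz1 p hp, dz2 p hp, k5, k6]; simp
  have spos : ∀ p : ℝ × (Fin n → ℝ), 0 < τ * (m p.1)⁻¹ := fun p => mul_pos hτ0 (inv_pos.2 (hm0 _))
  have N0 : ∀ p, 0 ≤ N p := fun p => Nrg_nonneg (spos p).le _ _ _ _
  have main : κ / 2 * ∫ p, N p ≤ ∫ p, R p := by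
    refine energy_ineq a ha haC X (XF_C1 hm hm0 hρ hρc hW) g (gF_C1 hm hm0 hρ hρc hW hκ') (gF_div hm hm0 hρ hρc hW) A
      (Df_C1 haC hη2) h (dd_C1 hη2 _) u v hu2 huc hv2 hvc N R iN iR (κ / 2) ?_ ?_
    · intro p
      by_cases hp : p ∈ tsupport z1 ∪ tsupport z2
      · obtain ⟨hpK, hpδ⟩ := hS p hp
        refine le_trans ?_ (low_at B haC hE hρ hρc hm hm0 hδ hmδ hτ hKc hKτ hKT hθ0 hθ1 hθ2 u v p hpK hpδ (hK p hpK))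
        refine mul_le_mul_of_nonneg_right ?_ (N0 p)
        linarith
      · obtain ⟨k1, k2, k3, k4, k5, k6, k7, k8⟩ := zz1 p hp
        simp only [hN, Nrg, enDens, k3, k4, k7, k8]; simp
    · intro p
      by_cases hp : p ∈ tsupport z1 ∪ tsupport z2
      · obtain ⟨hpK, hpδ⟩ := hS p hp
        have ht : 0 < p.1 := hδ.trans hpδ
        have hmt := hmδ p.1 hpδ
        have hε0 : 0 ≤ Kc / τ * p.1 := by positivity
        have hε1 : Kc / τ * p.1 ≤ ε1 := by
          rw [div_mul_eq_mul_div, div_le_iff₀ hτ0]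
          exact (mul_le_mul_of_nonneg_left (hK p hpK) hKc.le).trans hKT
        have hsp : 0 < τ * p.1⁻¹ := by positivity
        have d1 := conj_div a ha haC η u z1 hη2 hu2 hz1u p
        have d2 := conj_div a ha haC η v z2 hη2 hv2 hz2v p
        have d3 : exp (η p) * dd (e0 n) z1 p = dd (e0 n) u p - h p * u p := by
          rw [hz1u, conj_dd hηd (hu2.differentiable (by norm_num)), ← mul_assoc, ← exp_add]; simp [hh]
        have d4 : exp (η p) * dd (e0 n) z2 p = dd (e0 n) v p - h p * v p := by
          rw [hz2v, conj_dd hηd (hv2.differentiable (by norm_num)), ← mul_assoc, ← exp_add]; simp [hh]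
        have hXY : ∀ k, |Wf a η k p - X k p| ≤ C * Kc := by
          intro k
          rw [hη, Wf_eta hm hm0 hE, hX]
          unfold XF
          beta_reduce
          rw [hmt, ← mul_sub, abs_mul, abs_of_pos hsp, abs_sub_comm]
          have := mul_le_mul_of_nonneg_left (B.bWc p hpK _ hε0 hε1 k) hsp.le
          refine this.trans (le_of_eq ?_)
          field_simp
        have hdg : |(∑ k, dd (ex k) (Wf a η k) p) - g p| ≤ (n * (2 * C)) * (τ * p.1⁻¹) := by
          rw [hη, hg]
          unfold gF
          simp only [Wf_eta_dx hm hm0 hE _ haC]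
          rw [hmt, ← Finset.sum_sub_distrib, mul_assoc]
          refine abs_sum_le_card _ _ fun k => ?_
          rw [← mul_sub, abs_mul, abs_of_pos hsp, mul_comm]
          refine mul_le_mul_of_nonneg_right ?_ hsp.le
          refine (abs_sub _ _).trans ?_
          have := B.bWd p hpK _ hε0 hε1 k
          have := B.bWd' p hpK k
          linarith
        have er1 := err_at hsp (fun k => Wf a η k p) (fun k => X k p) _ _ hXY hdg (fun j => dd (ex j) u p) (u p)
        have er2 := err_at hsp (fun k => Wf a η k p) (fun k => X k p) _ _ hXY hdg (fun j => dd (ex j) v p) (v p)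
        refine cross_alg (e1 := 2 * ∑ k, (Wf a η k p - X k p) * dd (ex k) u p + ((∑ k, dd (ex k) (Wf a η k) p) - g p) * u p)
          (e2 := 2 * ∑ k, (Wf a η k p - X k p) * dd (ex k) v p + ((∑ k, dd (ex k) (Wf a η k) p) - g p) * v p) ?_ ?_ ?_
        · rw [mul_sub, d1, mul_neg, d4]
          simp only [sub_mul, Finset.sum_sub_distrib]
          ring
        · rw [mul_sub, d2, d3]
          simp only [sub_mul, Finset.sum_sub_distrib]
          ring
        · set e1 := 2 * ∑ k, (Wf a η k p - X k p) * dd (ex k) u p + ((∑ k, dd (ex k) (Wf a η k) p) - g p) * u p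
          set e2 := 2 * ∑ k, (Wf a η k p - X k p) * dd (ex k) v p + ((∑ k, dd (ex k) (Wf a η k) p) - g p) * v p
          set c4 := 8 * n * (C * Kc) ^ 2 + 2 * (n * (2 * C)) ^ 2 with hc4
          have hNp : N p = (τ * p.1⁻¹ * ∑ j, dd (ex j) u p ^ 2 + (τ * p.1⁻¹) ^ 3 * u p ^ 2)
             + (τ * p.1⁻¹ * ∑ j, dd (ex j) v p ^ 2 + (τ * p.1⁻¹) ^ 3 * v p ^ 2) := by
            simp only [hN, Nrg, hmt]; ring
          have k1 : (τ * p.1⁻¹) * (2 * (e1 ^ 2 + e2 ^ 2)) ≤ 2 * c4 * N p := by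
            rw [hNp]
            linarith
          have k2 : 2 * c4 ≤ κ / 2 * (τ * p.1⁻¹) := by
            rw [← div_eq_mul_inv, ← mul_div_assoc, le_div_iff₀ ht]
            refine le_trans ?_ hτ4
            refine mul_le_mul_of_nonneg_left (hK p hpK) (by positivity)
          have k3 := mul_le_mul_of_nonneg_right k2 (N0 p)
          refine le_of_mul_le_mul_left (k1.trans (k3.trans (le_of_eq ?_))) hsp
          ring
      · obtain ⟨k1, k2, k3, k4, k5, k6, k7, k8⟩ := zz1 p hp
        have : 0 ≤ R p := by simp only [hR]; positivity
        have := mul_nonneg (show 0 ≤ κ / 2 by positivity) (N0 p)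
        simp only [k3, k4, k7, k8]
        simp
        linarith
  have eR : ∀ p, R p = 2 * (((-(dd (e0 n) z2 p) - divA a z1 p) ^ 2
        + (dd (e0 n) z1 p - divA a z2 p) ^ 2) * exp (2 * τ * ((E p - E0) / p.1))) := by
    intro p
    by_cases hp : p ∈ tsupport z1 ∪ tsupport z2
    · obtain ⟨hpK, hpδ⟩ := hS p hp
      have : exp (2 * τ * ((E p - E0) / p.1)) = exp (η p) ^ 2 := by
        rw [← exp_nat_mul]
        congr 1
        simp only [hη, etaF, hmδ p.1 hpδ]
        push_cast
        ring
      rw [this]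
      simp only [hR]; ring
    · obtain ⟨k1, k2, k3, k4, k5, k6, k7, k8⟩ := zz1 p hp
      simp only [hR, dz1 p hp, dz2 p hp, k5, k6]; simp
  have eL : ∀ p, ((τ / p.1) * (∑ j, dd (ex j) z1 p ^ 2 + ∑ j, dd (ex j) z2 p ^ 2)
        + (τ / p.1) ^ 3 * (z1 p ^ 2 + z2 p ^ 2)) * exp (2 * τ * ((E p - E0) / p.1)) ≤ (3 + 2 * n * C ^ 2) * N p ∧
        0 ≤ ((τ / p.1) * (∑ j, dd (ex j) z1 p ^ 2 + ∑ j, dd (ex j) z2 p ^ 2)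
        + (τ / p.1) ^ 3 * (z1 p ^ 2 + z2 p ^ 2)) * exp (2 * τ * ((E p - E0) / p.1)) := by
    intro p
    by_cases hp : p ∈ tsupport z1 ∪ tsupport z2
    · obtain ⟨hpK, hpδ⟩ := hS p hp
      have ht : 0 < p.1 := hδ.trans hpδ
      have hmt := hmδ p.1 hpδ
      have hsp : 0 < τ * p.1⁻¹ := by positivity
      have he : exp (2 * τ * ((E p - E0) / p.1)) = exp (η p) ^ 2 := by
        rw [← exp_nat_mul]
        congr 1
        simp only [hη, etaF, hmδ p.1 hpδ]
        push_cast
        ring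
      constructor
      · rw [he, div_eq_mul_inv]
        have hd : ∀ j, dd (ex j) η p = (τ * p.1⁻¹) * dd (ex j) E p := by
          intro j; rw [hη, eta_dx hm hm0 hE, hmt]
        have b1 := back_alg hsp.le (C := C) (e := exp (η p)) (z1 p) (u p) (fun j => dd (ex j) z1 p) (fun j => dd (ex j) u p) (fun j => dd (ex j) E p) rfl
          (fun j => by
            show exp (η p) * dd (ex j) z1 p = dd (ex j) u p - _ 
            rw [← hd, hz1u, conj_dd hηd (hu2.differentiable (by norm_num)), ← mul_assoc, ← exp_add]; simp)
          (B.bEx p hpK)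
        have b2 := back_alg hsp.le (C := C) (e := exp (η p)) (z2 p) (v p) (fun j => dd (ex j) z2 p) (fun j => dd (ex j) v p) (fun j => dd (ex j) E p) rfl
          (fun j => by
            show exp (η p) * dd (ex j) z2 p = dd (ex j) v p - _ 
            rw [← hd, hz2v, conj_dd hηd (hv2.differentiable (by norm_num)), ← mul_assoc, ← exp_add]; simp)
          (B.bEx p hpK)
        simp only [hN, Nrg, hmt]
        linarith
      · have : 0 < τ / p.1 := by positivity
        positivity
    · obtain ⟨k1, k2, k3, k4, k5, k6, k7, k8⟩ := zz1 p hp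
      simp only [k1, k2, k5, k6]
      have := N0 p
      have : 0 ≤ (3 + 2 * n * C ^ 2) * N p := by positivity
      simpa using this
  have f1 := integral_mono_of_nonneg (Filter.Eventually.of_forall fun p => (eL p).2) (iN.const_mul (3 + 2 * n * C ^ 2))
    (Filter.Eventually.of_forall fun p => (eL p).1)
  rw [integral_const_mul] at f1
  simp only [eR, integral_const_mul] at main
  refine f1.trans ?_
  rw [mul_assoc (3 + 2 * (n:ℝ) * C ^ 2)]
  have hpc : (0:ℝ) ≤ 3 + 2 * n * C ^ 2 := by positivity
  refine mul_le_mul_of_nonneg_left ?_ hpc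
  rw [div_mul_eq_mul_div, le_div_iff₀ hκ]
  linarith
end

open Real MeasureTheory

section
variable {n : ℕ}

lemma core_est (a : Fin n → Fin n → ℝ × (Fin n → ℝ) → ℝ) (ha : ∀ i j, a i j = a j i)
    (haC : ∀ i j, ContDiff ℝ 1 (a i j)) (E : ℝ × (Fin n → ℝ) → ℝ) (hE : ContDiff ℝ 2 E) (E0 : ℝ)
    (K : Set (ℝ × (Fin n → ℝ))) (hK : IsCompact K) (T : ℝ) (hT : 0 < T) (hKT : ∀ p ∈ K, p.1 ≤ T)
    (h1 : ∀ p ∈ K, ∀ ξ : Fin n → ℝ, ξ ≠ 0 → 0 < qForm (fun i j => a i j p)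
      (fun k i j => dd (ex k) (a i j) p) (fun k => Wf a E k p) (fun l k => dd (ex l) (Wf a E k) p) ξ)
    (h2 : ∀ p ∈ K, 0 < ∑ k, Wf a E k p * dd (ex k) (Df a E) p) :
    ∃ τ0 C' : ℝ, 1 ≤ τ0 ∧ 0 < C' ∧ ∀ τ, τ0 ≤ τ → ∀ z1 z2 : ℝ × (Fin n → ℝ) → ℝ,
      ContDiff ℝ 2 z1 → ContDiff ℝ 2 z2 → HasCompactSupport z1 → HasCompactSupport z2 →
      (∀ p ∈ tsupport z1, p ∈ K ∧ 0 < p.1) → (∀ p ∈ tsupport z2, p ∈ K ∧ 0 < p.1) →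
      ∫ p : ℝ × (Fin n → ℝ), ((τ / p.1) * (∑ j, dd (ex j) z1 p ^ 2 + ∑ j, dd (ex j) z2 p ^ 2)
        + (τ / p.1) ^ 3 * (z1 p ^ 2 + z2 p ^ 2)) * exp (2 * τ * ((E p - E0) / p.1))
     ≤ C' * ∫ p : ℝ × (Fin n → ℝ), ((-(dd (e0 n) z2 p) - divA a z1 p) ^ 2
        + (dd (e0 n) z1 p - divA a z2 p) ^ 2) * exp (2 * τ * ((E p - E0) / p.1)) := by
  obtain ⟨b⟩ : Nonempty (ContDiffBump (0 : Fin n → ℝ)) := ⟨⟨1, 2, by norm_num, by norm_num⟩⟩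
  obtain ⟨C, ε1, κ, B⟩ := exists_Bnds a haC E hE E0 (b.normed volume) b.contDiff_normed b.hasCompactSupport_normed
    (b.integral_normed) K hK h1 h2
  have hC : 0 < C := lt_of_lt_of_le one_pos B.hC
  have hκ := B.hκ
  have hε := B.hε1
  set θ : ℝ := κ / (2 * (3 * n ^ 2 * C + n + 1)) with hθ
  have hden : (0:ℝ) < 3 * n ^ 2 * C + n + 1 := by positivity
  have hθ0 : 0 < θ := by positivity
  set Kc : ℝ := (n * C + 1) / θ with hKc
  have hKc0 : 0 < Kc := by positivity
  refine ⟨1 + Kc + Kc * T / ε1 + C * (2 + 2 * T + T ^ 2) / θ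
    + 2 * (8 * n * (C * Kc) ^ 2 + 2 * (n * (2 * C)) ^ 2) * T / (κ / 2), (3 + 2 * n * C ^ 2) * (4 / κ), ?_, by positivity, ?_⟩
  · have : 0 ≤ Kc + Kc * T / ε1 + C * (2 + 2 * T + T ^ 2) / θ
      + 2 * (8 * n * (C * Kc) ^ 2 + 2 * (n * (2 * C)) ^ 2) * T / (κ / 2) := by positivity
    linarith
  intro τ hτ z1 z2 hz1 hz2 hc1 hc2 hs1 hs2
  have p1 : 0 ≤ Kc * T / ε1 := by positivity
  have p2 : 0 ≤ C * (2 + 2 * T + T ^ 2) / θ := by positivity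
  have p3 : 0 ≤ 2 * (8 * n * (C * Kc) ^ 2 + 2 * (n * (2 * C)) ^ 2) * T / (κ / 2) := by positivity
  obtain ⟨δ, hδ, hδs⟩ : ∃ δ : ℝ, 0 < δ ∧ ∀ p ∈ tsupport z1 ∪ tsupport z2, δ < p.1 := by
    have cS : IsCompact (tsupport z1 ∪ tsupport z2) := hc1.isCompact.union hc2.isCompact
    rcases (tsupport z1 ∪ tsupport z2).eq_empty_or_nonempty with h | h
    · exact ⟨1, one_pos, by simp [h]⟩
    · obtain ⟨q, hq, hmin⟩ := cS.exists_isMinOn h continuous_fst.continuousOn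
      have hq0 : 0 < q.1 := by
        rcases hq with h | h
        · exact (hs1 q h).2
        · exact (hs2 q h).2
      refine ⟨q.1 / 2, by positivity, fun p hp => ?_⟩
      have : q.1 ≤ p.1 := hmin hp
      linarith
  obtain ⟨m, hm, hm0, hmδ⟩ := exists_m δ hδ
  refine core_fixed B ha haC hE b.contDiff_normed b.hasCompactSupport_normed hm hm0 hδ hmδ (T := T) (τ := τ) (Kc := Kc) (θ := θ)
    (by linarith) hKc0 (by linarith) ?_ hθ0.le ?_ ?_ ?_ ?_ hKT z1 z2 hz1 hz2 hc1 hc2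
    (fun p hp => ⟨(hs1 p hp).1, hδs p (Or.inl hp)⟩) (fun p hp => ⟨(hs2 p hp).1, hδs p (Or.inr hp)⟩)
  · rw [mul_comm ε1, ← div_le_iff₀ hε]; linarith
  · rw [hKc, mul_div_cancel₀ _ hθ0.ne']; linarith
  · rw [mul_comm θ, ← div_le_iff₀ hθ0]; linarith
  · apply le_of_eq; rw [hθ]; field_simp
  · rw [mul_comm (κ/2), ← div_le_iff₀ (by positivity)]; linarith

end

open Real MeasureTheory

section
variable {n : ℕ}

lemma compact_lam {X : Type*} [TopologicalSpace X] {S : Set X} (hS : IsCompact S) {F G : X → ℝ}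
    (hF : Continuous F) (hG : Continuous G) (hG0 : ∀ x ∈ S, 0 ≤ G x) (h : ∀ x ∈ S, G x = 0 → 0 < F x) :
    ∃ L : ℝ, 0 < L ∧ ∀ lam, L ≤ lam → ∀ x ∈ S, 0 < F x + lam * G x := by
  have hS' : IsCompact (S ∩ {x | F x ≤ 0}) := hS.inter_right (isClosed_le hF continuous_const)
  rcases (S ∩ {x | F x ≤ 0}).eq_empty_or_nonempty with he | hne
  · refine ⟨1, one_pos, fun lam hl x hx => ?_⟩
    have : 0 < F x := by
      by_contra hc
      have : x ∈ S ∩ {x | F x ≤ 0} := ⟨hx, not_lt.mp hc⟩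
      rw [he] at this
      exact this
    have := mul_nonneg (zero_le_one.trans hl) (hG0 x hx)
    linarith
  · obtain ⟨x0, hx0, hmin⟩ := hS'.exists_isMinOn hne hG.continuousOn
    obtain ⟨x1, hx1, hmin1⟩ := hS'.exists_isMinOn hne hF.continuousOn
    have hg : 0 < G x0 := by
      rcases (hG0 x0 hx0.1).lt_or_eq with h' | h'
      · exact h'
      · exact absurd (h x0 hx0.1 h'.symm) (not_lt.mpr hx0.2)
    have hF1 : F x1 ≤ 0 := hx1.2
    have hL : 0 ≤ -F x1 / G x0 := div_nonneg (by linarith) hg.le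
    refine ⟨-F x1 / G x0 + 1, by linarith, fun lam hl x hx => ?_⟩
    have hl0 : 0 < lam := by linarith
    by_cases hc : 0 < F x
    · have := mul_nonneg hl0.le (hG0 x hx)
      linarith
    · have hx' : x ∈ S ∩ {x | F x ≤ 0} := ⟨hx, not_lt.mp hc⟩
      have e1 : G x0 ≤ G x := hmin hx'
      have e2 : F x1 ≤ F x := hmin1 hx'
      have e3 : lam * G x0 ≤ lam * G x := mul_le_mul_of_nonneg_left e1 hl0.le
      have e4 : (-F x1 / G x0 + 1) * G x0 ≤ lam * G x0 := mul_le_mul_of_nonneg_right hl hg.le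
      rw [add_mul, div_mul_cancel₀ _ hg.ne'] at e4
      linarith

lemma qForm_lam (A : Fin n → Fin n → ℝ) (AK : Fin n → Fin n → Fin n → ℝ)
    (hA : ∀ i j, A i j = A j i) (W P : Fin n → ℝ) (WW : Fin n → Fin n → ℝ) (hW : ∀ k, W k = ∑ j, A k j * P j)
    (e lam : ℝ) (ξ : Fin n → ℝ) :
    qForm A AK (fun k => e * W k) (fun l k => e * (lam * P l * W k + WW l k)) ξ
      = e * (qForm A AK W WW ξ + lam * (2 * (∑ k, W k * ξ k) ^ 2)) := by
  have h1 : ∑ l, ∑ j, ∑ k, 2 * (A l j * ξ j * (P l * W k) * ξ k) = 2 * (∑ k, W k * ξ k) ^ 2 := by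
    have h2 : ∑ l, ∑ j, A l j * ξ j * P l = ∑ k, W k * ξ k := by
      rw [Finset.sum_comm]
      refine Finset.sum_congr rfl fun j _ => ?_
      rw [hW, Finset.sum_mul]
      refine Finset.sum_congr rfl fun l _ => ?_
      rw [hA]; ring
    have h3 : ∀ l j, ∑ k, 2 * (A l j * ξ j * (P l * W k) * ξ k) = (A l j * ξ j * P l) * (2 * ∑ k, W k * ξ k) := by
      intro l j
      simp only [Finset.mul_sum]
      refine Finset.sum_congr rfl fun k _ => ?_
      ring
    simp only [← Finset.sum_mul] at h2
    simp only [h3, ← Finset.sum_mul]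
    rw [h2]; ring
  rw [← h1]
  unfold qForm
  have e1 : ∑ l, ∑ j, ∑ k, 2 * (A l j * ξ j * (e * (lam * P l * W k + WW l k)) * ξ k)
      = e * ((∑ l, ∑ j, ∑ k, 2 * (A l j * ξ j * WW l k * ξ k)) + lam * ∑ l, ∑ j, ∑ k, 2 * (A l j * ξ j * (P l * W k) * ξ k)) := by
    simp only [Finset.mul_sum, ← Finset.sum_add_distrib]
    refine Finset.sum_congr rfl fun l _ => Finset.sum_congr rfl fun j _ => Finset.sum_congr rfl fun k _ => ?_
    ring
  have e2 : ∑ k, e * W k * ∑ l, ∑ j, AK k l j * ξ l * ξ j = e * ∑ k, W k * ∑ l, ∑ j, AK k l j * ξ l * ξ j := by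
    rw [Finset.mul_sum]
    refine Finset.sum_congr rfl fun k _ => ?_
    rw [mul_assoc]
  rw [e1, e2]
  ring

variable {a : Fin n → Fin n → ℝ × (Fin n → ℝ) → ℝ} {ψ : ℝ × (Fin n → ℝ) → ℝ}

lemma dd_expl (hψ : ContDiff ℝ 2 ψ) (lam : ℝ) (v p : ℝ × (Fin n → ℝ)) :
    dd v (fun q => exp (lam * ψ q)) p = lam * exp (lam * ψ p) * dd v ψ p := by
  have h1 : Differentiable ℝ ψ := hψ.differentiable (by norm_num)
  have h2 : Differentiable ℝ (fun q => lam * ψ q) := h1.const_mul lam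
  rw [dd_exp h2, dd_cmul h1]; ring

lemma Wf_expl (hψ : ContDiff ℝ 2 ψ) (lam : ℝ) (k : Fin n) :
    Wf a (fun q => exp (lam * ψ q)) k = fun p => (lam * exp (lam * ψ p)) * Wf a ψ k p := by
  funext p
  unfold Wf
  rw [Finset.mul_sum]
  refine Finset.sum_congr rfl fun j _ => ?_
  rw [dd_expl hψ]; ring

lemma Df_expl (hψ : ContDiff ℝ 2 ψ) (lam : ℝ) :
    Df a (fun q => exp (lam * ψ q)) = fun p => lam ^ 2 * (exp (2 * lam * ψ p) * Df a ψ p) := by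
  funext p
  unfold Df
  rw [Finset.mul_sum, Finset.mul_sum]
  refine Finset.sum_congr rfl fun j _ => ?_
  rw [dd_expl hψ, Wf_expl hψ, show 2 * lam * ψ p = lam * ψ p + lam * ψ p by ring, exp_add]; ring

lemma dd_Wf_expl (haC : ∀ i j, ContDiff ℝ 1 (a i j)) (hψ : ContDiff ℝ 2 ψ) (lam : ℝ) (k : Fin n) (v p : ℝ × (Fin n → ℝ)) :
    dd v (Wf a (fun q => exp (lam * ψ q)) k) p
     = (lam * exp (lam * ψ p)) * (lam * dd v ψ p * Wf a ψ k p + dd v (Wf a ψ k) p) := by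
  have h1 : Differentiable ℝ ψ := hψ.differentiable (by norm_num)
  have h3 : Differentiable ℝ (fun q => exp (lam * ψ q)) := (h1.const_mul lam).exp
  have h2 : Differentiable ℝ (fun q => lam * exp (lam * ψ q)) := h3.const_mul lam
  rw [Wf_expl hψ, dd_mul h2 ((Wf_C1 haC hψ k).differentiable (by norm_num)), dd_cmul h3, dd_expl hψ]
  ring

lemma dd_Df_expl (haC : ∀ i j, ContDiff ℝ 1 (a i j)) (hψ : ContDiff ℝ 2 ψ) (lam : ℝ) (v p : ℝ × (Fin n → ℝ)) :
    dd v (Df a (fun q => exp (lam * ψ q))) p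
     = lam ^ 2 * exp (lam * ψ p) ^ 2 * (2 * lam * dd v ψ p * Df a ψ p + dd v (Df a ψ) p) := by
  have h1 : Differentiable ℝ ψ := hψ.differentiable (by norm_num)
  have h3 : Differentiable ℝ (fun q => exp (2 * lam * ψ q)) := (h1.const_mul _).exp
  have h4 : Differentiable ℝ (Df a ψ) := (Df_C1 haC hψ).differentiable (by norm_num)
  have h2 : Differentiable ℝ (fun q => exp (2 * lam * ψ q) * Df a ψ q) := h3.mul h4
  rw [Df_expl hψ, dd_cmul h2, dd_mul h3 h4, dd_expl hψ, show 2 * lam * ψ p = lam * ψ p + lam * ψ p by ring, exp_add]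
  ring

lemma lam_choice (ha : ∀ i j, a i j = a j i) (haC : ∀ i j, ContDiff ℝ 1 (a i j)) (hψ : ContDiff ℝ 2 ψ)
    {K : Set (ℝ × (Fin n → ℝ))} (hK : IsCompact K)
    (hD : ∀ p ∈ K, 0 < Df a ψ p)
    (hq : ∀ p ∈ K, ∀ ξ : Fin n → ℝ, ξ ≠ 0 → ∑ k, Wf a ψ k p * ξ k = 0 → 0 < qForm (fun i j => a i j p)
      (fun k i j => dd (ex k) (a i j) p) (fun k => Wf a ψ k p) (fun l k => dd (ex l) (Wf a ψ k) p) ξ) :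
    ∃ L : ℝ, 0 < L ∧ ∀ lam, L ≤ lam →
      (∀ p ∈ K, ∀ ξ : Fin n → ℝ, ξ ≠ 0 → 0 < qForm (fun i j => a i j p)
        (fun k i j => dd (ex k) (a i j) p) (fun k => Wf a (fun q => exp (lam * ψ q)) k p)
        (fun l k => dd (ex l) (Wf a (fun q => exp (lam * ψ q)) k) p) ξ) ∧
      (∀ p ∈ K, 0 < ∑ k, Wf a (fun q => exp (lam * ψ q)) k p * dd (ex k) (Df a (fun q => exp (lam * ψ q))) p) := by
  have hW := fun k => Wf_C1 haC hψ k
  have hDC := Df_C1 haC hψ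
  have ca : ∀ i j, Continuous (a i j) := fun i j => (haC i j).continuous
  have cda : ∀ v i j, Continuous (dd v (a i j)) := fun v i j => dd_C0 (haC i j) v
  obtain ⟨L1, hL1, H1⟩ := compact_lam (hK.prod (isCompact_sphere (0 : Fin n → ℝ) 1))
    (F := fun z => qForm (fun i j => a i j z.1) (fun k i j => dd (ex k) (a i j) z.1)
      (fun k => Wf a ψ k z.1) (fun l k => dd (ex l) (Wf a ψ k) z.1) z.2)
    (G := fun z => 2 * (∑ k, Wf a ψ k z.1 * z.2 k) ^ 2)
    (by
      unfold qForm
      have c1 : ∀ i j, Continuous (fun z : (ℝ × (Fin n → ℝ)) × (Fin n → ℝ) => a i j z.1) :=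
        fun i j => (ca i j).comp (by fun_prop)
      have c2 : ∀ k i j, Continuous (fun z : (ℝ × (Fin n → ℝ)) × (Fin n → ℝ) => dd (ex k) (a i j) z.1) :=
        fun k i j => (cda _ i j).comp (by fun_prop)
      have c3 : ∀ k, Continuous (fun z : (ℝ × (Fin n → ℝ)) × (Fin n → ℝ) => Wf a ψ k z.1) :=
        fun k => (hW k).continuous.comp (by fun_prop)
      have c4 : ∀ l k, Continuous (fun z : (ℝ × (Fin n → ℝ)) × (Fin n → ℝ) => dd (ex l) (Wf a ψ k) z.1) :=
        fun l k => (dd_C0 (hW k) _).comp (by fun_prop)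
      have c5 : ∀ i, Continuous (fun z : (ℝ × (Fin n → ℝ)) × (Fin n → ℝ) => z.2 i) := fun i => by fun_prop
      refine Continuous.sub ?_ ?_
      · exact continuous_finsetSum _ fun l _ => continuous_finsetSum _ fun j _ => continuous_finsetSum _ fun k _ =>
          continuous_const.mul ((((c1 l j).mul (c5 j)).mul (c4 l k)).mul (c5 k))
      · exact continuous_finsetSum _ fun k _ => (c3 k).mul (continuous_finsetSum _ fun l _ => continuous_finsetSum _ fun j _ => 
          (((c2 k l j).mul (c5 l)).mul (c5 j))))
    (continuous_const.mul ((continuous_finsetSum _ fun k _ => ((hW k).continuous.comp continuous_fst).mul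
      ((continuous_apply k).comp continuous_snd)).pow 2))
    (fun x _ => by positivity)
    (by
      rintro ⟨p, ξ⟩ ⟨hp, hξ⟩ h0
      apply hq p hp
      · rintro rfl
        simp at hξ
      · simpa using h0)
  obtain ⟨L2, hL2, H2⟩ := compact_lam hK
    (F := fun p => ∑ k, Wf a ψ k p * dd (ex k) (Df a ψ) p)
    (G := fun p => 2 * Df a ψ p ^ 2)
    (continuous_finsetSum _ fun k _ => (hW k).continuous.mul (dd_C0 hDC _))
    (continuous_const.mul (hDC.continuous.pow 2)) (fun x _ => by positivity)
    (by
      intro p hp h0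
      have := hD p hp
      simp at h0
      linarith)
  refine ⟨L1 + L2, by positivity, fun lam hl => ⟨fun p hp ξ hξ => ?_, fun p hp => ?_⟩⟩
  · have hlam : 0 < lam := by linarith
    simp only [dd_Wf_expl haC hψ]
    simp only [Wf_expl hψ]
    rw [qForm_lam (fun i j => a i j p) (fun k i j => dd (ex k) (a i j) p) (fun i j => by rw [ha]) (fun k => Wf a ψ k p)
      (fun l => dd (ex l) ψ p) (fun l k => dd (ex l) (Wf a ψ k) p) (fun k => rfl)]
    refine mul_pos (by positivity) ?_
    have hn : 0 < ‖ξ‖ := norm_pos_iff.mpr hξ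
    have := H1 lam (by linarith) (p, ‖ξ‖⁻¹ • ξ) ⟨hp, by simp [norm_smul, hn.ne']⟩
    simp only [qForm_smul] at this
    have e : ∑ k, Wf a ψ k p * (‖ξ‖⁻¹ • ξ) k = ‖ξ‖⁻¹ * ∑ k, Wf a ψ k p * ξ k := by
      rw [Finset.mul_sum]
      refine Finset.sum_congr rfl fun k _ => ?_
      simp; ring
    rw [e] at this
    have e2 : ∀ x y : ℝ, ‖ξ‖⁻¹ ^ 2 * x + lam * (2 * (‖ξ‖⁻¹ * y) ^ 2) = ‖ξ‖⁻¹ ^ 2 * (x + lam * (2 * y ^ 2)) := by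
      intros; ring
    rw [e2] at this
    exact pos_of_mul_pos_right this (by positivity)
  · have hlam : 0 < lam := by linarith
    simp only [dd_Df_expl haC hψ]
    simp only [Wf_expl hψ]
    have e : ∑ k, lam * exp (lam * ψ p) * Wf a ψ k p * (lam ^ 2 * exp (lam * ψ p) ^ 2 * (2 * lam * dd (ex k) ψ p * Df a ψ p + dd (ex k) (Df a ψ) p))
      = lam ^ 3 * exp (lam * ψ p) ^ 3 * ((∑ k, Wf a ψ k p * dd (ex k) (Df a ψ) p) + lam * (2 * Df a ψ p ^ 2)) := by
      have : Df a ψ p ^ 2 = ∑ k, Wf a ψ k p * dd (ex k) ψ p * Df a ψ p := by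
        rw [← Finset.sum_mul, sq]; rfl
      rw [this]
      simp only [Finset.mul_sum, ← Finset.sum_add_distrib]
      refine Finset.sum_congr rfl fun k _ => ?_
      ring
    rw [e]
    exact mul_pos (by positivity) (H2 lam (by linarith) p hp)

end

open Real MeasureTheory

section
variable {n : ℕ}

lemma alg_hyp (A : Fin n → Fin n → ℝ) (AK : Fin n → Fin n → Fin n → ℝ)
    (hA : ∀ i j, A i j = A j i) (P : Fin n → ℝ) (H : Fin n → Fin n → ℝ) (ξ : Fin n → ℝ) :
    4 * ∑ m, ∑ m', ∑ k, ∑ l, A m k * A m' l * ξ m * ξ m' * H k l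
      - 2 * ∑ m, ∑ k, A m k * P m * (∑ i, ∑ j, AK k i j * ξ i * ξ j)
      + 4 * ∑ m, ∑ k, A m k * ξ m * (∑ i, ∑ j, AK k i j * ξ i * P j)
    = 2 * qForm A AK (fun k => ∑ j, A k j * P j) (fun l k => ∑ m, (AK l k m * P m + A k m * H m l)) ξ := by
  have e1 : ∑ m, ∑ m', ∑ k, ∑ l, A m k * A m' l * ξ m * ξ m' * H k l
      = ∑ l, ∑ m', ∑ m, ∑ k, A m k * A m' l * ξ m * ξ m' * H k l :=
    (Finset.sum_comm.trans (Finset.sum_congr rfl fun m' _ => (Finset.sum_congr rfl fun m _ => Finset.sum_comm).trans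
      Finset.sum_comm)).trans Finset.sum_comm
  have e2 : ∑ m, ∑ k, A m k * P m * (∑ i, ∑ j, AK k i j * ξ i * ξ j)
      = ∑ k, ∑ m, A m k * P m * (∑ i, ∑ j, AK k i j * ξ i * ξ j) := Finset.sum_comm
  have e3 : ∑ m, ∑ k, A m k * ξ m * (∑ i, ∑ j, AK k i j * ξ i * P j)
      = ∑ k, ∑ m, A m k * ξ m * (∑ i, ∑ j, AK k i j * ξ i * P j) := Finset.sum_comm
  rw [e1, e2, e3]
  unfold qForm
  have f1 : ∑ k, (∑ j, A k j * P j) * ∑ l, ∑ j, AK k l j * ξ l * ξ j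
      = ∑ k, ∑ m, A m k * P m * (∑ i, ∑ j, AK k i j * ξ i * ξ j) := by
    refine Finset.sum_congr rfl fun k _ => ?_
    rw [Finset.sum_mul]
    refine Finset.sum_congr rfl fun m _ => ?_
    rw [hA k m]
  have f2 : ∑ l, ∑ j, ∑ k, 2 * (A l j * ξ j * (∑ m, (AK l k m * P m + A k m * H m l)) * ξ k)
      = 2 * (∑ l, ∑ m', ∑ m, ∑ k, A m k * A m' l * ξ m * ξ m' * H k l)
       + 2 * ∑ k, ∑ m, A m k * ξ m * (∑ i, ∑ j, AK k i j * ξ i * P j) := by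
    simp only [Finset.mul_sum, Finset.sum_mul, ← Finset.sum_add_distrib]
    refine Finset.sum_congr rfl fun l _ => Finset.sum_congr rfl fun j _ => Finset.sum_congr rfl fun k _ =>
      Finset.sum_congr rfl fun m _ => ?_
    rw [hA l j]
    ring
  rw [f1, f2]
  ring

lemma pd_slice' {F : Type*} [NormedAddCommGroup F] [NormedSpace ℝ F] {f : ℝ × (Fin n → ℝ) → F} (hf : Differentiable ℝ f)
    (k : Fin n) (t : ℝ) (x : Fin n → ℝ) : pd k (fun y => f (t, y)) x = fderiv ℝ f (t, x) (ex k) := by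
  unfold pd
  have h1 : HasFDerivAt (fun y : Fin n → ℝ => (t, y)) (ContinuousLinearMap.inr ℝ ℝ (Fin n → ℝ)) x := hasFDerivAt_prodMk_right t x
  have h2 : HasFDerivAt f (fderiv ℝ f (t, x)) (t, x) := (hf _).hasFDerivAt
  have := (h2.comp x h1).fderiv
  unfold Function.comp at this
  rw [this]
  simp [ex]

lemma deriv_slice' {F : Type*} [NormedAddCommGroup F] [NormedSpace ℝ F] {f : ℝ × (Fin n → ℝ) → F} (hf : Differentiable ℝ f)
    (t : ℝ) (x : Fin n → ℝ) : deriv (fun s => f (s, x)) t = fderiv ℝ f (t, x) (e0 n) := by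
  have h1 : HasFDerivAt (fun y : ℝ => (y, x)) (ContinuousLinearMap.inl ℝ ℝ (Fin n → ℝ)) t := hasFDerivAt_prodMk_left t x
  have h2 : HasFDerivAt f (fderiv ℝ f (t, x)) (t, x) := (hf _).hasFDerivAt
  rw [← fderiv_apply_one_eq_deriv]
  have := (h2.comp t h1).fderiv
  unfold Function.comp at this
  rw [this]
  simp [e0]

lemma pd_slice {f : ℝ × (Fin n → ℝ) → ℝ} (hf : Differentiable ℝ f)
    (k : Fin n) (t : ℝ) (x : Fin n → ℝ) : pd k (fun y => f (t, y)) x = dd (ex k) f (t, x) := pd_slice' hf k t x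

lemma lam_exists (Ω : Set (Fin n → ℝ)) (hΩ : Bornology.IsBounded Ω) (T : ℝ) (hT : 0 < T)
    (a : Fin n → Fin n → ℝ → (Fin n → ℝ) → ℝ)
    (ha_symm : ∀ k j, a k j = a j k)
    (ha_reg : ∀ k j, ContDiff ℝ 1 (fun p : ℝ × (Fin n → ℝ) => a k j p.1 p.2))
    (β : ℝ) (hβ : 0 < β)
    (ha_ell : ∀ t ∈ Set.Ioo (0:ℝ) T, ∀ x ∈ Ω, ∀ η : Fin n → ℝ,
      β * ∑ i, η i ^ 2 ≤ ∑ k, ∑ j, a k j t x * η k * η j)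
    (ψ : ℝ → (Fin n → ℝ) → ℝ)
    (hψ : ContDiff ℝ 2 (fun p : ℝ × (Fin n → ℝ) => ψ p.1 p.2))
    (hgrad : ∀ t ∈ Set.Icc (0:ℝ) T, ∀ x ∈ closure Ω, gradx ψ t x ≠ 0)
    (hpos : ∀ t ∈ Set.Icc (0:ℝ) T, ∀ x ∈ closure Ω, ∀ ξ : Fin n → ℝ, ξ ≠ 0 →
      aF a t x (gradx ψ t x) ξ = 0 →
        0 < 4 * ∑ m, ∑ m', ∑ k, ∑ l, a m k t x * a m' l t x * ξ m * ξ m'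
              * hessx ψ t x k l
          - 2 * ∑ m, ∑ k, a m k t x * gradx ψ t x m * aD a k t x ξ ξ
          + 4 * ∑ m, ∑ k, a m k t x * ξ m * aD a k t x ξ (gradx ψ t x))
    (a' : Fin n → Fin n → ℝ × (Fin n → ℝ) → ℝ) (ha' : a' = fun k j p => a k j p.1 p.2)
    (ψ' : ℝ × (Fin n → ℝ) → ℝ) (hψ' : ψ' = fun p => ψ p.1 p.2) :
    ∃ L : ℝ, 0 < L ∧ ∀ lam, L ≤ lam →
      (∀ p ∈ Set.Icc 0 T ×ˢ closure Ω, ∀ ξ : Fin n → ℝ, ξ ≠ 0 → 0 < qForm (fun i j => a' i j p)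
        (fun k i j => dd (ex k) (a' i j) p) (fun k => Wf a' (fun q => exp (lam * ψ' q)) k p)
        (fun l k => dd (ex l) (Wf a' (fun q => exp (lam * ψ' q)) k) p) ξ) ∧
      (∀ p ∈ Set.Icc 0 T ×ˢ closure Ω,
        0 < ∑ k, Wf a' (fun q => exp (lam * ψ' q)) k p * dd (ex k) (Df a' (fun q => exp (lam * ψ' q))) p) := by
  have haC : ∀ i j, ContDiff ℝ 1 (a' i j) := by subst ha'; exact ha_reg
  have hψC : ContDiff ℝ 2 ψ' := by subst hψ'; exact hψ
  have hs : ∀ i j, a' i j = a' j i := by intro i j; subst ha'; simp only [ha_symm i j]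
  have hψd : Differentiable ℝ ψ' := hψC.differentiable (by norm_num)
  have hK : IsCompact (Set.Icc 0 T ×ˢ closure Ω) := isCompact_Icc.prod hΩ.isCompact_closure
  have hg : ∀ t x k, gradx ψ t x k = dd (ex k) ψ' (t, x) := by
    intro t x k
    rw [← pd_slice hψd, hψ']; rfl
  have hh : ∀ t x k l, hessx ψ t x k l = dd (ex l) (dd (ex k) ψ') (t, x) := by
    intro t x k l
    rw [← pd_slice ((dd_C1 hψC _).differentiable (by norm_num))]
    unfold hessx
    congr 1
    funext y
    exact hg t y k
  have hD : ∀ k t x u v, aD a k t x u v = ∑ i, ∑ j, dd (ex k) (a' i j) (t, x) * u i * v j := by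
    intro k t x u v
    unfold aD
    refine Finset.sum_congr rfl fun i _ => Finset.sum_congr rfl fun j _ => ?_
    rw [← pd_slice ((haC i j).differentiable (by norm_num)), ha']
  refine lam_choice hs haC hψC hK ?_ ?_
  · intro p hp
    have hcl : Set.Icc 0 T ×ˢ closure Ω = closure (Set.Ioo 0 T ×ˢ Ω) := by
      rw [closure_prod_eq, closure_Ioo hT.ne]
    have hell : β * ∑ i, dd (ex i) ψ' p ^ 2 ≤ ∑ k, ∑ j, a' k j p * dd (ex k) ψ' p * dd (ex j) ψ' p := by
      have hc : IsClosed {q | β * ∑ i, dd (ex i) ψ' p ^ 2 ≤ ∑ k, ∑ j, a' k j q * dd (ex k) ψ' p * dd (ex j) ψ' p} := by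
        refine isClosed_le continuous_const ?_
        exact continuous_finsetSum _ fun k _ => continuous_finsetSum _ fun j _ =>
          (((haC k j).continuous.mul continuous_const).mul continuous_const)
      rw [hcl] at hp
      refine closure_minimal ?_ hc hp
      rintro ⟨t, x⟩ ⟨ht, hx⟩
      have := ha_ell t ht x hx (fun i => dd (ex i) ψ' p)
      subst ha'
      exact this
    have e : Df a' ψ' p = ∑ k, ∑ j, a' k j p * dd (ex k) ψ' p * dd (ex j) ψ' p := by
      unfold Df Wf
      refine Finset.sum_congr rfl fun k _ => ?_
      rw [Finset.sum_mul]
      exact Finset.sum_congr rfl fun j _ => by ring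
    rw [e]
    refine lt_of_lt_of_le (mul_pos hβ ?_) hell
    obtain ⟨k, hk⟩ := Function.ne_iff.mp (hgrad p.1 hp.1 p.2 hp.2)
    rw [hg] at hk
    exact Finset.sum_pos' (fun i _ => sq_nonneg _) ⟨k, Finset.mem_univ _, by
      have : dd (ex k) ψ' p ≠ 0 := hk
      positivity⟩
  · rintro ⟨t, x⟩ ⟨ht, hx⟩ ξ hξ h0
    have hdW : ∀ l k, dd (ex l) (Wf a' ψ' k) (t, x) = ∑ m, (dd (ex l) (a' k m) (t, x) * dd (ex m) ψ' (t, x)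
        + a' k m (t, x) * dd (ex l) (dd (ex m) ψ') (t, x)) := by
      intro l k
      unfold Wf
      have d1 : ∀ m, Differentiable ℝ (a' k m) := fun m => (haC k m).differentiable (by norm_num)
      have d2 : ∀ m : Fin n, Differentiable ℝ (dd (ex m) ψ') := fun m => (dd_C1 hψC _).differentiable (by norm_num)
      have d3 : ∀ m, Differentiable ℝ (fun q => a' k m q * dd (ex m) ψ' q) := fun m => (d1 m).mul (d2 m)
      rw [dd_sum _ d3]
      exact Finset.sum_congr rfl fun m _ => dd_mul (d1 m) (d2 m) _ _
    have key := hpos t ht x hx ξ hξ (by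
      rw [← h0]
      unfold aF Wf
      rw [Finset.sum_comm]
      refine Finset.sum_congr rfl fun k _ => ?_
      rw [Finset.sum_mul]
      refine Finset.sum_congr rfl fun j _ => ?_
      rw [hg, hs k j, ha'])
    simp only [hg, hh, hD] at key
    have := alg_hyp (fun i j => a' i j (t, x)) (fun k i j => dd (ex k) (a' i j) (t, x)) (fun i j => by rw [hs])
      (fun k => dd (ex k) ψ' (t, x)) (fun k l => dd (ex l) (dd (ex k) ψ') (t, x)) ξ
    have ea : ∀ i j, a' i j (t, x) = a i j t x := by intro i j; rw [ha']
    simp only [hdW]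
    simp only [ea] at this ⊢
    rw [this] at key
    have k2 := pos_of_mul_pos_right key (by norm_num)
    unfold Wf
    simp only [ea]
    exact k2

end

open Real MeasureTheory

section
variable {n : ℕ}

lemma cfd {g1 g2 : ℝ × (Fin n → ℝ) → ℝ} (h1 : Differentiable ℝ g1) (h2 : Differentiable ℝ g2) :
    Differentiable ℝ (fun q => (g1 q : ℂ) + g2 q * Complex.I) ∧
    ∀ p v, fderiv ℝ (fun q => (g1 q : ℂ) + g2 q * Complex.I) p v = (dd v g1 p : ℂ) + dd v g2 p * Complex.I := by
  have key : ∀ p, HasFDerivAt (fun q => (g1 q : ℂ) + g2 q * Complex.I)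
      (Complex.ofRealCLM.comp (fderiv ℝ g1 p) + Complex.I • Complex.ofRealCLM.comp (fderiv ℝ g2 p)) p := by
    intro p
    have e1 : HasFDerivAt (fun q => (g1 q : ℂ)) (Complex.ofRealCLM.comp (fderiv ℝ g1 p)) p :=
      Complex.ofRealCLM.hasFDerivAt.comp p (h1 p).hasFDerivAt
    have e2 : HasFDerivAt (fun q => (g2 q : ℂ)) (Complex.ofRealCLM.comp (fderiv ℝ g2 p)) p :=
      Complex.ofRealCLM.hasFDerivAt.comp p (h2 p).hasFDerivAt
    exact e1.add (e2.mul_const Complex.I)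
  refine ⟨fun p => (key p).differentiableAt, fun p v => ?_⟩
  rw [(key p).fderiv]
  simp [dd, mul_comm]

lemma nsq (x y : ℝ) : ‖(x : ℂ) + y * Complex.I‖ ^ 2 = x ^ 2 + y ^ 2 := by
  rw [Complex.sq_norm, Complex.normSq_add_mul_I]

lemma pd_cpx {z1 z2 : ℝ × (Fin n → ℝ) → ℝ} (h1 : Differentiable ℝ z1) (h2 : Differentiable ℝ z2)
    (j : Fin n) (t : ℝ) (x : Fin n → ℝ) :
    pd j (fun y => (z1 (t, y) : ℂ) + z2 (t, y) * Complex.I) x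
      = (dd (ex j) z1 (t, x) : ℂ) + dd (ex j) z2 (t, x) * Complex.I := by
  have := pd_slice' (cfd h1 h2).1 j t x
  rw [(cfd h1 h2).2] at this
  exact this

lemma SchOp_eq (a : Fin n → Fin n → ℝ → (Fin n → ℝ) → ℝ)
    (b : Fin n → ℝ → (Fin n → ℝ) → ℂ) (c : ℝ → (Fin n → ℝ) → ℂ)
    (haC : ∀ k j, ContDiff ℝ 1 (fun p : ℝ × (Fin n → ℝ) => a k j p.1 p.2))
    {z1 z2 : ℝ × (Fin n → ℝ) → ℝ} (h1 : ContDiff ℝ 2 z1) (h2 : ContDiff ℝ 2 z2) (p : ℝ × (Fin n → ℝ)) :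
    SchOp a b c (fun q => (z1 q : ℂ) + z2 q * Complex.I) p =
     (((-(dd (e0 n) z2 p) - divA (fun k j p => a k j p.1 p.2) z1 p : ℝ) : ℂ)
        + ((dd (e0 n) z1 p - divA (fun k j p => a k j p.1 p.2) z2 p : ℝ) : ℂ) * Complex.I)
     + (∑ l, b l p.1 p.2 * ((dd (ex l) z1 p : ℂ) + dd (ex l) z2 p * Complex.I)
       + c p.1 p.2 * ((z1 p : ℂ) + z2 p * Complex.I)) := by
  obtain ⟨t, x⟩ := p
  have d1 : Differentiable ℝ z1 := h1.differentiable (by norm_num)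
  have d2 : Differentiable ℝ z2 := h2.differentiable (by norm_num)
  unfold SchOp
  have e1 := deriv_slice' (cfd d1 d2).1 t x
  rw [(cfd d1 d2).2] at e1
  simp only [pd_cpx d1 d2]
  rw [e1]
  have e2 : ∀ l j, pd l (fun y => ((a l j t y : ℝ) : ℂ) * ((dd (ex j) z1 (t, y) : ℂ) + dd (ex j) z2 (t, y) * Complex.I)) x
      = (dd (ex l) (fun q => a l j q.1 q.2 * dd (ex j) z1 q) (t, x) : ℂ)
        + dd (ex l) (fun q => a l j q.1 q.2 * dd (ex j) z2 q) (t, x) * Complex.I := by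
    intro l j
    have g1 : Differentiable ℝ (fun q : ℝ × (Fin n → ℝ) => a l j q.1 q.2 * dd (ex j) z1 q) :=
      ((haC l j).mul (dd_C1 h1 _)).differentiable (by norm_num)
    have g2 : Differentiable ℝ (fun q : ℝ × (Fin n → ℝ) => a l j q.1 q.2 * dd (ex j) z2 q) :=
      ((haC l j).mul (dd_C1 h2 _)).differentiable (by norm_num)
    rw [← pd_cpx g1 g2]
    congr 1
    funext y
    push_cast
    ring
  simp only [e2]
  unfold divA
  push_cast
  simp only [Finset.sum_add_distrib, ← Finset.sum_mul]
  linear_combination (dd (e0 n) z2 (t, x) : ℂ) * Complex.I_mul_I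

lemma low_bound {B : ℝ} (b u : Fin n → ℂ) (c w : ℂ) (hb : ∀ l, ‖b l‖ ≤ B) (hc : ‖c‖ ≤ B) :
    ‖∑ l, b l * u l + c * w‖ ^ 2 ≤ (2 * (n + 1) * B ^ 2) * (∑ l, ‖u l‖ ^ 2 + ‖w‖ ^ 2) := by
  have hB : 0 ≤ B := (norm_nonneg _).trans hc
  have h1 : ‖∑ l, b l * u l + c * w‖ ≤ (∑ l, B * ‖u l‖) + B * ‖w‖ := by
    refine (norm_add_le _ _).trans (add_le_add ((norm_sum_le _ _).trans (Finset.sum_le_sum fun l _ => ?_)) ?_)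
    · rw [norm_mul]; exact mul_le_mul_of_nonneg_right (hb l) (norm_nonneg _)
    · rw [norm_mul]; exact mul_le_mul_of_nonneg_right hc (norm_nonneg _)
  have h2 : (∑ l, B * ‖u l‖) ^ 2 ≤ n * ∑ l, (B * ‖u l‖) ^ 2 := by
    have := sq_sum_le_card_mul_sum_sq (s := Finset.univ) (f := fun l => B * ‖u l‖)
    simpa using this
  have h3 : ∑ l, (B * ‖u l‖) ^ 2 = B ^ 2 * ∑ l, ‖u l‖ ^ 2 := by
    rw [Finset.mul_sum]; exact Finset.sum_congr rfl fun l _ => by ring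
  rw [h3] at h2
  have h4 : ‖∑ l, b l * u l + c * w‖ ^ 2 ≤ ((∑ l, B * ‖u l‖) + B * ‖w‖) ^ 2 := by gcongr
  have h5 := sq_nonneg ((∑ l, B * ‖u l‖) - B * ‖w‖)
  have h6 : 0 ≤ B ^ 2 * ∑ l, ‖u l‖ ^ 2 := by positivity
  have h7 : 0 ≤ (n : ℝ) * (B * ‖w‖) ^ 2 := by positivity
  nlinarith

lemma intg {S : Set (ℝ × (Fin n → ℝ))} (hS : IsCompact S) {f : ℝ × (Fin n → ℝ) → ℝ} (hf : ContinuousOn f S)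
    (h0 : ∀ p, p ∉ S → f p = 0) : Integrable f := by
  have h1 := hf.integrableOn_compact (μ := volume) hS
  refine (integrableOn_iff_integrable_of_support_subset ?_).mp h1
  intro p hp
  by_contra hc
  exact hp (h0 p hc)

end

open Real MeasureTheory

theorem statement7
    (n : ℕ) (Ω : Set (Fin n → ℝ)) (hΩ : Bornology.IsBounded Ω) (T : ℝ) (hT : 0 < T)
    (a : Fin n → Fin n → ℝ → (Fin n → ℝ) → ℝ)
    (ha_symm : ∀ k j, a k j = a j k)
    (ha_reg : ∀ k j, ContDiff ℝ 1 (fun p : ℝ × (Fin n → ℝ) => a k j p.1 p.2))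
    (β : ℝ) (hβ : 0 < β)
    (ha_ell : ∀ t ∈ Set.Ioo (0:ℝ) T, ∀ x ∈ Ω, ∀ η : Fin n → ℝ,
      β * ∑ i, η i ^ 2 ≤ ∑ k, ∑ j, a k j t x * η k * η j)
    -- `b_ℓ, c ∈ L^∞(Q)`, complex valued
    (b : Fin n → ℝ → (Fin n → ℝ) → ℂ) (c : ℝ → (Fin n → ℝ) → ℂ)
    (hb_meas : ∀ l, Measurable (fun p : ℝ × (Fin n → ℝ) => b l p.1 p.2))
    (hc_meas : Measurable (fun p : ℝ × (Fin n → ℝ) => c p.1 p.2))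
    (B : ℝ)
    (hbB : ∀ l, ∀ t ∈ Set.Ioo (0:ℝ) T, ∀ x ∈ Ω, ‖b l t x‖ ≤ B)
    (hcB : ∀ t ∈ Set.Ioo (0:ℝ) T, ∀ x ∈ Ω, ‖c t x‖ ≤ B)
    (ψ : ℝ → (Fin n → ℝ) → ℝ)
    (hψ : ContDiff ℝ 2 (fun p : ℝ × (Fin n → ℝ) => ψ p.1 p.2))
    (hgrad : ∀ t ∈ Set.Icc (0:ℝ) T, ∀ x ∈ closure Ω, gradx ψ t x ≠ 0)
    -- the pseudo-convexity inequality (ramsai) on the characteristic set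
    (hpos : ∀ t ∈ Set.Icc (0:ℝ) T, ∀ x ∈ closure Ω, ∀ ξ : Fin n → ℝ, ξ ≠ 0 →
      aF a t x (gradx ψ t x) ξ = 0 →
        0 < 4 * ∑ m, ∑ m', ∑ k, ∑ l, a m k t x * a m' l t x * ξ m * ξ m'
              * hessx ψ t x k l
          - 2 * ∑ m, ∑ k, a m k t x * gradx ψ t x m * aD a k t x ξ ξ
          + 4 * ∑ m, ∑ k, a m k t x * ξ m * aD a k t x ξ (gradx ψ t x))
    -- `M = ‖ψ‖_{C⁰(Q̄)}`
    (M : ℝ)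
    (hM : M = sSup ((fun p : ℝ × (Fin n → ℝ) => |ψ p.1 p.2|) ''
      (Set.Icc 0 T ×ˢ closure Ω))) :
    ∃ lamHat > (0:ℝ), ∀ lam ≥ lamHat, ∃ τ₀ > (0:ℝ), ∃ C > (0:ℝ), ∀ τ ≥ τ₀,
      ∀ z : ℝ × (Fin n → ℝ) → ℂ, ContDiff ℝ (⊤ : ℕ∞) z → HasCompactSupport z →
        tsupport z ⊆ Set.Ioo (0:ℝ) T ×ˢ Ω →
        (∫ p in Set.Ioo (0:ℝ) T ×ˢ Ω,
            (τ * (Real.exp (lam * ψ p.1 p.2) / p.1)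
                * ∑ j, ‖pd j (fun y => z (p.1, y)) p.2‖ ^ 2
              + τ ^ 3 * (Real.exp (lam * ψ p.1 p.2) / p.1) ^ 3 * ‖z p‖ ^ 2)
            * Real.exp (2 * τ * ((Real.exp (lam * ψ p.1 p.2)
                - Real.exp (2 * lam * M)) / p.1)))
        ≤ C * ∫ p in Set.Ioo (0:ℝ) T ×ˢ Ω,
            ‖SchOp a b c z p‖ ^ 2
            * Real.exp (2 * τ * ((Real.exp (lam * ψ p.1 p.2)
                - Real.exp (2 * lam * M)) / p.1)) := by
  set a' : Fin n → Fin n → ℝ × (Fin n → ℝ) → ℝ := fun k j p => a k j p.1 p.2 with ha'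
  set ψ' : ℝ × (Fin n → ℝ) → ℝ := fun p => ψ p.1 p.2 with hψ'
  have hs : ∀ i j, a' i j = a' j i := by intro i j; simp only [ha', ha_symm i j]
  obtain ⟨L, hL, H⟩ := lam_exists Ω hΩ T hT a ha_symm ha_reg β hβ ha_ell ψ hψ hgrad hpos a' ha' ψ' hψ'
  refine ⟨L, hL, fun lam hlam => ?_⟩
  obtain ⟨h1, h2⟩ := H lam hlam
  set K : Set (ℝ × (Fin n → ℝ)) := Set.Icc 0 T ×ˢ closure Ω with hKdef
  have hK : IsCompact K := isCompact_Icc.prod hΩ.isCompact_closure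
  set E : ℝ × (Fin n → ℝ) → ℝ := fun q => exp (lam * ψ' q) with hEdef
  have hE : ContDiff ℝ 2 E := (contDiff_const.mul hψ).exp
  set E0 : ℝ := exp (2 * lam * M) with hE0
  obtain ⟨τ0, C', hτ0, hC', core⟩ := core_est a' hs ha_reg E hE E0 K hK T hT (fun p hp => hp.1.2) h1 h2
  obtain ⟨EM, hEM⟩ := hK.exists_bound_of_continuousOn hE.continuous.continuousOn
  set G : ℝ := max EM 1 with hG
  have hG1 : 1 ≤ G := le_max_right _ _
  have hEG : ∀ p ∈ K, E p ≤ G := fun p hp =>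
    ((le_abs_self _).trans (hEM p hp)).trans (le_max_left _ _)
  set Cb : ℝ := 2 * (n + 1) * B ^ 2 with hCb
  have hCb0 : 0 ≤ Cb := by positivity
  refine ⟨τ0 + T * (1 + 4 * C' * Cb), by positivity, G ^ 3 * (4 * C'), by positivity, fun τ hτ z hz hzc hzs => ?_⟩
  have hTC : 0 ≤ T * (1 + 4 * C' * Cb) := by positivity
  have hτ1 : τ0 ≤ τ := by linarith
  have hτp : 0 < τ := by linarith
  have hτT : T * (1 + 4 * C' * Cb) ≤ τ := by linarith
  -- real and imaginary parts
  obtain ⟨z1, hz1d⟩ : ∃ z1 : ℝ × (Fin n → ℝ) → ℝ, z1 = fun q => (z q).re := ⟨_, rfl⟩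
  obtain ⟨z2, hz2d⟩ : ∃ z2 : ℝ × (Fin n → ℝ) → ℝ, z2 = fun q => (z q).im := ⟨_, rfl⟩
  have hzz : z = fun q => (z1 q : ℂ) + z2 q * Complex.I := by
    funext q; rw [hz1d, hz2d]; exact (Complex.re_add_im (z q)).symm
  have hzC : ContDiff ℝ 2 z := hz.of_le (WithTop.coe_le_coe.mpr (le_top : (2 : ℕ∞) ≤ ⊤))
  have hz1 : ContDiff ℝ 2 z1 := by rw [hz1d]; exact Complex.reCLM.contDiff.comp hzC
  have hz2 : ContDiff ℝ 2 z2 := by rw [hz2d]; exact Complex.imCLM.contDiff.comp hzC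
  have ts1 : tsupport z1 ⊆ tsupport z := by
    apply closure_mono
    intro q hq hq'
    apply hq
    rw [hz1d]; simp [hq']
  have ts2 : tsupport z2 ⊆ tsupport z := by
    apply closure_mono
    intro q hq hq'
    apply hq
    rw [hz2d]; simp [hq']
  have hc1 : HasCompactSupport z1 := hzc.of_isClosed_subset (isClosed_tsupport _) ts1
  have hc2 : HasCompactSupport z2 := hzc.of_isClosed_subset (isClosed_tsupport _) ts2
  have hQK : ∀ p ∈ tsupport z, p ∈ K ∧ 0 < p.1 := fun p hp =>
    ⟨⟨⟨(hzs hp).1.1.le, (hzs hp).1.2.le⟩, subset_closure (hzs hp).2⟩, (hzs hp).1.1⟩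
  have core1 := core τ hτ1 z1 z2 hz1 hz2 hc1 hc2 (fun p hp => hQK p (ts1 hp)) (fun p hp => hQK p (ts2 hp))
  have d1 : Differentiable ℝ z1 := hz1.differentiable (by norm_num)
  have d2 : Differentiable ℝ z2 := hz2.differentiable (by norm_num)
  set S : ℝ × (Fin n → ℝ) → ℝ := fun p => ∑ j, dd (ex j) z1 p ^ 2 + ∑ j, dd (ex j) z2 p ^ 2 with hSdef
  set Z : ℝ × (Fin n → ℝ) → ℝ := fun p => z1 p ^ 2 + z2 p ^ 2 with hZdef
  set w : ℝ × (Fin n → ℝ) → ℝ := fun p => exp (2 * τ * ((E p - E0) / p.1)) with hwdef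
  set R : ℝ × (Fin n → ℝ) → ℝ := fun p => (-(dd (e0 n) z2 p) - divA a' z1 p) ^ 2 + (dd (e0 n) z1 p - divA a' z2 p) ^ 2 with hRdef
  set P2 : ℝ × (Fin n → ℝ) → ℝ := fun p => ‖SchOp a b c z p‖ ^ 2 with hPdef
  have hS0 : ∀ p, 0 ≤ S p := fun p => by simp only [hSdef]; positivity
  have hZ0 : ∀ p, 0 ≤ Z p := fun p => by simp only [hZdef]; positivity
  have hR0 : ∀ p, 0 ≤ R p := fun p => by simp only [hRdef]; positivity
  have hw0 : ∀ p, 0 < w p := fun p => exp_pos _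
  have eS : ∀ p : ℝ × (Fin n → ℝ), ∑ j, ‖pd j (fun y => z (p.1, y)) p.2‖ ^ 2 = S p := by
    intro p
    simp only [hzz, pd_cpx d1 d2, nsq, hSdef, Finset.sum_add_distrib]
  have eZ : ∀ p, ‖z p‖ ^ 2 = Z p := by
    intro p
    simp only [hzz, nsq, hZdef]
  have eP : ∀ p, SchOp a b c z p = (((-(dd (e0 n) z2 p) - divA a' z1 p : ℝ) : ℂ)
        + ((dd (e0 n) z1 p - divA a' z2 p : ℝ) : ℂ) * Complex.I)
     + (∑ l, b l p.1 p.2 * ((dd (ex l) z1 p : ℂ) + dd (ex l) z2 p * Complex.I)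
       + c p.1 p.2 * ((z1 p : ℂ) + z2 p * Complex.I)) := by
    intro p
    rw [hzz]
    exact SchOp_eq a b c ha_reg hz1 hz2 p
  -- vanishing
  have v1 : ∀ p, p ∉ tsupport z → z1 p = 0 := fun p hp => image_eq_zero_of_notMem_tsupport fun h => hp (ts1 h)
  have v2 : ∀ p, p ∉ tsupport z → z2 p = 0 := fun p hp => image_eq_zero_of_notMem_tsupport fun h => hp (ts2 h)
  have v3 : ∀ p, p ∉ tsupport z → ∀ v, dd v z1 p = 0 := fun p hp v => dd_zero_of_notMem (fun h => hp (ts1 h)) v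
  have v4 : ∀ p, p ∉ tsupport z → ∀ v, dd v z2 p = 0 := fun p hp v => dd_zero_of_notMem (fun h => hp (ts2 h)) v
  have divz : ∀ (u : ℝ × (Fin n → ℝ) → ℝ) p, p ∉ tsupport u → divA a' u p = 0 := by
    intro u p hp
    unfold divA
    refine Finset.sum_eq_zero fun l _ => Finset.sum_eq_zero fun j _ => dd_zero_of_notMem (fun hh => hp ?_) _
    have h1 : tsupport (fun q => a' l j q * dd (ex j) u q) ⊆ tsupport (dd (ex j) u) := tsupport_mul_subset_right
    have h2 : tsupport (dd (ex j) u) ⊆ tsupport u := by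
      apply closure_minimal _ (isClosed_tsupport _)
      intro q hq
      by_contra hq'
      exact hq (dd_zero_of_notMem hq' _)
    exact h2 (h1 hh)
  have v5 : ∀ p, p ∉ tsupport z → divA a' z1 p = 0 := fun p hp => divz z1 p fun h => hp (ts1 h)
  have v6 : ∀ p, p ∉ tsupport z → divA a' z2 p = 0 := fun p hp => divz z2 p fun h => hp (ts2 h)
  have vS : ∀ p, p ∉ tsupport z → S p = 0 := fun p hp => by simp [hSdef, v3 p hp, v4 p hp]
  have vZ : ∀ p, p ∉ tsupport z → Z p = 0 := fun p hp => by simp [hZdef, v1 p hp, v2 p hp]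
  have vR : ∀ p, p ∉ tsupport z → R p = 0 := fun p hp => by simp [hRdef, v3 p hp, v4 p hp, v5 p hp, v6 p hp]
  have vP : ∀ p, p ∉ tsupport z → P2 p = 0 := fun p hp => by
    simp [hPdef, eP, v1 p hp, v2 p hp, v3 p hp, v4 p hp, v5 p hp, v6 p hp]
  -- continuity
  have cdd : ∀ (u : ℝ × (Fin n → ℝ) → ℝ) (y), ContDiff ℝ 2 u → Continuous (dd y u) := fun u y hu => dd_C0 (hu.of_le (by norm_num)) y
  have cdiv : ∀ (u : ℝ × (Fin n → ℝ) → ℝ), ContDiff ℝ 2 u → Continuous (divA a' u) := fun u hu =>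
    continuous_finsetSum _ fun l _ => continuous_finsetSum _ fun j _ => dd_C0 ((ha_reg l j).mul (dd_C1 hu _)) _
  have cS : Continuous S := (continuous_finsetSum _ fun j _ => (cdd _ _ hz1).pow 2).add
    (continuous_finsetSum _ fun j _ => (cdd _ _ hz2).pow 2)
  have cZ : Continuous Z := (hz1.continuous.pow 2).add (hz2.continuous.pow 2)
  have cR1 : Continuous (fun p => -(dd (e0 n) z2 p) - divA a' z1 p) := (cdd _ _ hz2).neg.sub (cdiv _ hz1)
  have cR2 : Continuous (fun p => dd (e0 n) z1 p - divA a' z2 p) := (cdd _ _ hz1).sub (cdiv _ hz2)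
  have cR : Continuous R := (cR1.pow 2).add (cR2.pow 2)
  have ne0 : ∀ p ∈ tsupport z, p.1 ≠ 0 := fun p hp => (hQK p hp).2.ne'
  have cw : ContinuousOn w (tsupport z) :=
    ((continuousOn_const.mul ((hE.continuous.sub continuous_const).continuousOn.div continuous_fst.continuousOn ne0))).rexp
  have ct : ContinuousOn (fun p : ℝ × (Fin n → ℝ) => τ / p.1) (tsupport z) :=
    continuousOn_const.div continuous_fst.continuousOn ne0
  set Lf : ℝ × (Fin n → ℝ) → ℝ := fun p => ((τ / p.1) * S p + (τ / p.1) ^ 3 * Z p) * w p with hLf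
  have iL : Integrable Lf := intg hzc
    (((ct.mul cS.continuousOn).add ((ct.pow 3).mul cZ.continuousOn)).mul cw)
    (fun p hp => by simp [hLf, vS p hp, vZ p hp])
  have iR : Integrable (fun p => R p * w p) := intg hzc (cR.continuousOn.mul cw) (fun p hp => by simp [vR p hp])
  have iB : Integrable (fun p => (2 * R p + 2 * Cb * (S p + Z p)) * w p) := intg hzc
    (((continuous_const.mul cR).add (continuous_const.mul (cS.add cZ))).continuousOn.mul cw)
    (fun p hp => by simp [vR p hp, vS p hp, vZ p hp])
  -- lower order terms
  have lowb : ∀ p ∈ tsupport z, ‖∑ l, b l p.1 p.2 * ((dd (ex l) z1 p : ℂ) + dd (ex l) z2 p * Complex.I)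
       + c p.1 p.2 * ((z1 p : ℂ) + z2 p * Complex.I)‖ ^ 2 ≤ Cb * (S p + Z p) := by
    intro p hp
    have hpQ := hzs hp
    have := low_bound (fun l => b l p.1 p.2) (fun l => (dd (ex l) z1 p : ℂ) + dd (ex l) z2 p * Complex.I)
      (c p.1 p.2) ((z1 p : ℂ) + z2 p * Complex.I) (fun l => hbB l p.1 hpQ.1 p.2 hpQ.2) (hcB p.1 hpQ.1 p.2 hpQ.2)
    simp only [nsq, Finset.sum_add_distrib] at this
    exact this
  have tri : ∀ x y : ℂ, ‖x + y‖ ^ 2 ≤ 2 * ‖x‖ ^ 2 + 2 * ‖y‖ ^ 2 := by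
    intro x y
    have h1 := norm_add_le x y
    have h2 : ‖x + y‖ ^ 2 ≤ (‖x‖ + ‖y‖) ^ 2 := by gcongr
    have h3 := sq_nonneg (‖x‖ - ‖y‖)
    nlinarith
  have bP : ∀ p, P2 p ≤ 2 * R p + 2 * Cb * (S p + Z p) := by
    intro p
    by_cases hp : p ∈ tsupport z
    · simp only [hPdef, eP]
      refine (tri _ _).trans ?_
      rw [nsq]
      have := lowb p hp
      simp only [hRdef]
      linarith
    · rw [vP p hp, vR p hp, vS p hp, vZ p hp]; simp
  have bR : ∀ p, R p ≤ 2 * P2 p + 2 * Cb * (S p + Z p) := by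
    intro p
    by_cases hp : p ∈ tsupport z
    · have hl := lowb p hp
      set low := ∑ l, b l p.1 p.2 * ((dd (ex l) z1 p : ℂ) + dd (ex l) z2 p * Complex.I)
       + c p.1 p.2 * ((z1 p : ℂ) + z2 p * Complex.I) with hlow
      have e : R p = ‖SchOp a b c z p + -low‖ ^ 2 := by
        rw [eP, add_neg_cancel_right, nsq]
      rw [e]
      refine (tri _ _).trans ?_
      rw [norm_neg]
      simp only [hPdef]
      linarith
    · rw [vP p hp, vR p hp, vS p hp, vZ p hp]; simp
  have mw : Measurable w := by
    have : Measurable E := hE.continuous.measurable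
    simp only [hwdef]
    fun_prop
  have mP : Measurable P2 := by
    have : P2 = fun p => ‖(((-(dd (e0 n) z2 p) - divA a' z1 p : ℝ) : ℂ)
        + ((dd (e0 n) z1 p - divA a' z2 p : ℝ) : ℂ) * Complex.I)
     + (∑ l, b l p.1 p.2 * ((dd (ex l) z1 p : ℂ) + dd (ex l) z2 p * Complex.I)
       + c p.1 p.2 * ((z1 p : ℂ) + z2 p * Complex.I))‖ ^ 2 := by
      funext p; simp only [hPdef, eP]
    rw [this]
    have m1 := Complex.measurable_ofReal.comp cR1.measurable
    have m2 := Complex.measurable_ofReal.comp cR2.measurable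
    have m3 : ∀ l, Measurable fun p => (dd (ex l) z1 p : ℂ) := fun l => Complex.measurable_ofReal.comp (cdd z1 (ex l) hz1).measurable
    have m4 : ∀ l, Measurable fun p => (dd (ex l) z2 p : ℂ) := fun l => Complex.measurable_ofReal.comp (cdd z2 (ex l) hz2).measurable
    have m5 : Measurable fun p => (z1 p : ℂ) := Complex.measurable_ofReal.comp hz1.continuous.measurable
    have m6 : Measurable fun p => (z2 p : ℂ) := Complex.measurable_ofReal.comp hz2.continuous.measurable
    exact ((m1.add (m2.mul_const _)).add ((Finset.measurable_fun_sum _ fun l _ => (hb_meas l).mul ((m3 l).add ((m4 l).mul_const _))).add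
      (hc_meas.mul (m5.add (m6.mul_const _))))).norm.pow_const 2
  have iP : Integrable (fun p => P2 p * w p) := by
    refine iB.mono' (mP.mul mw).aestronglyMeasurable (Filter.Eventually.of_forall fun p => ?_)
    have : 0 ≤ P2 p * w p := mul_nonneg (by simp only [hPdef]; positivity) (hw0 p).le
    rw [Real.norm_of_nonneg this]
    exact mul_le_mul_of_nonneg_right (bP p) (hw0 p).le
  -- absorption
  have absb : ∀ p, R p * w p ≤ 2 * (P2 p * w p) + (1 / (2 * C')) * Lf p := by
    intro p
    by_cases hp : p ∈ tsupport z
    · have ht := (hQK p hp).2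
      have htT : p.1 ≤ T := (hQK p hp).1.1.2
      have q1 : 1 + 4 * C' * Cb ≤ τ / p.1 := by
        rw [le_div_iff₀ ht]
        refine le_trans ?_ hτT
        rw [mul_comm]
        exact mul_le_mul_of_nonneg_right htT (by positivity)
      have q0 : 0 ≤ 4 * C' * Cb := by positivity
      have q2 : 4 * C' * Cb ≤ τ / p.1 := by linarith
      have q3 : 1 ≤ τ / p.1 := by linarith
      have q4 : τ / p.1 ≤ (τ / p.1) ^ 3 := le_self_pow₀ q3 (by norm_num)
      have q5 : 4 * C' * Cb * (S p + Z p) ≤ (τ / p.1) * S p + (τ / p.1) ^ 3 * Z p := by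
        have := mul_le_mul_of_nonneg_right q2 (hS0 p)
        have := mul_le_mul_of_nonneg_right (q2.trans q4) (hZ0 p)
        linarith
      have q6 : 2 * Cb * (S p + Z p) ≤ (1 / (2 * C')) * ((τ / p.1) * S p + (τ / p.1) ^ 3 * Z p) := by
        rw [div_mul_eq_mul_div, le_div_iff₀ (by positivity)]
        linarith
      have q7 := mul_le_mul_of_nonneg_right ((bR p).trans (add_le_add_right q6 _)) (hw0 p).le
      simp only [hLf]
      linarith
    · simp [hLf, vR p hp, vP p hp, vS p hp, vZ p hp]
  have est : ∫ p, Lf p ≤ 4 * C' * ∫ p, P2 p * w p := by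
    have e1 : ∫ p, R p * w p ≤ 2 * (∫ p, P2 p * w p) + (1 / (2 * C')) * ∫ p, Lf p := by
      rw [← integral_const_mul, ← integral_const_mul, ← integral_add (iP.const_mul _) (iL.const_mul _)]
      exact integral_mono iR ((iP.const_mul _).add (iL.const_mul _)) absb
    have e2 : ∫ p, Lf p ≤ C' * ∫ p, R p * w p := core1
    have e3 := mul_le_mul_of_nonneg_left e1 hC'.le
    have e4 : C' * (2 * (∫ p, P2 p * w p) + (1 / (2 * C')) * ∫ p, Lf p) = 2 * C' * (∫ p, P2 p * w p) + (1 / 2) * ∫ p, Lf p := by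
      field_simp
    linarith
  -- conclusion
  rw [setIntegral_eq_integral_of_forall_compl_eq_zero, setIntegral_eq_integral_of_forall_compl_eq_zero]
  · simp only [eS, eZ]
    rw [mul_assoc]
    refine le_trans ?_ (mul_le_mul_of_nonneg_left est (by positivity))
    rw [← integral_const_mul]
    refine integral_mono_of_nonneg (Filter.Eventually.of_forall fun p => ?_) (iL.const_mul _) (Filter.Eventually.of_forall fun p => ?_)
    · show 0 ≤ (τ * (E p / p.1) * S p + τ ^ 3 * (E p / p.1) ^ 3 * Z p) * w p
      by_cases hp : p ∈ tsupport z
      · have ht := (hQK p hp).2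
        have := hS0 p
        have := hZ0 p
        have := (hw0 p).le
        have : 0 < E p := exp_pos _
        positivity
      · simp [vS p hp, vZ p hp]
    · show (τ * (E p / p.1) * S p + τ ^ 3 * (E p / p.1) ^ 3 * Z p) * w p ≤ G ^ 3 * Lf p
      by_cases hp : p ∈ tsupport z
      · have ht := (hQK p hp).2
        have s0 := hS0 p
        have z0 := hZ0 p
        have w0 := (hw0 p).le
        have hEp : 0 < E p := exp_pos _
        have g1 : E p ≤ G := hEG p (hQK p hp).1
        have g2 : E p ≤ G ^ 3 := g1.trans (le_self_pow₀ hG1 (by norm_num))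
        have g3 : E p ^ 3 ≤ G ^ 3 := by gcongr
        have hx : 0 < τ / p.1 := by positivity
        have e1 : (τ * (E p / p.1) * S p + τ ^ 3 * (E p / p.1) ^ 3 * Z p) * w p
          = E p * ((τ / p.1) * S p * w p) + E p ^ 3 * ((τ / p.1) ^ 3 * Z p * w p) := by
          field_simp
        have e2 : G ^ 3 * Lf p = G ^ 3 * ((τ / p.1) * S p * w p) + G ^ 3 * ((τ / p.1) ^ 3 * Z p * w p) := by
          simp only [hLf]; ring
        rw [e1, e2]
        exact add_le_add (mul_le_mul_of_nonneg_right g2 (by positivity)) (mul_le_mul_of_nonneg_right g3 (by positivity))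
      · simp [hLf, vS p hp, vZ p hp]
  · intro p hp
    have hp' : p ∉ tsupport z := fun h => hp (hzs h)
    have : ‖SchOp a b c z p‖ ^ 2 = 0 := vP p hp'
    rw [this, zero_mul]
  · intro p hp
    have hp' : p ∉ tsupport z := fun h => hp (hzs h)
    rw [eS, eZ, vS p hp', vZ p hp']
    simp
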